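/- arXiv:2604.13967 — 5 statements merged into one kernel-verified Lean document; each statement's English description precedes it below -/
import Mathlib

section
/- Let q = 2^m for a positive integer m and let d = 3q - 2. Let τ_m be the rational sequence defined by τ_1 = 1/2, τ_2 = -7/4, and τ_m = (1/2)τ_{m-1} - τ_{m-2} for m ≥ 3. Let N_4 denote the number of quadruples (x_1, x_2, x_3, x_4) ∈ (F_{q^2})^4 satisfying x_1 + x_2 + x_3 + x_4 = 0 and x_1^d + x_2^d + x_3^d + x_4^d = 0. Then N_4 = 1 + (5q^2 - (τ_m + 2)q + 2)(q^2 - 1) if m is even, and N_4 = 1 + (5q^2 - (τ_m + 2)q + 6)(q^2 - 1) if m is odd. -/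
/-!
The proof is a moment computation. Write `x'` for the conjugate `x ^ q`, `F` for the subfield with
`q` elements, `U` for the unit circle `{u | u * u' = 1}`, `ψ` and `χ` for the canonical additive
characters of `F` and `K`, and `d = 3 * q - 2`.

By orthogonality of characters, the `j`-th moment of the Weil sums `W(a, b) = ∑ χ(a x + b x ^ d)`
is `q ^ 4` times the number of solutions of the system in `j` variables (`moments`). In polar
coordinates `x = r * u`, with `r` in `F` and `u` in `U`, one finds `W(a, b) = q * (N(a, b) - 1)`,
where `N(a, b)` is the number of roots on `U` of `b' X ^ 5 + a X ^ 3 + a' X ^ 2 + b` (`Wsum_eq`).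
The systems in at most three variables are solved directly (`card_one`, `card_two`, `card_three`),
so only the falling moment `∑ N (N - 1) (N - 2) (N - 3)` is missing. It counts quadruples of
distinct points of `U` together with the pairs `(a, b)` whose quintic vanishes at them; there are
`q` such pairs if the sum of the four points lies in `U`, and only `(0, 0)` otherwise (`sum_rho`).

It remains to count quadruples in `U` whose sum is in `U`. An element `s ≠ 0` is a sum of two
elements of `U` in `1 - ψ(1 / N(s))` ways (`rU_of_ne`), which reduces the count to
`T = ∑ ψ(1 / N(s) + 1 / N(s + 1))`. A change of variables turns `T + 1` into a sum of Kloosterman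
sums of `F` with parameters `1 + u + u⁻¹`, `u ∈ U` (`Tsum_eq`). For odd `m` this is the Kloosterman
sum of `K` at a primitive cube root of unity `ω`; for even `m` it is obtained from the product of
the Kloosterman sums of `F` at `ω` and `ω ^ 2` (`Tsum_odd`, `Tsum_even`).

Since `ω` lies in the field with four elements, these Kloosterman sums are the power sums attached
to one L-series over that field. The L-series is the polynomial `1 - T + 4 T ^ 2`, and Newton's
identity (`newton_identity`) gives the linear recursion satisfied by `2 ^ m * τ_m`
(`kloosterman_four`).
-/

set_option linter.unusedSectionVars false

/-! ### L-series over a finite field and Kloosterman sums -/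

section EulerProduct
open Polynomial
open scoped Classical
variable {k : Type*} [Field k] [Fintype k]

theorem finite_monic (n : ℕ) : {f : k[X] | f.Monic ∧ f.natDegree = n}.Finite := by
  have : ({f : k[X] | f.Monic ∧ f.natDegree = n}) ⊆
      Set.range (fun c : Fin (n + 1) → k => ∑ i : Fin (n + 1), monomial (i : ℕ) (c i)) := by
    rintro f ⟨-, hf⟩
    refine ⟨fun i => f.coeff i, ?_⟩
    conv_rhs => rw [f.as_sum_range' (n + 1) (by omega)]
    rw [Finset.sum_range]
  exact (Set.finite_range _).subset this

/-- The monic polynomials of degree `n` over the finite field `k`. -/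
noncomputable def monics (k : Type*) [Field k] [Fintype k] (n : ℕ) : Finset k[X] :=
  (finite_monic (k := k) n).toFinset

theorem mem_monics {n : ℕ} {f : k[X]} : f ∈ monics k n ↔ f.Monic ∧ f.natDegree = n := by
  simp [monics]

/-- The monic irreducible polynomials of degree at most `n`. -/
noncomputable def irreds (k : Type*) [Field k] [Fintype k] (n : ℕ) : Finset k[X] :=
  ((Finset.Icc 1 n).biUnion (monics k)).filter Irreducible

theorem mem_irreds {n : ℕ} {f : k[X]} :
    f ∈ irreds k n ↔ f.Monic ∧ Irreducible f ∧ f.natDegree ≤ n := by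
  simp only [irreds, Finset.mem_filter, Finset.mem_biUnion, Finset.mem_Icc, mem_monics]
  constructor
  · rintro ⟨⟨a, ha, hf, rfl⟩, hi⟩
    exact ⟨hf, hi, ha.2⟩
  · rintro ⟨hf, hi, hn⟩
    exact ⟨⟨_, ⟨hi.natDegree_pos, hn⟩, hf, rfl⟩, hi⟩

/-- The degree of a monic `f` equals `∑ deg P` over all prime powers `P ^ j`, `j ≥ 1`, dividing `f`.
This plays the part of `log = Λ * 1` for integers. -/
theorem degree_eq_sum {n : ℕ} {f : k[X]} (hf : f ∈ monics k n) :
    (n : ℤ) = ∑ P ∈ irreds k n, ∑ j ∈ Finset.Icc 1 n,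
      if P ^ j ∣ f then (P.natDegree : ℤ) else 0 := by
  obtain ⟨hm, hn⟩ := mem_monics.1 hf
  have hf0 : f ≠ 0 := hm.ne_zero
  have key : n = ∑ P ∈ (UniqueFactorizationMonoid.normalizedFactors f).toFinset,
      (UniqueFactorizationMonoid.normalizedFactors f).count P • P.natDegree := by
    rw [← Finset.sum_multiset_map_count, ← natDegree_multiset_prod]
    · have h := UniqueFactorizationMonoid.prod_normalizedFactors_eq hf0
      rw [hm.normalize_eq_self] at h
      rw [h, hn]
    · exact UniqueFactorizationMonoid.zero_notMem_normalizedFactors f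
  have hsub : (UniqueFactorizationMonoid.normalizedFactors f).toFinset ⊆ irreds k n := by
    intro P hP
    rw [Multiset.mem_toFinset] at hP
    have hi := UniqueFactorizationMonoid.irreducible_of_normalized_factor P hP
    refine mem_irreds.2 ⟨?_, hi, ?_⟩
    · have := UniqueFactorizationMonoid.normalize_normalized_factor P hP
      rw [← this]; exact monic_normalize hi.ne_zero
    · rw [← hn]
      exact natDegree_le_of_dvd (UniqueFactorizationMonoid.dvd_of_mem_normalizedFactors hP) hf0
  rw [Finset.sum_subset hsub] at key
  · conv_lhs => rw [key]
    push_cast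
    refine Finset.sum_congr rfl fun P hP => ?_
    obtain ⟨hPm, hPi, hPn⟩ := mem_irreds.1 hP
    have hc : ∀ j, P ^ j ∣ f ↔ j ≤ (UniqueFactorizationMonoid.normalizedFactors f).count P := by
      intro j
      rw [pow_dvd_iff_le_emultiplicity,
        UniqueFactorizationMonoid.emultiplicity_eq_count_normalizedFactors hPi hf0,
        hPm.normalize_eq_self]
      simp
    simp_rw [hc]
    rw [← Finset.sum_filter, Finset.sum_const]
    have hle : (UniqueFactorizationMonoid.normalizedFactors f).count P ≤ n := by
      have h1 := (hc _).2 le_rfl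
      have h2 := natDegree_le_of_dvd h1 hf0
      rw [natDegree_pow, hn] at h2
      exact le_trans (Nat.le_mul_of_pos_right _ hPi.natDegree_pos) h2
    have : (Finset.Icc 1 n).filter
        (· ≤ (UniqueFactorizationMonoid.normalizedFactors f).count P)
        = Finset.Icc 1 ((UniqueFactorizationMonoid.normalizedFactors f).count P) := by
      ext j; simp; omega
    rw [this]; simp
  · intro P _ hP
    rw [Multiset.mem_toFinset] at hP
    simp [Multiset.count_eq_zero_of_notMem hP]

/-- The coefficient of `T ^ n` in the L-series `∑ Λ f * T ^ deg f` over monic `f`. -/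
noncomputable def polySum (Λ : k[X] → ℤ) (n : ℕ) : ℤ := ∑ f ∈ monics k n, Λ f

/-- The coefficient of `T ^ e` in `T * L' / L`, for `L` the Euler product of a completely
multiplicative `Λ`. -/
noncomputable def powerSum (Λ : k[X] → ℤ) (e : ℕ) : ℤ :=
  ∑ P ∈ irreds k e, if P.natDegree ∣ e then (P.natDegree : ℤ) * Λ P ^ (e / P.natDegree) else 0

theorem sum_multiples (Λ : k[X] → ℤ) (h1 : Λ 1 = 1)
    (hmul : ∀ f g : k[X], f.Monic → g.Monic → Λ (f * g) = Λ f * Λ g)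
    (n j : ℕ) (P : k[X]) (hP : P.Monic) :
    (∑ f ∈ monics k n, if P ^ j ∣ f then Λ f else 0) =
      if j * P.natDegree ≤ n then Λ P ^ j * polySum Λ (n - j * P.natDegree) else 0 := by
  have hpow : ∀ j, Λ (P ^ j) = Λ P ^ j := by
    intro j
    induction j with
    | zero => simp [h1]
    | succ j ih => rw [pow_succ, hmul _ _ (hP.pow j) hP, ih, pow_succ]
  have hdeg : (P ^ j).natDegree = j * P.natDegree := natDegree_pow P j
  split_ifs with h
  · rw [← Finset.sum_filter, polySum, Finset.mul_sum]
    symm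
    refine Finset.sum_bij (fun g _ => P ^ j * g) ?_ ?_ ?_ ?_
    · intro g hg
      obtain ⟨hg1, hg2⟩ := mem_monics.1 hg
      refine Finset.mem_filter.2 ⟨mem_monics.2 ⟨(hP.pow j).mul hg1, ?_⟩, dvd_mul_right _ _⟩
      rw [(hP.pow j).natDegree_mul hg1, hdeg, hg2]; omega
    · intro g _ g' _ h
      exact mul_left_cancel₀ (hP.pow j).ne_zero h
    · intro f hf
      obtain ⟨hf, g, rfl⟩ := Finset.mem_filter.1 hf
      obtain ⟨hf1, hf2⟩ := mem_monics.1 hf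
      have hg : g.Monic := (hP.pow j).of_mul_monic_left hf1
      refine ⟨g, mem_monics.2 ⟨hg, ?_⟩, rfl⟩
      rw [(hP.pow j).natDegree_mul hg, hdeg] at hf2; omega
    · intro g hg
      rw [hmul _ _ (hP.pow j) (mem_monics.1 hg).1, hpow]
  · refine Finset.sum_eq_zero fun f hf => ?_
    obtain ⟨hf1, hf2⟩ := mem_monics.1 hf
    rw [if_neg]
    intro hd
    have := natDegree_le_of_dvd hd hf1.ne_zero
    omega

/-- Comparison of coefficients in `T * L' = (T * L' / L) * L`, where `L` is the L-series of a
completely multiplicative function `Λ` on monic polynomials. -/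
theorem newton_identity (Λ : k[X] → ℤ) (h1 : Λ 1 = 1)
    (hmul : ∀ f g : k[X], f.Monic → g.Monic → Λ (f * g) = Λ f * Λ g) (n : ℕ) :
    (n : ℤ) * polySum Λ n = ∑ e ∈ Finset.Icc 1 n, powerSum Λ e * polySum Λ (n - e) := by
  have hps : ∀ e ∈ Finset.Icc 1 n, powerSum Λ e = ∑ P ∈ irreds k n,
      if P.natDegree ∣ e then (P.natDegree : ℤ) * Λ P ^ (e / P.natDegree) else 0 := by
    intro e he
    rw [Finset.mem_Icc] at he
    refine Finset.sum_subset ?_ ?_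
    · intro P hP
      rw [mem_irreds] at hP ⊢
      exact ⟨hP.1, hP.2.1, hP.2.2.trans he.2⟩
    · intro P hP hP'
      rw [if_neg]
      intro hd
      rw [mem_irreds] at hP hP'
      exact hP' ⟨hP.1, hP.2.1, Nat.le_of_dvd (by omega) hd⟩
  calc (n : ℤ) * polySum Λ n
      = ∑ f ∈ monics k n, ∑ P ∈ irreds k n, ∑ j ∈ Finset.Icc 1 n,
          (P.natDegree : ℤ) * if P ^ j ∣ f then Λ f else 0 := by
        rw [polySum, Finset.mul_sum]
        refine Finset.sum_congr rfl fun f hf => ?_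
        conv_lhs => rw [degree_eq_sum hf]
        rw [Finset.sum_mul]
        refine Finset.sum_congr rfl fun P _ => ?_
        rw [Finset.sum_mul]
        refine Finset.sum_congr rfl fun j _ => ?_
        split_ifs <;> simp
    _ = ∑ P ∈ irreds k n, ∑ j ∈ Finset.Icc 1 n, (P.natDegree : ℤ) *
          if j * P.natDegree ≤ n then Λ P ^ j * polySum Λ (n - j * P.natDegree) else 0 := by
        rw [Finset.sum_comm]
        refine Finset.sum_congr rfl fun P hP => ?_
        rw [Finset.sum_comm]
        refine Finset.sum_congr rfl fun j _ => ?_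
        rw [← sum_multiples Λ h1 hmul n j P (mem_irreds.1 hP).1, Finset.mul_sum]
    _ = ∑ P ∈ irreds k n, ∑ e ∈ Finset.Icc 1 n,
          (if P.natDegree ∣ e then (P.natDegree : ℤ) * Λ P ^ (e / P.natDegree) else 0)
            * polySum Λ (n - e) := by
        refine Finset.sum_congr rfl fun P hP => ?_
        have hd : 0 < P.natDegree := (mem_irreds.1 hP).2.1.natDegree_pos
        simp_rw [mul_ite, ite_mul, mul_zero, zero_mul]
        rw [← Finset.sum_filter, ← Finset.sum_filter]
        refine Finset.sum_bij' (fun j _ => j * P.natDegree) (fun e _ => e / P.natDegree)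
          ?_ ?_ ?_ ?_ ?_
        · intro j hj
          simp only [Finset.mem_filter, Finset.mem_Icc] at hj ⊢
          exact ⟨⟨Nat.mul_pos hj.1.1 hd, hj.2⟩, dvd_mul_left _ _⟩
        · intro e he
          simp only [Finset.mem_filter, Finset.mem_Icc] at he ⊢
          rw [Nat.div_mul_cancel he.2]
          exact ⟨⟨Nat.div_pos (Nat.le_of_dvd (by omega) he.2) hd,
            (Nat.div_le_self _ _).trans he.1.2⟩, he.1.2⟩
        · intro j _
          exact Nat.mul_div_cancel _ hd
        · intro e he
          simp only [Finset.mem_filter] at he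
          exact Nat.div_mul_cancel he.2
        · intro j _
          rw [Nat.mul_div_cancel _ hd]; ring
    _ = _ := by
        rw [Finset.sum_comm]
        refine Finset.sum_congr rfl fun e he => ?_
        rw [hps e he, Finset.sum_mul]

/-- The completely multiplicative function attached to a Kloosterman sum: for
`f = ∏ (X - xᵢ)` with all `xᵢ ≠ 0` it is `ψ (∑ xᵢ + w * ∑ xᵢ⁻¹)`, and it is `0` if `f 0 = 0`. -/
noncomputable def kLambda (ψ : k → ℤ) (w : k) (f : k[X]) : ℤ :=
  if f.coeff 0 = 0 then 0 else ψ (-f.nextCoeff - w * (f.coeff 1 / f.coeff 0))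

theorem kLambda_one (ψ : k → ℤ) (h0 : ψ 0 = 1) (w : k) : kLambda ψ w 1 = 1 := by
  simp [kLambda, coeff_one, nextCoeff, h0]

theorem kLambda_mul (ψ : k → ℤ) (hadd : ∀ x y, ψ (x + y) = ψ x * ψ y) (w : k)
    (f g : k[X]) (hf : f.Monic) (hg : g.Monic) :
    kLambda ψ w (f * g) = kLambda ψ w f * kLambda ψ w g := by
  unfold kLambda
  have h1 : (f * g).coeff 1 = f.coeff 0 * g.coeff 1 + f.coeff 1 * g.coeff 0 := by
    rw [coeff_mul, Finset.Nat.antidiagonal_succ]; simp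
  rw [mul_coeff_zero, hf.nextCoeff_mul hg, h1]
  by_cases hf0 : f.coeff 0 = 0
  · simp [hf0]
  by_cases hg0 : g.coeff 0 = 0
  · simp [hg0]
  rw [if_neg (mul_ne_zero hf0 hg0), if_neg hf0, if_neg hg0, ← hadd]
  congr 1
  field_simp
  ring

/-- The minimal polynomial of `x⁻¹` is the normalised reverse of that of `x`. -/
theorem minpoly_inv_nextCoeff {L : Type*} [Field L] [Algebra k L] [FiniteDimensional k L]
    {x : L} (hx : x ≠ 0) : (minpoly k x⁻¹).natDegree = (minpoly k x).natDegree ∧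
      (minpoly k x⁻¹).nextCoeff = (minpoly k x).coeff 1 / (minpoly k x).coeff 0 := by
  have hinteg : ∀ y : L, IsIntegral k y := fun y => IsIntegral.of_finite k y
  have hc0 : ∀ y : L, y ≠ 0 → (minpoly k y).coeff 0 ≠ 0 := fun y hy =>
    minpoly.coeff_zero_ne_zero (hinteg y) hy
  have hrev : ∀ y : L, y ≠ 0 → aeval y⁻¹ (minpoly k y).reverse = 0 := by
    intro y hy
    let := invertibleOfNonzero hy
    have := (eval₂_reverse_eq_zero_iff (algebraMap k L) y (minpoly k y)).2 (minpoly.aeval k y)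
    rwa [invOf_eq_inv] at this
  have hrd : ∀ y : L, y ≠ 0 → (minpoly k y).reverse.natDegree = (minpoly k y).natDegree := by
    intro y hy
    rw [reverse_natDegree, natTrailingDegree_eq_zero.2 (Or.inr (hc0 y hy))]; simp
  have hle : ∀ y : L, y ≠ 0 → (minpoly k y⁻¹).natDegree ≤ (minpoly k y).natDegree := by
    intro y hy
    rw [← hrd y hy]
    refine natDegree_le_of_dvd (minpoly.dvd k _ (hrev y hy)) ?_
    rw [Ne, reverse_eq_zero]
    exact minpoly.ne_zero (hinteg y)
  have hdeg : (minpoly k x⁻¹).natDegree = (minpoly k x).natDegree := by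
    refine le_antisymm (hle x hx) ?_
    simpa using hle x⁻¹ (inv_ne_zero hx)
  refine ⟨hdeg, ?_⟩
  set P := minpoly k x with hP
  have hPm : P.Monic := minpoly.monic (hinteg x)
  have hPpos : 0 < P.natDegree := minpoly.natDegree_pos (hinteg x)
  have hQ : C (P.coeff 0)⁻¹ * P.reverse = minpoly k x⁻¹ := by
    have hlead : P.reverse.leadingCoeff = P.coeff 0 := by
      rw [leadingCoeff, hrd x hx, coeff_reverse, revAt_le le_rfl, Nat.sub_self]
    have hm : (C (P.coeff 0)⁻¹ * P.reverse).Monic := by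
      rw [Monic, leadingCoeff_mul, leadingCoeff_C, hlead, inv_mul_cancel₀ (hc0 x hx)]
    refine (eq_of_monic_of_dvd_of_natDegree_le (minpoly.monic (hinteg _)) hm ?_ ?_)
    · exact (minpoly.dvd k _ (hrev x hx)).mul_left _
    · rw [natDegree_C_mul (inv_ne_zero (hc0 x hx)), hrd x hx, hdeg]
  rw [nextCoeff_of_natDegree_pos (by omega), hdeg, ← hQ, coeff_C_mul, coeff_reverse,
    revAt_le (by omega), show P.natDegree - (P.natDegree - 1) = 1 by omega]
  rw [div_eq_inv_mul]

theorem trace_eq_nextCoeff {L : Type*} [Field L] [Algebra k L] [FiniteDimensional k L] (x : L) :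
    Algebra.trace k L x =
      ((Module.finrank k L / (minpoly k x).natDegree : ℕ) : k) * -(minpoly k x).nextCoeff := by
  rw [trace_eq_finrank_mul_minpoly_nextCoeff]
  congr 2
  rw [← Module.finrank_mul_finrank k (IntermediateField.adjoin k {x}) L,
    IntermediateField.adjoin.finrank (IsIntegral.of_finite k x),
    Nat.mul_div_cancel_left _ (minpoly.natDegree_pos (IsIntegral.of_finite k x))]

/-- A monic irreducible polynomial whose degree divides `[L : k]` is the minimal polynomial of
exactly `deg P` elements of `L`. -/
theorem card_minpoly_fiber {L : Type*} [Field L] [Fintype L] [Algebra k L] {P : k[X]}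
    (hm : P.Monic) (hi : Irreducible P) (hd : P.natDegree ∣ Module.finrank k L) :
    (Finset.univ.filter fun x : L => minpoly k x = P).card = P.natDegree := by
  have : Fact (Irreducible P) := ⟨hi⟩
  have hfd : FiniteDimensional k (AdjoinRoot P) := (AdjoinRoot.powerBasis hi.ne_zero).finite
  have hfin : Finite (AdjoinRoot P) := Module.finite_of_finite k
  have hfr : Module.finrank k (AdjoinRoot P) = P.natDegree := by
    rw [(AdjoinRoot.powerBasis hi.ne_zero).finrank, AdjoinRoot.powerBasis_dim]
  obtain ⟨φ⟩ := FiniteField.nonempty_algHom_of_finrank_dvd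
    (F := k) (K := AdjoinRoot P) (L := L) (by rw [hfr]; exact hd)
  have hroot : aeval (φ (AdjoinRoot.root P)) P = 0 := by
    rw [aeval_algHom_apply, AdjoinRoot.aeval_eq, AdjoinRoot.mk_self, map_zero]
  have hmp := minpoly.eq_of_irreducible_of_monic hi hroot hm
  have hsplit : (P.map (algebraMap k L)).Splits := by
    rw [hmp]; exact Normal.splits (inferInstance : Normal k L) _
  have hsep : P.Separable := PerfectField.separable_of_irreducible hi
  rw [← card_rootSet_eq_natDegree hsep hsplit, ← Set.toFinset_card]
  congr 1
  ext x
  simp only [Finset.mem_filter, Finset.mem_univ, true_and, Set.mem_toFinset]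
  rw [mem_rootSet]
  constructor
  · rintro rfl
    exact ⟨hi.ne_zero, minpoly.aeval k x⟩
  · rintro ⟨-, h⟩
    exact (minpoly.eq_of_irreducible_of_monic hi h hm).symm

/-- Kloosterman sums over the extensions `L` of `k` are the power sums of a single L-series
over `k`; this is obtained by grouping the elements of `L` by minimal polynomial. -/
theorem sum_eq_powerSum (ψ : k → ℤ) (h0 : ψ 0 = 1) (hadd : ∀ x y, ψ (x + y) = ψ x * ψ y) (w : k)
    {L : Type*} [Field L] [Fintype L] [Algebra k L] :
    ∑ x : L with x ≠ 0, ψ (Algebra.trace k L (x + algebraMap k L w * x⁻¹)) =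
      powerSum (kLambda ψ w) (Module.finrank k L) := by
  have hmulψ : ∀ (n : ℕ) (x : k), ψ ((n : k) * x) = ψ x ^ n := by
    intro n x
    induction n with
    | zero => simp [h0]
    | succ n ih => rw [Nat.cast_succ, add_mul, one_mul, hadd, ih, pow_succ]
  have hpos : 0 < Module.finrank k L := Module.finrank_pos
  have hterm : ∀ x : L, x ≠ 0 → ψ (Algebra.trace k L (x + algebraMap k L w * x⁻¹)) =
      kLambda ψ w (minpoly k x) ^ (Module.finrank k L / (minpoly k x).natDegree) := by
    intro x hx
    obtain ⟨hd, hn⟩ := minpoly_inv_nextCoeff (k := k) hx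
    rw [map_add, ← Algebra.smul_def, map_smul, trace_eq_nextCoeff, trace_eq_nextCoeff, hd, hn,
      kLambda, if_neg (minpoly.coeff_zero_ne_zero (IsIntegral.of_finite k x) hx), ← hmulψ]
    congr 1
    rw [smul_eq_mul]
    ring
  have hzero : kLambda ψ w (minpoly k (0 : L)) ^
      (Module.finrank k L / (minpoly k (0 : L)).natDegree) = 0 := by
    simp [minpoly.zero, kLambda, hpos.ne']
  rw [Finset.sum_congr rfl fun x hx => hterm x (Finset.mem_filter.1 hx).2, Finset.sum_filter]
  have : ∀ x : L, (if x ≠ 0 then kLambda ψ w (minpoly k x) ^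
      (Module.finrank k L / (minpoly k x).natDegree) else 0) = kLambda ψ w (minpoly k x) ^
      (Module.finrank k L / (minpoly k x).natDegree) := by
    intro x
    split_ifs with h
    · rfl
    · rw [not_not.1 h, hzero]
  rw [Finset.sum_congr rfl fun x _ => this x]
  have hdvd : ∀ x : L, (minpoly k x).natDegree ∣ Module.finrank k L := fun x =>
    minpoly.degree_dvd (IsIntegral.of_finite k x)
  rw [← Finset.sum_fiberwise_of_maps_to (t := irreds k (Module.finrank k L))
    (g := fun x : L => minpoly k x)]
  · refine Finset.sum_congr rfl fun P hP => ?_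
    obtain ⟨hm, hi, -⟩ := mem_irreds.1 hP
    split_ifs with h
    · rw [← card_minpoly_fiber hm hi h, ← nsmul_eq_mul, ← Finset.sum_const]
      refine Finset.sum_congr rfl fun x hx => ?_
      have hxP : minpoly k x = P := (Finset.mem_filter.1 hx).2
      rw [hxP, card_minpoly_fiber hm hi h]
    · rw [Finset.filter_false_of_mem, Finset.sum_empty]
      rintro x - rfl
      exact h (hdvd x)
  · intro x _
    exact mem_irreds.2 ⟨minpoly.monic (IsIntegral.of_finite k x),
      minpoly.irreducible (IsIntegral.of_finite k x), Nat.le_of_dvd hpos (hdvd x)⟩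
end EulerProduct

/-! ### The Kloosterman sum at a primitive cube root of unity -/

section FourElements
open Polynomial
open scoped Classical

/-- The sign `1` at `0` and `-1` elsewhere; on `{0, 1} = F₂` this is the nontrivial additive
character. -/
noncomputable def sg {R : Type*} [Zero R] (x : R) : ℤ := if x = 0 then 1 else -1

/-- The polynomial `x + x ^ 2 + x ^ 4 + ⋯ + x ^ 2 ^ (n - 1)`, which on the field with `2 ^ n` elements
is the absolute trace. -/
def traceSum {R : Type*} [Semiring R] (n : ℕ) (x : R) : R := ∑ i ∈ Finset.range n, x ^ 2 ^ i

/-- The integer sequence `2 ^ n * τ n`: the `n`-th power sum of the roots of `Z ^ 2 - Z + 4`. -/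
def tseq : ℕ → ℤ
  | 0 => 2
  | 1 => 1
  | n + 2 => tseq (n + 1) - 4 * tseq n

variable {k : Type*} [Field k] [Fintype k] [CharP k 2]

/-- The nontrivial additive character `(-1) ^ Tr x` of the field with four elements. -/
noncomputable def psiFour (x : k) : ℤ := sg (x + x ^ 2)

theorem univ_four (hk : Fintype.card k = 4) {w : k} (hw : w ^ 2 + w + 1 = 0) :
    (Finset.univ : Finset k) = {0, 1, w, w + 1} ∧ w ≠ 0 ∧ w ≠ 1 ∧ w + 1 ≠ 0 := by
  have h2 : (2 : k) = 0 := CharTwo.two_eq_zero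
  have hw0 : w ≠ 0 := by rintro rfl; simp at hw
  have hw1 : w ≠ 1 := by
    rintro rfl
    have : (1 : k) = 0 := by linear_combination hw - h2
    exact one_ne_zero this
  have hw2 : w + 1 ≠ 0 := by
    intro h
    exact hw1 (by linear_combination h - h2)
  refine ⟨(Finset.eq_univ_of_card _ ?_).symm, hw0, hw1, hw2⟩
  rw [hk]
  have h3 : (1 : k) ≠ w + 1 := by
    intro h; exact hw0 (by linear_combination -h)
  have h4 : w ≠ w + 1 := by simp
  rw [Finset.card_insert_of_notMem, Finset.card_insert_of_notMem, Finset.card_insert_of_notMem,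
    Finset.card_singleton]
  · simp [h4]
  · simp [h3, hw1.symm]
  · simp [hw0.symm, hw2.symm]

theorem sum_four (hk : Fintype.card k = 4) {w : k} (hw : w ^ 2 + w + 1 = 0) (g : k → ℤ) :
    ∑ x, g x = g 0 + g 1 + g w + g (w + 1) := by
  obtain ⟨hu, hw0, hw1, hw2⟩ := univ_four hk hw
  have h3 : (1 : k) ≠ w + 1 := by
    intro h; exact hw0 (by linear_combination -h)
  have h4 : w ≠ w + 1 := by simp
  rw [hu, Finset.sum_insert, Finset.sum_insert, Finset.sum_insert, Finset.sum_singleton]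
  · ring
  · simp [h4]
  · simp [h3, hw1.symm]
  · simp [hw0.symm, hw2.symm]

theorem psiFour_values {w : k} (hw : w ^ 2 + w + 1 = 0) :
    psiFour (0 : k) = 1 ∧ psiFour (1 : k) = 1 ∧ psiFour w = -1 ∧ psiFour (w + 1) = -1 := by
  have h2 : (2 : k) = 0 := CharTwo.two_eq_zero
  have e1 : (1 : k) + 1 ^ 2 = 0 := by linear_combination h2
  have e2 : w + w ^ 2 = 1 := by linear_combination hw - h2
  have e3 : w + 1 + (w + 1) ^ 2 = 1 := by linear_combination hw + w * h2
  refine ⟨by simp [psiFour, sg], ?_, ?_, ?_⟩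
  · rw [psiFour, e1]; simp [sg]
  · rw [psiFour, e2]; simp [sg]
  · rw [psiFour, e3]; simp [sg]

theorem sg_add {R : Type*} [Ring R] [CharP R 2] {a b : R}
    (ha : a = 0 ∨ a = 1) (hb : b = 0 ∨ b = 1) :
    sg (a + b) = sg a * sg b := by
  have h2 : (1 : R) + 1 = 0 := CharTwo.add_self_eq_zero 1
  rcases ha with rfl | rfl <;> rcases hb with rfl | rfl
  · simp [sg]
  · simp [sg]
  · simp [sg]
  · rw [h2]; by_cases h : (1 : R) = 0 <;> simp [sg, h]

theorem psiFour_add (hk : Fintype.card k = 4) (x y : k) :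
    psiFour (x + y) = psiFour x * psiFour y := by
  have hz : ∀ x : k, x + x ^ 2 = 0 ∨ x + x ^ 2 = 1 := by
    intro x
    have hx : x ^ 4 = x := by rw [← hk]; exact FiniteField.pow_card x
    have h2 : (2 : k) = 0 := CharTwo.two_eq_zero
    have : (x + x ^ 2) * (x + x ^ 2 - 1) = 0 := by
      linear_combination hx + x ^ 3 * h2
    rcases mul_eq_zero.1 this with h | h
    · exact Or.inl h
    · exact Or.inr (by linear_combination h)
  rw [psiFour, CharTwo.add_sq, show x + y + (x ^ 2 + y ^ 2) = (x + x ^ 2) + (y + y ^ 2) by ring,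
    sg_add (hz x) (hz y), psiFour, psiFour]

theorem polySum_zero (Λ : k[X] → ℤ) (h1 : Λ 1 = 1) : polySum Λ 0 = 1 := by
  have : monics k 0 = {1} := by
    ext f
    rw [mem_monics, Finset.mem_singleton]
    constructor
    · rintro ⟨hf, h⟩; exact hf.natDegree_eq_zero.1 h
    · rintro rfl; exact ⟨monic_one, natDegree_one⟩
  rw [polySum, this, Finset.sum_singleton, h1]

theorem polySum_one (Λ : k[X] → ℤ) : polySum Λ 1 = ∑ a : k, Λ (X + C a) := by
  rw [polySum]
  symm
  refine Finset.sum_bij (fun a _ => X + C a) ?_ ?_ ?_ ?_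
  · intro a _
    exact mem_monics.2 ⟨monic_X_add_C a, natDegree_X_add_C a⟩
  · intro a _ b _ h
    simpa using h
  · intro f hf
    obtain ⟨hm, hd⟩ := mem_monics.1 hf
    refine ⟨f.coeff 0, Finset.mem_univ _, ?_⟩
    have := hm.as_sum
    rw [hd] at this
    conv_rhs => rw [this]
    simp
  · intros; rfl

theorem polySum_two (Λ : k[X] → ℤ) :
    polySum Λ 2 = ∑ b : k, ∑ a : k, Λ (X ^ 2 + C a * X + C b) := by
  rw [polySum, ← Finset.sum_product']
  symm
  refine Finset.sum_bij (fun p _ => X ^ 2 + C p.2 * X + C p.1) ?_ ?_ ?_ ?_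
  · intro p _
    refine mem_monics.2 ⟨by monicity!, by compute_degree!⟩
  · rintro ⟨b, a⟩ _ ⟨b', a'⟩ _ h
    have h0 := congrArg (fun f => coeff f 0) h
    have h1 := congrArg (fun f => coeff f 1) h
    simp [coeff_X, coeff_C] at h0 h1
    rw [h0, h1]
  · intro f hf
    obtain ⟨hm, hd⟩ := mem_monics.1 hf
    refine ⟨(f.coeff 0, f.coeff 1), by simp, ?_⟩
    have := hm.as_sum
    rw [hd] at this
    conv_rhs => rw [this]
    simp [Finset.sum_range_succ]
    ring
  · intros; rfl

/-- Adding `w * X ^ (n - 1)` to a monic polynomial of degree `n ≥ 3` changes neither of the two lowest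
coefficients and flips the sign of `kLambda`, since `psiFour w = -1`. -/
theorem polySum_four_large (hk : Fintype.card k = 4) {w : k} (hw : w ^ 2 + w + 1 = 0) {n : ℕ}
    (hn : 3 ≤ n) : polySum (kLambda psiFour w) n = 0 := by
  have hshift : ∀ f ∈ monics k n, kLambda psiFour w (f + C w * X ^ (n - 1)) =
      - kLambda psiFour w f := by
    intro f hf
    obtain ⟨hm, hd⟩ := mem_monics.1 hf
    have hd' : (f + C w * X ^ (n - 1)).natDegree = n := by
      rw [natDegree_add_eq_left_of_natDegree_lt, hd]
      rw [hd]
      exact lt_of_le_of_lt (natDegree_C_mul_X_pow_le _ _) (by omega)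
    have hc0 : (f + C w * X ^ (n - 1)).coeff 0 = f.coeff 0 := by
      rw [coeff_add, coeff_C_mul_X_pow, if_neg (by omega), add_zero]
    have hc1 : (f + C w * X ^ (n - 1)).coeff 1 = f.coeff 1 := by
      rw [coeff_add, coeff_C_mul_X_pow, if_neg (by omega), add_zero]
    have hnc : (f + C w * X ^ (n - 1)).nextCoeff = f.nextCoeff + w := by
      rw [nextCoeff_of_natDegree_pos (by omega), nextCoeff_of_natDegree_pos (by omega), hd', hd,
        coeff_add, coeff_C_mul_X_pow, if_pos rfl]
    unfold kLambda
    rw [hc0, hc1, hnc]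
    split_ifs
    · simp
    · rw [show -(f.nextCoeff + w) - w * (f.coeff 1 / f.coeff 0)
        = w + (-f.nextCoeff - w * (f.coeff 1 / f.coeff 0)) by
          linear_combination (-w) * (CharTwo.two_eq_zero : (2 : k) = 0),
        psiFour_add hk, (psiFour_values hw).2.2.1]
      ring
  have hmem : ∀ f ∈ monics k n, f + C w * X ^ (n - 1) ∈ monics k n := by
    intro f hf
    obtain ⟨hm, hd⟩ := mem_monics.1 hf
    have hlt : (C w * X ^ (n - 1)).degree < f.degree := by
      rw [degree_eq_natDegree hm.ne_zero, hd]
      refine lt_of_le_of_lt (degree_C_mul_X_pow_le _ _) ?_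
      exact_mod_cast (by omega : n - 1 < n)
    exact mem_monics.2 ⟨hm.add_of_left hlt,
      by rw [natDegree_eq_of_degree_eq (degree_add_eq_left_of_degree_lt hlt), hd]⟩
  have hinv : ∀ f : k[X], f + C w * X ^ (n - 1) + C w * X ^ (n - 1) = f := by
    intro f
    exact CharTwo.add_cancel_right _ _
  have : polySum (kLambda psiFour w) n = - polySum (kLambda psiFour w) n := by
    conv_lhs => rw [polySum]
    rw [polySum, ← Finset.sum_neg_distrib]
    refine Finset.sum_nbij' (fun f => f + C w * X ^ (n - 1)) (fun f => f + C w * X ^ (n - 1))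
      hmem hmem (fun f _ => hinv f) (fun f _ => hinv f) ?_
    intro f hf
    rw [hshift f hf, neg_neg]
  omega

theorem polySum_four_one (hk : Fintype.card k = 4) {w : k} (hw : w ^ 2 + w + 1 = 0) :
    polySum (kLambda psiFour w) 1 = -1 := by
  obtain ⟨hu, hw0, hw1, hw2⟩ := univ_four hk hw
  obtain ⟨v0, v1, v2, v3⟩ := psiFour_values hw
  have h2 : (2 : k) = 0 := CharTwo.two_eq_zero
  have hl : ∀ a : k, kLambda psiFour w (X + C a) =
      if a = 0 then 0 else psiFour (a + w * a⁻¹) := by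
    intro a
    have : (X + C a : k[X]).nextCoeff = a := nextCoeff_X_add_C a
    rw [kLambda, this]
    simp only [coeff_add, coeff_X_zero, coeff_C_zero, zero_add, coeff_X_one, coeff_C_succ, add_zero,
      one_div]
    congr 2
    rw [CharTwo.neg_eq, CharTwo.sub_eq_add]
  rw [polySum_one, Finset.sum_congr rfl fun a _ => hl a, sum_four hk hw]
  rw [if_pos rfl, if_neg one_ne_zero, if_neg hw0, if_neg hw2, inv_one,
    show (1 : k) + w * 1 = w + 1 by ring, mul_inv_cancel₀ hw0,
    show w * (w + 1)⁻¹ = w + 1 by field_simp; linear_combination -hw,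
    show w + 1 + (w + 1) = 0 by linear_combination (w + 1) * h2, v3, v0]
  norm_num

theorem polySum_four_two (hk : Fintype.card k = 4) {w : k} (hw : w ^ 2 + w + 1 = 0) :
    polySum (kLambda psiFour w) 2 = 4 := by
  obtain ⟨hu, hw0, hw1, hw2⟩ := univ_four hk hw
  obtain ⟨v0, v1, v2, v3⟩ := psiFour_values hw
  have h2 : (2 : k) = 0 := CharTwo.two_eq_zero
  have hl : ∀ a b : k, kLambda psiFour w (X ^ 2 + C a * X + C b) =
      if b = 0 then 0 else psiFour (a * (1 + w * b⁻¹)) := by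
    intro a b
    have hd : (X ^ 2 + C a * X + C b : k[X]).natDegree = 2 := by compute_degree!
    have : (X ^ 2 + C a * X + C b : k[X]).nextCoeff = a := by
      rw [nextCoeff_of_natDegree_pos (by omega), hd]
      simp [coeff_C]
    rw [kLambda, this]
    have hc0 : (X ^ 2 + C a * X + C b : k[X]).coeff 0 = b := by simp
    have hc1 : (X ^ 2 + C a * X + C b : k[X]).coeff 1 = a := by simp [coeff_C]
    rw [hc0, hc1]
    congr 2
    rw [CharTwo.neg_eq, CharTwo.sub_eq_add]
    ring
  have hinv : w * (w + 1)⁻¹ = w + 1 := by field_simp; linear_combination -hw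
  rw [polySum_two, Finset.sum_congr rfl fun b _ => Finset.sum_congr rfl fun a _ => hl a b,
    sum_four hk hw]
  simp only [if_pos, if_neg one_ne_zero, if_neg hw0, if_neg hw2, inv_one, mul_inv_cancel₀ hw0,
    hinv]
  simp only [sum_four hk hw]
  have e0 : (1 : k) + 1 = 0 := by linear_combination h2
  have e1 : (1 : k) + (w + 1) = w := by linear_combination h2
  have e2 : (1 : k) + w * 1 = w + 1 := by ring
  have e3 : w * w = w + 1 := by linear_combination hw - (w + 1) * h2
  have e4 : w * (w + 1) = 1 := by linear_combination hw - h2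
  have e5 : (w + 1) * (w + 1) = w := by linear_combination hw
  have e6 : (w + 1) * w = 1 := by linear_combination hw - h2
  simp only [e0, e1, e2, e3, e4, e5, e6, zero_mul, one_mul, mul_zero, v0, v1, v2, v3]
  norm_num

/-- The L-series is `1 - T + 4 * T ^ 2`, so Newton's identity yields the recursion of `tseq`. -/
theorem powerSum_four (hk : Fintype.card k = 4) {w : k} (hw : w ^ 2 + w + 1 = 0) (n : ℕ) :
    powerSum (kLambda psiFour w) (n + 1) = - tseq (n + 1) := by
  have h1 : kLambda psiFour w 1 = 1 := kLambda_one _ (psiFour_values hw).1 w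
  have hN := newton_identity (kLambda psiFour w) h1 (kLambda_mul _ (psiFour_add hk) w)
  have c0 := polySum_zero (kLambda psiFour w) h1
  have c1 := polySum_four_one hk hw
  have c2 := polySum_four_two hk hw
  have s1 := hN 1
  rw [c1] at s1
  simp [c0] at s1
  have s2 := hN 2
  rw [c2, show Finset.Icc 1 2 = {1, 2} from rfl] at s2
  simp [c0, c1] at s2
  induction n using Nat.strong_induction_on with
  | _ n ih =>
    match n with
    | 0 => simp [tseq, ← s1]
    | 1 => simp [tseq]; linarith
    | n + 2 =>
      have i1 := ih n (by omega)
      have i2 := ih (n + 1) (by omega)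
      have s3 := hN (n + 3)
      rw [polySum_four_large hk hw (by omega), mul_zero, ← Finset.sum_subset
        (s₁ := {n + 1, n + 2, n + 3}) (by intro x; simp; omega)] at s3
      · rw [Finset.sum_insert (by simp), Finset.sum_insert (by simp), Finset.sum_singleton,
          show n + 3 - (n + 1) = 2 by omega, show n + 3 - (n + 2) = 1 by omega, Nat.sub_self,
          c0, c1, c2, i1, i2] at s3
        rw [show n + 2 + 1 = n + 3 from rfl]
        simp only [tseq] at s3 ⊢
        linarith
      · intro x hx hx'
        simp at hx hx'
        rw [polySum_four_large hk hw (by omega), mul_zero]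

/-- The Kloosterman sum at a primitive cube root of unity `ω` over the field with `4 ^ (n + 1)`
elements. -/
theorem kloosterman_four {L : Type*} [Field L] [Fintype L] [CharP L 2] (n : ℕ)
    (hL : Fintype.card L = 4 ^ (n + 1)) {ω : L} (hω : ω ^ 2 + ω + 1 = 0) :
    ∑ x : L with x ≠ 0, sg (traceSum (2 * (n + 1)) (x + ω * x⁻¹)) = - tseq (n + 1) := by
  have : Fact (Nat.Prime 2) := ⟨Nat.prime_two⟩
  let : Algebra (ZMod 2) L := ZMod.algebra L 2
  let k := GaloisField 2 2
  let : Fintype k := Fintype.ofFinite k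
  have hk : Fintype.card k = 4 := by
    rw [← Nat.card_eq_fintype_card, GaloisField.card 2 2 (by norm_num)]; norm_num
  have hfr2 : Module.finrank (ZMod 2) L = 2 * (n + 1) := by
    have := Module.card_eq_pow_finrank (K := ZMod 2) (V := L)
    rw [hL, ZMod.card, show (4 : ℕ) = 2 ^ 2 by norm_num, ← pow_mul] at this
    exact (Nat.pow_right_injective le_rfl this).symm
  obtain ⟨φ⟩ := FiniteField.nonempty_algHom_of_finrank_dvd (F := ZMod 2) (K := k) (L := L)
    (by rw [GaloisField.finrank 2 (by norm_num), hfr2]; exact dvd_mul_right _ _)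
  let : Algebra k L := φ.toRingHom.toAlgebra
  have hfr : Module.finrank k L = n + 1 := by
    have := Module.card_eq_pow_finrank (K := k) (V := L)
    rw [hL, hk] at this
    exact (Nat.pow_right_injective (by norm_num) this).symm
  obtain ⟨w, hw, hwω⟩ : ∃ w : k, w ^ 2 + w + 1 = 0 ∧ algebraMap k L w = ω := by
    have hinj : Function.Injective (algebraMap k L) := (algebraMap k L).injective
    obtain ⟨w, hw⟩ : ∃ w : k, w ≠ 0 ∧ w ≠ 1 := by
      by_contra! h
      have : (Finset.univ : Finset k) ⊆ {0, 1} := by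
        intro x _
        by_cases hx : x = 0
        · simp [hx]
        · simp [h x hx]
      have := (Finset.card_le_card this).trans (Finset.card_le_two)
      rw [Finset.card_univ, hk] at this
      omega
    have h4 : w ^ 4 = w := by rw [← hk]; exact FiniteField.pow_card w
    have hw' : w ^ 2 + w + 1 = 0 := by
      have : w * (w - 1) * (w ^ 2 + w + 1) = 0 := by linear_combination h4
      rcases mul_eq_zero.1 this with h | h
      · rcases mul_eq_zero.1 h with h | h
        · exact absurd h hw.1
        · exact absurd (sub_eq_zero.1 h) hw.2
      · exact h
    have hi := congrArg (algebraMap k L) hw'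
    simp only [map_add, map_pow, map_one, map_zero] at hi
    have h2 : (2 : L) = 0 := CharTwo.two_eq_zero
    have : (algebraMap k L w - ω) * (algebraMap k L w + 1 - ω) = 0 := by
      linear_combination hi + hω - h2 * (algebraMap k L w * ω + ω + 1)
    rcases mul_eq_zero.1 this with h | h
    · exact ⟨w, hw', sub_eq_zero.1 h⟩
    · refine ⟨w + 1, ?_, by rw [map_add, map_one]; exact sub_eq_zero.1 h⟩
      linear_combination hw' + (w + 1) * (CharTwo.two_eq_zero : (2 : k) = 0)
  have hψ : ∀ y : L, psiFour (Algebra.trace k L y) = sg (traceSum (2 * (n + 1)) y) := by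
    intro y
    have h1 : algebraMap k L (Algebra.trace k L y + Algebra.trace k L y ^ 2) =
        traceSum (2 * (n + 1)) y := by
      rw [map_add, map_pow, FiniteField.algebraMap_trace_eq_sum_pow, hfr,
        Nat.card_eq_fintype_card, hk, CharTwo.sum_sq, ← Finset.sum_add_distrib, traceSum]
      clear hfr hfr2 hL
      generalize n + 1 = r
      induction r with
      | zero => simp
      | succ r ih =>
        rw [Finset.sum_range_succ, ih, show 2 * (r + 1) = 2 * r + 1 + 1 by ring,
          Finset.sum_range_succ, Finset.sum_range_succ, ← pow_mul]
        rw [show (4 : ℕ) ^ r = 2 ^ (2 * r) by rw [pow_mul]; norm_num, pow_succ 2 (2 * r), add_assoc]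
    rw [psiFour, ← h1, sg, sg]
    simp only [map_eq_zero]
  have := sum_eq_powerSum (k := k) psiFour (psiFour_values hw).1 (psiFour_add hk) w (L := L)
  rw [hfr, powerSum_four hk hw, hwω] at this
  rw [← this]
  exact Finset.sum_congr rfl fun x _ => (hψ _).symm
end FourElements

/-! ### Conjugation, unit circle and characters of a quadratic extension -/

section QuadraticExtension
open scoped Classical

variable {K : Type*} [Field K] [Fintype K] [CharP K 2] {m : ℕ}

/-- The conjugation `x ↦ x ^ q`, `q = 2 ^ m`, of the field `K` with `q ^ 2` elements. -/
noncomputable def cj (m : ℕ) : K →+* K := iterateFrobenius K 2 m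

theorem cj_def (x : K) : cj m x = x ^ 2 ^ m := iterateFrobenius_def 2 m x

theorem cj_cj (hK : Fintype.card K = (2 ^ m) ^ 2) (x : K) : cj m (cj m x) = x := by
  rw [cj_def, cj_def, ← pow_mul, ← sq, ← hK, FiniteField.pow_card]

/-- The nonzero elements of the subfield `F` with `q` elements. -/
noncomputable def Fs (K : Type*) [Field K] [Fintype K] [CharP K 2] (m : ℕ) : Finset K :=
  Finset.univ.filter fun x => cj m x = x ∧ x ≠ 0

/-- The unit circle: the elements of `K` of norm one over the subfield `F` with `q` elements. -/
noncomputable def Uc (K : Type*) [Field K] [Fintype K] [CharP K 2] (m : ℕ) : Finset K :=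
  Finset.univ.filter fun x => x * cj m x = 1

theorem mem_Fs {x : K} : x ∈ Fs K m ↔ cj m x = x ∧ x ≠ 0 := by simp [Fs]

theorem mem_Uc {x : K} : x ∈ Uc K m ↔ x * cj m x = 1 := by simp [Uc]

theorem ne_zero_of_mem_Uc {x : K} (hx : x ∈ Uc K m) : x ≠ 0 := by
  rintro rfl; simp [mem_Uc] at hx

theorem cj_of_mem_Uc {x : K} (hx : x ∈ Uc K m) : cj m x = x⁻¹ :=
  eq_inv_of_mul_eq_one_right (mem_Uc.1 hx)

theorem one_mem_Uc : (1 : K) ∈ Uc K m := by simp [mem_Uc]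

theorem mul_mem_Uc {x y : K} (hx : x ∈ Uc K m) (hy : y ∈ Uc K m) : x * y ∈ Uc K m := by
  rw [mem_Uc] at *
  rw [map_mul]; linear_combination (y * cj m y) * hx + hy

theorem inv_mem_Uc {x : K} (hx : x ∈ Uc K m) : x⁻¹ ∈ Uc K m := by
  rw [mem_Uc] at *
  rw [map_inv₀, ← mul_inv, hx, inv_one]

theorem mul_mem_Fs {x y : K} (hx : x ∈ Fs K m) (hy : y ∈ Fs K m) : x * y ∈ Fs K m := by
  rw [mem_Fs] at *
  exact ⟨by rw [map_mul, hx.1, hy.1], mul_ne_zero hx.2 hy.2⟩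

theorem inv_mem_Fs {x : K} (hx : x ∈ Fs K m) : x⁻¹ ∈ Fs K m := by
  rw [mem_Fs] at *
  exact ⟨by rw [map_inv₀, hx.1], inv_ne_zero hx.2⟩

/-- The nontrivial additive character `(-1) ^ Tr x` of the subfield `F`. It is a character only on
fixed points of `cj`. -/
noncomputable def psi (m : ℕ) (x : K) : ℤ := sg (traceSum m x)

theorem traceSum_add (x y : K) : traceSum m (x + y) = traceSum m x + traceSum m y := by
  simp only [traceSum, ← Finset.sum_add_distrib]
  exact Finset.sum_congr rfl fun i _ => add_pow_char_pow x y 2 i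

theorem traceSum_sq (x : K) : traceSum m (x ^ 2) = traceSum m x ^ 2 := by
  simp only [traceSum, CharTwo.sum_sq]
  exact Finset.sum_congr rfl fun i _ => by rw [← pow_mul, ← pow_mul, mul_comm]

/-- A telescoping sum. -/
theorem traceSum_sq_add (x : K) : traceSum m (x ^ 2 + x) = cj m x + x := by
  rw [cj_def, traceSum]
  induction m with
  | zero => simp [CharTwo.add_self_eq_zero]
  | succ m ih =>
    rw [Finset.sum_range_succ, ih, add_pow_char_pow, ← pow_mul, ← pow_succ']
    linear_combination x ^ 2 ^ m * (CharTwo.two_eq_zero : (2 : K) = 0)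

theorem traceSum_mem {x : K} (hx : cj m x = x) : traceSum m x = 0 ∨ traceSum m x = 1 := by
  have h := traceSum_sq_add (m := m) x
  rw [hx, CharTwo.add_self_eq_zero, traceSum_add, traceSum_sq] at h
  have : traceSum m x * (traceSum m x + 1) = 0 := by linear_combination h
  rcases mul_eq_zero.1 this with h | h
  · exact Or.inl h
  · exact Or.inr (CharTwo.add_eq_zero.1 h)

theorem psi_zero : psi m (0 : K) = 1 := by
  simp [psi, traceSum, sg]

theorem psi_one : psi m (1 : K) = if Even m then 1 else -1 := by
  simp only [psi, traceSum, one_pow, Finset.sum_const, Finset.card_range, nsmul_eq_mul, mul_one, sg,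
    CharTwo.natCast_eq_ite]
  split_ifs <;> simp_all

theorem psi_add {x y : K} (hx : cj m x = x) (hy : cj m y = y) :
    psi m (x + y) = psi m x * psi m y := by
  rw [psi, traceSum_add, sg_add (traceSum_mem hx) (traceSum_mem hy)]; rfl

theorem psi_sq {x : K} (hx : cj m x = x) : psi m (x ^ 2) = psi m x := by
  rw [psi, traceSum_sq, psi]
  rcases traceSum_mem hx with h | h <;> simp [h]

theorem psi_mul_self (x : K) : psi m x * psi m x = 1 := by
  unfold psi sg; split_ifs <;> norm_num

/-- Polar decomposition: every nonzero element of `K` is uniquely a product of an element of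
`Fs` and one of `Uc`. -/
theorem polar_bij (hm : 0 < m) (hK : Fintype.card K = (2 ^ m) ^ 2) {M : Type*} [AddCommMonoid M]
    (g : K → M) : ∑ x : K with x ≠ 0, g x = ∑ r ∈ Fs K m, ∑ u ∈ Uc K m, g (r * u) := by
  rw [← Finset.sum_product']
  symm
  refine Finset.sum_bij (fun p _ => p.1 * p.2) ?_ ?_ ?_ ?_
  · rintro ⟨r, u⟩ h
    rw [Finset.mem_product] at h
    simp [(mem_Fs.1 h.1).2, ne_zero_of_mem_Uc h.2]
  · rintro ⟨r, u⟩ h ⟨r', u'⟩ h' heq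
    rw [Finset.mem_product] at h h'
    obtain ⟨hr, hr0⟩ := mem_Fs.1 h.1
    obtain ⟨hr', hr0'⟩ := mem_Fs.1 h'.1
    have hu := mem_Uc.1 h.2
    have hu' := mem_Uc.1 h'.2
    dsimp only at *
    have h2 := congrArg (cj m) heq
    rw [map_mul, map_mul, hr, hr'] at h2
    have h3 : r ^ 2 = r' ^ 2 := by
      have : (r * u) * (r * cj m u) = (r' * u') * (r' * cj m u') := by rw [heq, h2]
      linear_combination this - r ^ 2 * hu + r' ^ 2 * hu'
    have h4 := CharTwo.sq_inj.1 h3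
    subst h4
    rw [mul_left_cancel₀ hr0 heq]
  · intro x hx
    have hx0 : x ≠ 0 := (Finset.mem_filter.1 hx).2
    have hsq : ((x * cj m x) ^ 2 ^ (m - 1)) ^ 2 = x * cj m x := by
      rw [← pow_mul, ← pow_succ, Nat.sub_add_cancel hm, ← cj_def, map_mul, cj_cj hK, mul_comm]
    set r := (x * cj m x) ^ 2 ^ (m - 1) with hr
    have hr0 : r ≠ 0 := by
      rw [hr]; exact pow_ne_zero _ (mul_ne_zero hx0 ((map_ne_zero _).2 hx0))
    have hcr : cj m r = r := by
      rw [hr, map_pow, map_mul, cj_cj hK, mul_comm]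
    refine ⟨(r, x / r), ?_, ?_⟩
    · rw [Finset.mem_product]
      refine ⟨mem_Fs.2 ⟨hcr, hr0⟩, mem_Uc.2 ?_⟩
      dsimp only
      rw [map_div₀, hcr]
      field_simp
      exact hsq.symm
    · dsimp only
      field_simp
  · intros; rfl

theorem polar_sum (hm : 0 < m) (hK : Fintype.card K = (2 ^ m) ^ 2) {M : Type*} [AddCommMonoid M]
    (g : K → M) : ∑ x : K, g x = g 0 + ∑ r ∈ Fs K m, ∑ u ∈ Uc K m, g (r * u) := by
  rw [← polar_bij hm hK, ← Finset.add_sum_erase _ _ (Finset.mem_univ (0 : K))]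
  congr 2
  ext x; simp

theorem card_Fs_Uc (hm : 0 < m) (hK : Fintype.card K = (2 ^ m) ^ 2) :
    ((Fs K m).card : ℤ) = 2 ^ m - 1 ∧ ((Uc K m).card : ℤ) = 2 ^ m + 1 := by
  have hq : 2 ≤ 2 ^ m := by
    calc 2 = 2 ^ 1 := rfl
      _ ≤ 2 ^ m := Nat.pow_le_pow_right (by norm_num) hm
  have h1 : (Fs K m).card ≤ 2 ^ m - 1 := by
    have hsub : Fs K m ⊆ Polynomial.nthRootsFinset (2 ^ m - 1) (1 : K) := by
      intro x hx
      obtain ⟨hx, hx0⟩ := mem_Fs.1 hx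
      rw [Polynomial.mem_nthRootsFinset (by omega)]
      rw [cj_def] at hx
      refine mul_right_cancel₀ hx0 ?_
      rw [← pow_succ, Nat.sub_add_cancel (by omega), hx, one_mul]
    refine (Finset.card_le_card hsub).trans ?_
    rw [Polynomial.nthRootsFinset]
    exact (Multiset.toFinset_card_le _).trans (Polynomial.card_nthRoots _ _)
  have h2 : (Uc K m).card ≤ 2 ^ m + 1 := by
    have hsub : Uc K m ⊆ Polynomial.nthRootsFinset (2 ^ m + 1) (1 : K) := by
      intro x hx
      rw [Polynomial.mem_nthRootsFinset (by omega), pow_succ', ← cj_def]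
      exact mem_Uc.1 hx
    refine (Finset.card_le_card hsub).trans ?_
    rw [Polynomial.nthRootsFinset]
    exact (Multiset.toFinset_card_le _).trans (Polynomial.card_nthRoots _ _)
  have h3 : (2 ^ m) ^ 2 = 1 + (Fs K m).card * (Uc K m).card := by
    have := polar_sum hm hK (fun _ : K => (1 : ℕ))
    simpa [hK] using this
  zify [show 1 ≤ 2 ^ m by omega] at h1 h2 h3
  have hq' : (2 : ℤ) ≤ 2 ^ m := by exact_mod_cast hq
  have hf : (0 : ℤ) ≤ (Fs K m).card := by positivity
  have hu : (0 : ℤ) ≤ (Uc K m).card := by positivity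
  constructor <;> nlinarith

/-- The trace polynomial has degree `2 ^ (m - 1)`, too small to vanish on all of `F`. -/
theorem exists_psi_neg (hm : 0 < m) (hK : Fintype.card K = (2 ^ m) ^ 2) :
    ∃ c ∈ Fs K m, psi m c = -1 := by
  by_contra! h
  have hz : ∀ c ∈ insert 0 (Fs K m), traceSum m c = 0 := by
    intro c hc
    rcases Finset.mem_insert.1 hc with rfl | hc
    · simp [traceSum]
    · by_contra hne
      exact h c hc (by simp [psi, sg, hne])
  let P : Polynomial K := ∑ i ∈ Finset.range m, Polynomial.X ^ 2 ^ i
  have hPe : ∀ c, P.eval c = traceSum m c := by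
    intro c; simp [P, traceSum, Polynomial.eval_finsetSum]
  have hdeg : P.natDegree ≤ 2 ^ (m - 1) := by
    refine Polynomial.natDegree_sum_le_of_forall_le _ _ fun i hi => ?_
    rw [Polynomial.natDegree_X_pow]
    exact Nat.pow_le_pow_right (by norm_num) (by have := Finset.mem_range.1 hi; omega)
  have hP0 : P ≠ 0 := by
    intro h0
    have : P.coeff 1 = 1 := by
      simp only [P, Polynomial.finsetSum_coeff, Polynomial.coeff_X_pow]
      rw [Finset.sum_eq_single 0]
      · simp
      · intro i _ hi
        rw [if_neg]
        exact (Nat.one_lt_two_pow hi).ne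
      · intro h; simp at h; omega
    rw [h0] at this
    simp at this
  have hcard : (insert 0 (Fs K m)).card ≤ P.natDegree := by
    refine Polynomial.card_le_degree_of_subset_roots ?_
    intro c hc
    rw [Polynomial.mem_roots hP0, Polynomial.IsRoot, hPe]
    exact hz c hc
  rw [Finset.card_insert_of_notMem (by simp [mem_Fs])] at hcard
  have h1 := (card_Fs_Uc hm hK).1
  have h2 : 2 ^ m = 2 * 2 ^ (m - 1) := by rw [← pow_succ', Nat.sub_add_cancel hm]
  have h3 : 0 < 2 ^ (m - 1) := by positivity
  have h4 : (Fs K m).card = 2 ^ m - 1 := by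
    have : 1 ≤ 2 ^ m := Nat.one_le_two_pow
    zify [this]; exact h1
  omega

theorem sum_psi (hm : 0 < m) (hK : Fintype.card K = (2 ^ m) ^ 2) {s : K} (hs : cj m s = s) :
    ∑ r ∈ Fs K m, psi m (r * s) = if s = 0 then 2 ^ m - 1 else -1 := by
  split_ifs with h
  · subst h
    simp [psi_zero, (card_Fs_Uc hm hK).1]
  · have h1 : ∑ r ∈ Fs K m, psi m (r * s) = ∑ r ∈ Fs K m, psi m r := by
      have hsF : s ∈ Fs K m := mem_Fs.2 ⟨hs, h⟩
      refine Finset.sum_nbij' (fun r => r * s) (fun r => r * s⁻¹) ?_ ?_ ?_ ?_ ?_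
      · intro r hr; exact mul_mem_Fs hr hsF
      · intro r hr; exact mul_mem_Fs hr (inv_mem_Fs hsF)
      · intro r _; field_simp
      · intro r _; field_simp
      · intros; rfl
    rw [h1]
    obtain ⟨c, hc, hc1⟩ := exists_psi_neg hm hK
    have h2 : ∑ r ∈ insert 0 (Fs K m), psi m r = - ∑ r ∈ insert 0 (Fs K m), psi m r := by
      have hmem : ∀ x : K, x ∈ insert 0 (Fs K m) ↔ cj m x = x := by
        intro x
        rw [Finset.mem_insert, mem_Fs]
        by_cases hx : x = 0 <;> simp [hx]
      have hmaps : ∀ x ∈ insert 0 (Fs K m), x + c ∈ insert 0 (Fs K m) := by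
        intro x hx
        rw [hmem] at hx ⊢
        rw [map_add, hx, (mem_Fs.1 hc).1]
      have hinv : ∀ x ∈ insert 0 (Fs K m), x + c + c = x := by
        intro x _
        exact CharTwo.add_cancel_right x c
      rw [← Finset.sum_neg_distrib]
      refine Finset.sum_nbij' (fun x => x + c) (fun x => x + c) hmaps hmaps hinv hinv ?_
      intro x hx
      rw [psi_add ((hmem x).1 hx) (mem_Fs.1 hc).1, hc1]
      ring
    rw [Finset.sum_insert (by simp [mem_Fs]), psi_zero] at h2
    omega

/-- The nontrivial additive character of `K`: `psi` composed with the trace from `K` to `F`. -/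
noncomputable def chi (m : ℕ) (x : K) : ℤ := psi m (x + cj m x)

theorem fix_trace (hK : Fintype.card K = (2 ^ m) ^ 2) (x : K) :
    cj m (x + cj m x) = x + cj m x := by
  rw [map_add, cj_cj hK, add_comm]

theorem chi_add (hK : Fintype.card K = (2 ^ m) ^ 2) (x y : K) :
    chi m (x + y) = chi m x * chi m y := by
  rw [chi, map_add, show x + y + (cj m x + cj m y) = (x + cj m x) + (y + cj m y) by ring,
    psi_add (fix_trace hK x) (fix_trace hK y)]; rfl

theorem chi_zero : chi m (0 : K) = 1 := by simp [chi, psi_zero]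

theorem chi_sq (hK : Fintype.card K = (2 ^ m) ^ 2) (x : K) : chi m (x ^ 2) = chi m x := by
  rw [chi, map_pow, ← CharTwo.add_sq, psi_sq (fix_trace hK x)]; rfl

theorem eq_one_of_mem_Uc {u : K} (hu : u ∈ Uc K m) (h : u + cj m u = 0) : u = 1 := by
  have h1 := mem_Uc.1 hu
  rw [← CharTwo.add_eq_zero.1 h] at h1
  have : u ^ 2 = 1 ^ 2 := by linear_combination h1
  exact CharTwo.sq_inj.1 this

theorem sum_chi (hm : 0 < m) (hK : Fintype.card K = (2 ^ m) ^ 2) (s : K) :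
    ∑ a : K, chi m (a * s) = if s = 0 then (2 ^ m) ^ 2 else 0 := by
  split_ifs with h
  · subst h
    simp [chi_zero, hK]
  · have h1 : ∑ a : K, chi m (a * s) = ∑ a : K, chi m a :=
      Equiv.sum_comp (Equiv.mulRight₀ s h) (fun a => chi m a)
    have h2 : ∀ u ∈ Uc K m, ∑ r ∈ Fs K m, chi m (r * u) =
        if u = 1 then 2 ^ m - 1 else -1 := by
      intro u hu
      have h3 : ∀ r ∈ Fs K m, chi m (r * u) = psi m (r * (u + cj m u)) := by
        intro r hr
        rw [chi, map_mul, (mem_Fs.1 hr).1, mul_add]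
      rw [Finset.sum_congr rfl h3, sum_psi hm hK (fix_trace hK u)]
      by_cases hu1 : u = 1
      · subst hu1; simp [CharTwo.add_self_eq_zero]
      · rw [if_neg hu1, if_neg fun h => hu1 (eq_one_of_mem_Uc hu h)]
    rw [h1, polar_sum hm hK, chi_zero, Finset.sum_comm, Finset.sum_congr rfl h2,
      ← Finset.add_sum_erase _ _ one_mem_Uc, if_pos rfl,
      Finset.sum_congr rfl (g := fun _ => (-1 : ℤ))
        (fun u hu => if_neg (Finset.ne_of_mem_erase hu)),
      Finset.sum_const, Finset.card_erase_of_mem one_mem_Uc]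
    have h5 := (card_Fs_Uc hm hK).2
    have h6 : 1 ≤ (Uc K m).card := Finset.card_pos.2 ⟨1, one_mem_Uc⟩
    rw [nsmul_eq_mul, Nat.cast_sub h6, h5]
    push_cast
    ring

/-- The number of solutions of `w ^ 2 + w = c`. -/
theorem card_artin_schreier (hm : 0 < m) (hK : Fintype.card K = (2 ^ m) ^ 2) (c : K) :
    ∑ w : K, (if w ^ 2 + w = c then 1 else 0 : ℤ) = 1 + chi m c := by
  have hsq : Function.Bijective (fun α : K => α ^ 2) :=
    Finite.injective_iff_bijective.1 (CharTwo.sq_injective)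
  have h1 : ∀ s : K, ∑ α : K, chi m (α ^ 2 * s) = if s = 0 then (2 ^ m) ^ 2 else 0 := by
    intro s
    rw [← sum_chi hm hK s]
    exact Function.Bijective.sum_comp hsq (fun a => chi m (a * s))
  have h2 : (2 ^ m : ℤ) ^ 2 * ∑ w : K, (if w ^ 2 + w = c then 1 else 0 : ℤ) =
      (2 ^ m) ^ 2 * (1 + chi m c) := by
    calc (2 ^ m : ℤ) ^ 2 * ∑ w : K, (if w ^ 2 + w = c then 1 else 0 : ℤ)
        = ∑ w : K, ∑ α : K, chi m (α ^ 2 * (w ^ 2 + w + c)) := by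
          rw [Finset.mul_sum]
          refine Finset.sum_congr rfl fun w _ => ?_
          rw [h1]
          simp only [CharTwo.add_eq_zero]
          split_ifs <;> simp
      _ = ∑ α : K, chi m (α ^ 2 * c) * ∑ w : K, chi m (w * (α + α ^ 2)) := by
          rw [Finset.sum_comm]
          refine Finset.sum_congr rfl fun α _ => ?_
          rw [Finset.mul_sum]
          refine Finset.sum_congr rfl fun w _ => ?_
          rw [mul_add, mul_add, chi_add hK, chi_add hK, ← mul_pow, chi_sq hK, ← chi_add hK,
            mul_comm]
          congr 2
          ring
      _ = ∑ α ∈ ({0, 1} : Finset K), chi m (α ^ 2 * c) * (2 ^ m) ^ 2 := by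
          symm
          rw [← Finset.sum_subset (Finset.subset_univ ({0, 1} : Finset K))]
          · refine Finset.sum_congr rfl fun α hα => ?_
            rw [sum_chi hm hK, if_pos]
            simp only [Finset.mem_insert, Finset.mem_singleton] at hα
            rcases hα with rfl | rfl
            · simp
            · simp [CharTwo.add_self_eq_zero]
          · intro α _ hα
            rw [sum_chi hm hK, if_neg, mul_zero]
            intro h
            have : α * (1 + α) = 0 := by linear_combination h
            simp only [Finset.mem_insert, Finset.mem_singleton, not_or] at hα
            rcases mul_eq_zero.1 this with h | h
            · exact hα.1 h
            · exact hα.2 (CharTwo.add_eq_zero.1 h).symm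
      _ = _ := by
          rw [Finset.sum_pair zero_ne_one]
          simp [chi_zero]
          ring
  exact mul_left_cancel₀ (by positivity) h2

/-- For `c ∈ F`, the number of solutions of `w ^ 2 + w = c` that do not lie in `F`: both roots
or none, as their conjugates are `w + Tr c`. -/
theorem card_artin_schreier_conj (hm : 0 < m) (hK : Fintype.card K = (2 ^ m) ^ 2) {c : K}
    (hc : cj m c = c) :
    ∑ w : K, (if w ^ 2 + w = c ∧ cj m w = w + 1 then 1 else 0 : ℤ) = 1 - psi m c := by
  have hchi : chi m c = 1 := by rw [chi, hc, CharTwo.add_self_eq_zero, psi_zero]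
  have hw : ∀ w : K, w ^ 2 + w = c → cj m w = w + traceSum m c := by
    rintro w rfl
    rw [traceSum_sq_add, add_comm w, CharTwo.add_cancel_right]
  rcases traceSum_mem hc with h | h
  · have hp : psi m c = 1 := by simp [psi, h, sg]
    rw [hp, Finset.sum_eq_zero]
    · norm_num
    · intro w _
      rw [if_neg]
      rintro ⟨h1, h2⟩
      rw [hw w h1, h] at h2
      simp at h2
  · have hp : psi m c = -1 := by simp [psi, h, sg]
    have h3 := card_artin_schreier hm hK c
    rw [hchi] at h3
    rw [hp, sub_neg_eq_add, ← h3]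
    refine Finset.sum_congr rfl fun w _ => ?_
    congr 1
    rw [eq_iff_iff, and_iff_left_iff_imp]
    intro h1
    rw [hw w h1, h]

theorem sum_psi_inv (hm : 0 < m) (hK : Fintype.card K = (2 ^ m) ^ 2) :
    ∑ s : K with s ≠ 0, psi m (s * cj m s)⁻¹ = -(2 ^ m + 1) := by
  rw [polar_bij hm hK, Finset.sum_comm]
  have h1 : ∀ u ∈ Uc K m, ∑ r ∈ Fs K m, psi m (r * u * cj m (r * u))⁻¹ = -1 := by
    intro u hu
    have h2 : ∀ r ∈ Fs K m, psi m (r * u * cj m (r * u))⁻¹ = psi m r⁻¹ := by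
      intro r hr
      have hr' := inv_mem_Fs hr
      rw [← psi_sq (mem_Fs.1 hr').1, map_mul, (mem_Fs.1 hr).1]
      congr 1
      rw [show r * u * (r * cj m u) = r ^ 2 * (u * cj m u) by ring, mem_Uc.1 hu]
      simp
    rw [Finset.sum_congr rfl h2]
    have h3 := sum_psi hm hK (map_one (cj m : K →+* K))
    rw [if_neg one_ne_zero] at h3
    rw [← h3]
    refine Finset.sum_nbij' (fun r => r⁻¹) (fun r => r⁻¹) (fun r hr => inv_mem_Fs hr)
      (fun r hr => inv_mem_Fs hr) (by simp) (by simp) ?_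
    intro r _; simp
  rw [Finset.sum_congr rfl h1]
  simp [(card_Fs_Uc hm hK).2]

end QuadraticExtension

/-! ### A norm sum in terms of Kloosterman sums -/

section KloostermanSums
open scoped Classical

variable {K : Type*} [Field K] [Fintype K] [CharP K 2] {m : ℕ}

theorem sum_Fs_mul {s : K} (hs : s ∈ Fs K m) (f : K → ℤ) :
    ∑ r ∈ Fs K m, f (r * s) = ∑ r ∈ Fs K m, f r := by
  have h := (mem_Fs.1 hs).2
  refine Finset.sum_nbij' (fun r => r * s) (fun r => r * s⁻¹) (fun r hr => mul_mem_Fs hr hs)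
    (fun r hr => mul_mem_Fs hr (inv_mem_Fs hs)) ?_ ?_ (fun _ _ => rfl)
  · intro r _; field_simp
  · intro r _; field_simp

theorem sum_Fs_sq (f : K → ℤ) : ∑ r ∈ Fs K m, f (r ^ 2) = ∑ r ∈ Fs K m, f r := by
  have hmaps : Set.MapsTo (fun r : K => r ^ 2) (Fs K m) (Fs K m) := by
    intro r hr
    have := mul_mem_Fs (Finset.mem_coe.1 hr) (Finset.mem_coe.1 hr)
    simpa [sq] using this
  have hinj : Set.InjOn (fun r : K => r ^ 2) (Fs K m) := CharTwo.sq_injective.injOn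
  exact Finset.sum_nbij (fun r => r ^ 2) hmaps hinj
    (Finset.surjOn_of_injOn_of_card_le _ hmaps hinj le_rfl) (fun _ _ => rfl)

/-- The Kloosterman sum of `F` with parameter `c ^ 2` (equivalently `c`, for `c ≠ 0`), see
`sum_kl_one`; it takes the value `q - 1` at `c = 0`. -/
noncomputable def gK (m : ℕ) (c : K) : ℤ := ∑ r ∈ Fs K m, psi m (c * (r + r⁻¹))

theorem gK_zero (hm : 0 < m) (hK : Fintype.card K = (2 ^ m) ^ 2) : gK m (0 : K) = 2 ^ m - 1 := by
  simp [gK, psi_zero, (card_Fs_Uc hm hK).1]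

theorem sum_kl_one {c : K} (hc : c ∈ Fs K m) :
    ∑ r ∈ Fs K m, psi m (r + r⁻¹ * c) = gK m c := by
  obtain ⟨hc1, hc0⟩ := mem_Fs.1 hc
  have h1 : ∀ r ∈ Fs K m, psi m (r + r⁻¹ * c) = psi m (r ^ 2 + (r ^ 2)⁻¹ * c ^ 2) := by
    intro r hr
    have hr1 := (mem_Fs.1 hr).1
    rw [← psi_sq (by rw [map_add, map_mul, map_inv₀, hr1, hc1]), CharTwo.add_sq, mul_pow, inv_pow]
  rw [Finset.sum_congr rfl h1, sum_Fs_sq (fun r => psi m (r + r⁻¹ * c ^ 2)),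
    ← sum_Fs_mul hc, gK]
  refine Finset.sum_congr rfl fun r hr => ?_
  have hr0 := (mem_Fs.1 hr).2
  congr 1
  field_simp

/-- The two-parameter Kloosterman sum. The correction term accounts for exactly one of `A`, `B`
being zero, where the sum is `-1` while `gK m 0 = q - 1`. -/
theorem sum_kl (hm : 0 < m) (hK : Fintype.card K = (2 ^ m) ^ 2) {A B : K} (hA : cj m A = A)
    (hB : cj m B = B) (hAB : ¬ (A = 0 ∧ B = 0)) :
    ∑ r ∈ Fs K m, psi m (r * A + r⁻¹ * B) = gK m (A * B) - if A * B = 0 then 2 ^ m else 0 := by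
  by_cases hA0 : A = 0
  · have hB0 : B ≠ 0 := fun h => hAB ⟨hA0, h⟩
    subst hA0
    simp only [mul_zero, zero_add, zero_mul, if_true, gK_zero hm hK]
    have h3 := sum_psi hm hK hB
    rw [if_neg hB0] at h3
    rw [show (2 : ℤ) ^ m - 1 - 2 ^ m = -1 by ring, ← h3]
    refine Finset.sum_nbij' (fun r => r⁻¹) (fun r => r⁻¹) (fun r hr => inv_mem_Fs hr)
      (fun r hr => inv_mem_Fs hr) (by simp) (by simp) (by simp)
  by_cases hB0 : B = 0
  · subst hB0
    simp only [mul_zero, add_zero, if_true, gK_zero hm hK, sum_psi hm hK hA, if_neg hA0]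
    ring
  · have hAF : A ∈ Fs K m := mem_Fs.2 ⟨hA, hA0⟩
    have hBF : B ∈ Fs K m := mem_Fs.2 ⟨hB, hB0⟩
    rw [if_neg (mul_ne_zero hA0 hB0), sub_zero, ← sum_kl_one (mul_mem_Fs hAF hBF),
      ← sum_Fs_mul hAF (fun r => psi m (r + r⁻¹ * (A * B)))]
    refine Finset.sum_congr rfl fun r hr => ?_
    have hr0 := (mem_Fs.1 hr).2
    congr 1
    field_simp

theorem gK_sq {c : K} (hc : c ∈ Fs K m) : gK m (c ^ 2) = gK m c := by
  obtain ⟨hc1, hc0⟩ := mem_Fs.1 hc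
  have hc2 : c ^ 2 ∈ Fs K m := by rw [sq]; exact mul_mem_Fs hc hc
  rw [← sum_kl_one hc2, ← sum_Fs_mul hc, gK]
  refine Finset.sum_congr rfl fun r hr => ?_
  have hr0 := (mem_Fs.1 hr).2
  congr 1
  field_simp

/-- The sum of `ψ (1 / N(s) + 1 / N(s + 1))` over `s ≠ 0, 1`, where `N` is the norm from `K` to `F`. -/
noncomputable def Tsum (K : Type*) [Field K] [Fintype K] [CharP K 2] (m : ℕ) : ℤ :=
  ∑ s : K with s ≠ 0 ∧ s ≠ 1, psi m ((s * cj m s)⁻¹ + ((s + 1) * cj m (s + 1))⁻¹)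

/-- The involution `X ↦ X / (1 + X)` followed by polar coordinates `X = r * u`. -/
theorem Tsum_eq (hm : 0 < m) (hK : Fintype.card K = (2 ^ m) ^ 2) :
    Tsum K m + 1 = ∑ u ∈ Uc K m, gK m (1 + (u + u⁻¹)) := by
  have h2 : (2 : K) = 0 := CharTwo.two_eq_zero
  set h : K → ℤ := fun X =>
    psi m ((1 + X⁻¹) * cj m (1 + X⁻¹) + (1 + X) * cj m (1 + X)) with hh
  have key : ∀ X : K, X ≠ 0 ∧ X ≠ 1 → X / (1 + X) ≠ 0 ∧ X / (1 + X) ≠ 1 := by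
    rintro X ⟨h0, h1⟩
    have h3 : 1 + X ≠ 0 := fun h => h1 (CharTwo.add_eq_zero.1 h).symm
    refine ⟨div_ne_zero h0 h3, fun h => ?_⟩
    rw [div_eq_one_iff_eq h3] at h
    exact one_ne_zero (by linear_combination -h : (1 : K) = 0)
  have kk : ∀ X : K, X ≠ 0 ∧ X ≠ 1 → X / (1 + X) / (1 + X / (1 + X)) = X := by
    rintro X ⟨h0, h1⟩
    have h3 : 1 + X ≠ 0 := fun h => h1 (CharTwo.add_eq_zero.1 h).symm
    have h4 : 1 + X / (1 + X) = 1 / (1 + X) := by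
      field_simp; linear_combination X * h2
    rw [h4]; field_simp
  have h1 : Tsum K m = ∑ X : K with X ≠ 0 ∧ X ≠ 1, h X := by
    symm
    refine Finset.sum_nbij' (fun X => X / (1 + X)) (fun X => X / (1 + X)) ?_ ?_ ?_ ?_ ?_
    · intro X hX; simpa using key X (by simpa using hX)
    · intro X hX; simpa using key X (by simpa using hX)
    · intro X hX; exact kk X (by simpa using hX)
    · intro X hX; exact kk X (by simpa using hX)
    · intro X hX
      have hX' : X ≠ 0 ∧ X ≠ 1 := by simpa using hX
      obtain ⟨h0, h1⟩ := hX'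
      have h3 : 1 + X ≠ 0 := fun h => h1 (CharTwo.add_eq_zero.1 h).symm
      have e1 : (X / (1 + X))⁻¹ = 1 + X⁻¹ := by field_simp; ring
      have e2 : (X / (1 + X) + 1)⁻¹ = 1 + X := by
        have : X / (1 + X) + 1 = 1 / (1 + X) := by
          field_simp; linear_combination X * h2
        rw [this]; field_simp
      rw [hh]
      dsimp only
      rw [mul_inv, mul_inv, ← map_inv₀, ← map_inv₀, e1, e2]
  have h3 : ∑ X : K with X ≠ 0, h X = Tsum K m + 1 := by
    rw [h1, ← Finset.sum_erase_add _ _ (show (1 : K) ∈ ({X : K | X ≠ 0} : Finset K) by simp)]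
    congr 1
    · refine Finset.sum_congr ?_ fun _ _ => rfl
      ext X; simp [and_comm]
    · simp [hh, CharTwo.add_self_eq_zero, psi_zero]
  rw [← h3, polar_bij hm hK, Finset.sum_comm]
  refine Finset.sum_congr rfl fun u hu => ?_
  rw [gK]
  refine Finset.sum_congr rfl fun r hr => ?_
  obtain ⟨hr1, hr0⟩ := mem_Fs.1 hr
  have hu0 := ne_zero_of_mem_Uc hu
  have hcu := cj_of_mem_Uc hu
  have hf1 : cj m (r + r⁻¹) = r + r⁻¹ := by rw [map_add, map_inv₀, hr1]
  have hf2 : cj m (u + u⁻¹) = u + u⁻¹ := by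
    rw [map_add, map_inv₀, hcu, inv_inv, add_comm]
  have e : (1 + (r * u)⁻¹) * cj m (1 + (r * u)⁻¹) + (1 + r * u) * cj m (1 + r * u)
      = (r + r⁻¹) ^ 2 + (u + u⁻¹) * (r + r⁻¹) := by
    simp only [map_add, map_one, map_inv₀, map_mul, hr1, hcu]
    field_simp
    ring
  rw [hh]
  dsimp only
  rw [e, psi_add (by rw [map_pow, hf1]) (by rw [map_mul, hf1, hf2]), psi_sq hf1,
    ← psi_add hf1 (by rw [map_mul, hf1, hf2])]
  congr 1
  ring

theorem exists_omega (hm : 0 < m) (hK : Fintype.card K = (2 ^ m) ^ 2) :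
    ∃ ω : K, ω ^ 2 + ω + 1 = 0 ∧ cj m ω = if Even m then ω else ω + 1 := by
  have h := card_artin_schreier hm hK (1 : K)
  have h1 : chi m (1 : K) = 1 := by simp [chi, CharTwo.add_self_eq_zero, psi_zero]
  rw [h1] at h
  have : ∃ ω : K, ω ^ 2 + ω = 1 := by
    by_contra! hne
    rw [Finset.sum_eq_zero (fun w _ => if_neg (hne w))] at h
    norm_num at h
  obtain ⟨ω, hω⟩ := this
  refine ⟨ω, by rw [hω, CharTwo.add_self_eq_zero], ?_⟩
  have h2 := traceSum_sq_add (m := m) ω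
  rw [hω] at h2
  simp only [traceSum, one_pow, Finset.sum_const, Finset.card_range, nsmul_eq_mul, mul_one,
    CharTwo.natCast_eq_ite] at h2
  split_ifs at h2 ⊢
  · exact CharTwo.add_eq_zero.1 h2.symm
  · rw [h2, add_comm ω, CharTwo.add_cancel_right]

theorem chi_eq_sg (x : K) : chi m x = sg (traceSum (2 * m) x) := by
  rw [chi, psi, traceSum_add, traceSum, traceSum, traceSum, two_mul, Finset.sum_range_add]
  congr 2
  refine Finset.sum_congr rfl fun i _ => ?_
  rw [cj_def, ← pow_mul, pow_add]

/-- For odd `m` the cube root of unity `ω` lies on the unit circle. The Kloosterman sum of `K` at `ω`,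
in polar coordinates, is the sum in `Tsum_eq` up to two degenerate terms. -/
theorem Tsum_odd (hm : 0 < m) (hK : Fintype.card K = (2 ^ m) ^ 2) (hodd : ¬ Even m) :
    Tsum K m = 2 * 2 ^ m - 1 - tseq m := by
  have h2 : (2 : K) = 0 := CharTwo.two_eq_zero
  obtain ⟨ω, hω, hcω⟩ := exists_omega hm hK
  rw [if_neg hodd] at hcω
  have hU : ω ∈ Uc K m := by
    rw [mem_Uc, hcω]; linear_combination hω - h2
  have hω0 := ne_zero_of_mem_Uc hU
  have hinv : ω⁻¹ = ω + 1 := by rw [← cj_of_mem_Uc hU, hcω]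
  have hω1 : ω ≠ 1 := by
    rintro rfl
    exact one_ne_zero (by linear_combination hω - h2 : (1 : K) = 0)
  obtain ⟨n, rfl⟩ : ∃ n, m = n + 1 := ⟨m - 1, by omega⟩
  have hkl := kloosterman_four n (L := K) (by rw [hK, ← pow_mul, mul_comm, pow_mul]; norm_num) hω
  simp only [← chi_eq_sg] at hkl
  rw [polar_bij hm hK, Finset.sum_comm] at hkl
  have hu : ∀ u ∈ Uc K (n + 1), ∑ r ∈ Fs K (n + 1), chi (n + 1) (r * u + ω * (r * u)⁻¹) =
      gK (n + 1) (1 + (ω * (u ^ 2)⁻¹ + (ω * (u ^ 2)⁻¹)⁻¹)) -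
        ((if u = 1 then 2 ^ (n + 1) else 0) + (if u = ω then 2 ^ (n + 1) else 0)) := by
    intro u hu
    have hu0 := ne_zero_of_mem_Uc hu
    have hcu := cj_of_mem_Uc hu
    have hA : cj (n + 1) (u + u⁻¹) = u + u⁻¹ := by
      rw [map_add, map_inv₀, hcu, inv_inv, add_comm]
    have hB : cj (n + 1) (ω * u⁻¹ + ω⁻¹ * u) = ω * u⁻¹ + ω⁻¹ * u := by
      rw [map_add, map_mul, map_mul, map_inv₀, map_inv₀, hcu, cj_of_mem_Uc hU, inv_inv, inv_inv,
        add_comm]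
    have hA0 : u + u⁻¹ = 0 ↔ u = 1 := by
      constructor
      · intro h; exact eq_one_of_mem_Uc hu (by rw [hcu, h])
      · rintro rfl; simp [CharTwo.add_self_eq_zero]
    have hB0 : ω * u⁻¹ + ω⁻¹ * u = 0 ↔ u = ω := by
      constructor
      · intro h
        have h5 : u * ω⁻¹ = 1 := by
          refine eq_one_of_mem_Uc (mul_mem_Uc hu (inv_mem_Uc hU)) ?_
          rw [map_mul, map_inv₀, hcu, cj_of_mem_Uc hU, inv_inv]
          linear_combination h
        field_simp at h5
        exact h5
      · rintro rfl; field_simp; linear_combination h2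
    have h3 : ∀ r ∈ Fs K (n + 1), chi (n + 1) (r * u + ω * (r * u)⁻¹) =
        psi (n + 1) (r * (u + u⁻¹) + r⁻¹ * (ω * u⁻¹ + ω⁻¹ * u)) := by
      intro r hr
      rw [chi]
      simp only [map_add, map_mul, map_inv₀, hcu, cj_of_mem_Uc hU, (mem_Fs.1 hr).1, mul_inv,
        inv_inv]
      congr 1
      ring
    rw [Finset.sum_congr rfl h3, sum_kl hm hK hA hB (by
      rw [hA0, hB0]; rintro ⟨rfl, h⟩; exact hω1 h.symm)]
    congr 1
    · congr 1
      have : (u + u⁻¹) * (ω * u⁻¹ + ω⁻¹ * u) = (ω + ω⁻¹) + (ω * (u ^ 2)⁻¹ + (ω * (u ^ 2)⁻¹)⁻¹) := by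
        field_simp; ring
      rw [this, hinv]
      linear_combination ω * h2
    · rw [mul_eq_zero, hA0, hB0]
      by_cases h1 : u = 1
      · subst h1; simp [hω1.symm]
      · simp [h1]
  rw [Finset.sum_congr rfl hu, Finset.sum_sub_distrib, Finset.sum_add_distrib,
    Finset.sum_ite_eq_of_mem' _ _ _ one_mem_Uc, Finset.sum_ite_eq_of_mem' _ _ _ hU] at hkl
  have hmaps : Set.MapsTo (fun u : K => ω * (u ^ 2)⁻¹) (Uc K (n + 1)) (Uc K (n + 1)) := by
    intro u hu
    refine mul_mem_Uc hU (inv_mem_Uc ?_)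
    rw [sq]; exact mul_mem_Uc hu hu
  have hinj : Set.InjOn (fun u : K => ω * (u ^ 2)⁻¹) (Uc K (n + 1)) := by
    intro u _ v _ h
    exact CharTwo.sq_inj.1 (inv_injective (mul_left_cancel₀ hω0 h))
  have hb : ∑ u ∈ Uc K (n + 1), gK (n + 1) (1 + (ω * (u ^ 2)⁻¹ + (ω * (u ^ 2)⁻¹)⁻¹)) =
      ∑ u ∈ Uc K (n + 1), gK (n + 1) (1 + (u + u⁻¹)) :=
    Finset.sum_nbij (fun u => ω * (u ^ 2)⁻¹) hmaps hinj
    (Finset.surjOn_of_injOn_of_card_le _ hmaps hinj le_rfl) (fun _ _ => rfl)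
  rw [hb, ← Tsum_eq hm hK] at hkl
  linarith

theorem mem_insert_Fs {x : K} : x ∈ insert 0 (Fs K m) ↔ cj m x = x := by
  rw [Finset.mem_insert, mem_Fs]
  by_cases hx : x = 0 <;> simp [hx]

theorem eq_or_eq_inv {x y : K} (hy : y ≠ 0) (hx : x ≠ 0) (h : y + y⁻¹ = x + x⁻¹) :
    y = x ∨ y = x⁻¹ := by
  have : (y - x) * (y - x⁻¹) = 0 := by
    field_simp at h ⊢
    linear_combination h
  rcases mul_eq_zero.1 this with h | h
  · exact Or.inl (sub_eq_zero.1 h)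
  · exact Or.inr (sub_eq_zero.1 h)

/-- Each `c ∈ F` has exactly two preimages under `u ↦ u + u⁻¹` from the disjoint union of `Uc`
and `Fs` to `F`. -/
theorem count_trace (hm : 0 < m) (hK : Fintype.card K = (2 ^ m) ^ 2) {c : K} (hc : cj m c = c) :
    ∑ u ∈ Uc K m, (if u + u⁻¹ = c then 1 else 0 : ℤ) +
      ∑ u ∈ Fs K m, (if u + u⁻¹ = c then 1 else 0 : ℤ) = 2 := by
  have h2 : (2 : K) = 0 := CharTwo.two_eq_zero
  by_cases hc0 : c = 0
  · subst hc0
    have h0 : ∀ x : K, x ≠ 0 → (x + x⁻¹ = 0 ↔ x = 1) := by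
      intro x hx
      constructor
      · intro h
        field_simp at h
        have : x ^ 2 = 1 ^ 2 := by linear_combination h - h2
        exact CharTwo.sq_inj.1 this
      · rintro rfl; simp [CharTwo.add_self_eq_zero]
    have h1F : (1 : K) ∈ Fs K m := by simp [mem_Fs]
    rw [Finset.sum_congr rfl (fun u hu => by rw [h0 u (ne_zero_of_mem_Uc hu)]),
      Finset.sum_ite_eq_of_mem' _ _ _ one_mem_Uc,
      Finset.sum_congr rfl (fun u hu => by rw [h0 u (mem_Fs.1 hu).2]),
      Finset.sum_ite_eq_of_mem' _ _ _ h1F]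
    norm_num
  · have hd : cj m (c⁻¹ ^ 2) = c⁻¹ ^ 2 := by rw [map_pow, map_inv₀, hc]
    have h := card_artin_schreier hm hK (c⁻¹ ^ 2)
    rw [chi, hd, CharTwo.add_self_eq_zero, psi_zero] at h
    have hsplit : ∑ x : K, ((if x ∈ Uc K m then (if x + x⁻¹ = c then 1 else 0 : ℤ) else 0) +
        (if x ∈ Fs K m then (if x + x⁻¹ = c then 1 else 0 : ℤ) else 0)) =
        ∑ u ∈ Uc K m, (if u + u⁻¹ = c then 1 else 0 : ℤ) +
          ∑ u ∈ Fs K m, (if u + u⁻¹ = c then 1 else 0 : ℤ) := by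
      rw [Finset.sum_add_distrib, Finset.sum_ite_mem, Finset.sum_ite_mem, Finset.univ_inter,
        Finset.univ_inter]
    rw [← hsplit, ← Equiv.sum_comp (Equiv.mulLeft₀ c hc0), show (2 : ℤ) = 1 + 1 by norm_num, ← h]
    refine Finset.sum_congr rfl fun w _ => ?_
    rw [show Equiv.mulLeft₀ c hc0 w = c * w from rfl]
    by_cases hw : w ^ 2 + w = c⁻¹ ^ 2
    · have hw0 : w ≠ 0 := by
        rintro rfl
        simp only [ne_eq, OfNat.ofNat_ne_zero, not_false_eq_true, zero_pow, add_zero] at hw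
        exact pow_ne_zero 2 (inv_ne_zero hc0) hw.symm
      have hcw : c * w ≠ 0 := mul_ne_zero hc0 hw0
      have hq : (c * w) ^ 2 + c * (c * w) = 1 := by
        field_simp at hw; linear_combination hw
      have hs : c * w + (c * w)⁻¹ = c := by
        field_simp
        linear_combination hq + (1 - c ^ 2 * w) * h2
      have hcj : cj m (c * w) = c * w ∨ cj m (c * w) = (c * w)⁻¹ := by
        have hs' := congrArg (cj m) hs
        rw [map_add, map_inv₀, hc] at hs'
        exact eq_or_eq_inv ((map_ne_zero _).2 hcw) hcw (hs'.trans hs.symm)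
      have hne : c * w ≠ (c * w)⁻¹ := by
        intro h
        rw [← h, CharTwo.add_self_eq_zero] at hs
        exact hc0 hs.symm
      rw [if_pos hs, if_pos hw]
      rcases hcj with h | h
      · rw [if_neg, if_pos]
        · rfl
        · exact mem_Fs.2 ⟨h, hcw⟩
        · intro hU; exact hne (h.symm.trans (cj_of_mem_Uc hU))
      · rw [if_pos, if_neg]
        · rfl
        · intro hF; exact hne ((mem_Fs.1 hF).1.symm.trans h)
        · rw [mem_Uc, h]; exact mul_inv_cancel₀ hcw
    · have hs : c * w ≠ 0 → c * w + (c * w)⁻¹ ≠ c := by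
        intro hcw hs
        apply hw
        have hw0 : w ≠ 0 := right_ne_zero_of_mul hcw
        field_simp at hs ⊢
        linear_combination hs + (c ^ 2 * w - 1) * h2
      rw [if_neg hw]
      by_cases hcw : c * w = 0
      · rw [hcw]; simp [mem_Uc, mem_Fs]
      · rw [if_neg (hs hcw)]; simp

/-- Summed form of `count_trace`. -/
theorem sum_trace (hm : 0 < m) (hK : Fintype.card K = (2 ^ m) ^ 2) (f : K → ℤ) :
    ∑ u ∈ Uc K m, f (u + u⁻¹) + ∑ u ∈ Fs K m, f (u + u⁻¹) =
      2 * ∑ c ∈ insert 0 (Fs K m), f c := by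
  have h1 : ∀ u ∈ Uc K m, f (u + u⁻¹) =
      ∑ c ∈ insert 0 (Fs K m), (if u + u⁻¹ = c then 1 else 0 : ℤ) * f c := by
    intro u hu
    have : u + u⁻¹ ∈ insert 0 (Fs K m) := by
      rw [mem_insert_Fs, map_add, map_inv₀, cj_of_mem_Uc hu, inv_inv, add_comm]
    simp only [ite_mul, one_mul, zero_mul]
    rw [Finset.sum_ite_eq_of_mem _ _ _ this]
  have h2 : ∀ u ∈ Fs K m, f (u + u⁻¹) =
      ∑ c ∈ insert 0 (Fs K m), (if u + u⁻¹ = c then 1 else 0 : ℤ) * f c := by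
    intro u hu
    have : u + u⁻¹ ∈ insert 0 (Fs K m) := by
      rw [mem_insert_Fs, map_add, map_inv₀, (mem_Fs.1 hu).1]
    simp only [ite_mul, one_mul, zero_mul]
    rw [Finset.sum_ite_eq_of_mem _ _ _ this]
  rw [Finset.sum_congr rfl h1, Finset.sum_congr rfl h2, Finset.sum_comm,
    Finset.sum_comm (s := Fs K m), ← Finset.sum_add_distrib, Finset.mul_sum]
  refine Finset.sum_congr rfl fun c hc => ?_
  rw [← Finset.sum_mul, ← Finset.sum_mul, ← add_mul, count_trace hm hK (mem_insert_Fs.1 hc)]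

theorem sum_gK (hm : 0 < m) (hK : Fintype.card K = (2 ^ m) ^ 2) :
    ∑ c ∈ insert 0 (Fs K m), gK m (1 + c) = (2 ^ m : ℤ) := by
  have h2 : (2 : K) = 0 := CharTwo.two_eq_zero
  have hmaps : ∀ x ∈ insert 0 (Fs K m), 1 + x ∈ insert 0 (Fs K m) := by
    intro x hx
    rw [mem_insert_Fs] at hx ⊢
    rw [map_add, hx, map_one]
  have hinv : ∀ x ∈ insert 0 (Fs K m), 1 + (1 + x) = x := by
    intro x _; linear_combination h2
  have h1 : ∑ c ∈ insert 0 (Fs K m), gK m (1 + c) = ∑ c ∈ insert 0 (Fs K m), gK m c :=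
    Finset.sum_nbij' (fun x => 1 + x) (fun x => 1 + x) hmaps hmaps hinv hinv (fun _ _ => rfl)
  rw [h1]
  simp only [gK]
  rw [Finset.sum_comm]
  have h1F : (1 : K) ∈ Fs K m := by simp [mem_Fs]
  have h3 : ∀ r ∈ Fs K m, ∑ c ∈ insert 0 (Fs K m), psi m (c * (r + r⁻¹)) =
      if r = 1 then (2 ^ m : ℤ) else 0 := by
    intro r hr
    obtain ⟨hr1, hr0⟩ := mem_Fs.1 hr
    rw [Finset.sum_insert (by simp [mem_Fs]), zero_mul, psi_zero,
      sum_psi hm hK (by rw [map_add, map_inv₀, hr1])]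
    have : r + r⁻¹ = 0 ↔ r = 1 := by
      constructor
      · intro h
        field_simp at h
        have : r ^ 2 = 1 ^ 2 := by linear_combination h - h2
        exact CharTwo.sq_inj.1 this
      · rintro rfl; simp [CharTwo.add_self_eq_zero]
    rw [this]
    split_ifs <;> ring
  rw [Finset.sum_congr rfl h3, Finset.sum_ite_eq_of_mem' _ _ _ h1F]

/-- Duplication formulas; the third component is the invariant that makes the induction work. -/
theorem tseq_double (k : ℕ) : tseq (2 * k) = tseq k ^ 2 - 2 * 4 ^ k ∧
    tseq (2 * k + 1) = tseq k * tseq (k + 1) - 4 ^ k ∧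
    tseq (k + 1) ^ 2 - tseq (k + 1) * tseq k + 4 * tseq k ^ 2 = 15 * 4 ^ k := by
  induction k with
  | zero => simp [tseq]
  | succ k ih =>
    obtain ⟨h1, h2, h3⟩ := ih
    have e1 : tseq (k + 1 + 1) = tseq (k + 1) - 4 * tseq k := rfl
    have e2 : tseq (2 * (k + 1)) = tseq (2 * k + 1) - 4 * tseq (2 * k) := rfl
    have e3 : tseq (2 * (k + 1) + 1) = tseq (2 * (k + 1)) - 4 * tseq (2 * k + 1) := rfl
    rw [e3, e2, e1, h1, h2, pow_succ (4 : ℤ) k]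
    refine ⟨?_, ?_, ?_⟩ <;> linarith [h3]

/-- For even `m = 2 * k` the cube root of unity lies in `F`, a field with `4 ^ k` elements, to which
`kloosterman_four` applies. -/
theorem gK_omega (hK : Fintype.card K = (2 ^ m) ^ 2) (hm : 0 < m) {k : ℕ} (hk : m = k + k) {ω : K}
    (hω : ω ^ 2 + ω + 1 = 0) (hc : cj m ω = ω) : gK m ω = - tseq k := by
  have hω0 : ω ≠ 0 := by rintro rfl; simp at hω
  let L : Subfield K := (cj m : K →+* K).eqLocusField (RingHom.id K)
  have hmemL : ∀ x : K, x ∈ L ↔ cj m x = x := fun x => Iff.rfl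
  obtain ⟨n, rfl⟩ : ∃ n, k = n + 1 := ⟨k - 1, by omega⟩
  have hcharL : CharP L 2 := inferInstance
  have hcard : Fintype.card L = 4 ^ (n + 1) := by
    have h1 : Fintype.card L = (insert 0 (Fs K m)).card :=
      Fintype.card_of_subtype _ (fun x => by rw [mem_insert_Fs]; rfl)
    rw [h1, Finset.card_insert_of_notMem (by simp [mem_Fs])]
    have h2 := (card_Fs_Uc hm hK).1
    have h3 : (2 : ℤ) ^ m = 4 ^ (n + 1) := by
      rw [hk, ← two_mul, pow_mul]; norm_num
    zify
    rw [h2, h3]; ring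
  let w : L := ⟨ω, hc⟩
  have hw : w ^ 2 + w + 1 = 0 := Subtype.ext hω
  have h := kloosterman_four n hcard hw
  rw [← h, ← sum_kl_one (mem_Fs.2 ⟨hc, hω0⟩)]
  symm
  refine Finset.sum_bij (fun x _ => (x : K)) ?_ ?_ ?_ ?_
  · intro x hx
    rw [mem_Fs]
    exact ⟨x.2, by simpa using hx⟩
  · intro x _ y _ hxy; exact Subtype.ext hxy
  · intro x hx
    obtain ⟨h1, h2⟩ := mem_Fs.1 hx
    refine ⟨⟨x, h1⟩, ?_, rfl⟩
    simp only [Finset.mem_filter, Finset.mem_univ, true_and, ne_eq]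
    intro h; exact h2 (congrArg Subtype.val h)
  · intro x _
    have hm2 : 2 * (n + 1) = m := by omega
    have e : ((traceSum (2 * (n + 1)) (x + w * x⁻¹) : L) : K) =
        traceSum m ((x : K) + (x : K)⁻¹ * ω) := by
      rw [hm2]
      simp only [traceSum]
      push_cast
      simp only [w, mul_comm]
    rw [psi, ← e, sg, sg]
    congr 1
    simp

/-- For even `m`, expanding the product of the Kloosterman sums at `ω` and `ω ^ 2` over `F` gives
`∑ gK (1 + u + u⁻¹)` over `u ∈ Fs`, which `sum_trace` converts into the sum over `Uc` in `Tsum_eq`. -/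
theorem Tsum_even (hm : 0 < m) (hK : Fintype.card K = (2 ^ m) ^ 2) (heven : Even m) :
    Tsum K m = - 2 * 2 ^ m - 1 - tseq m := by
  have h2 : (2 : K) = 0 := CharTwo.two_eq_zero
  obtain ⟨ω, hω, hcω⟩ := exists_omega hm hK
  rw [if_pos heven] at hcω
  have hω0 : ω ≠ 0 := by rintro rfl; simp at hω
  have hF : ω ∈ Fs K m := mem_Fs.2 ⟨hcω, hω0⟩
  have hF2 : ω ^ 2 ∈ Fs K m := by rw [sq]; exact mul_mem_Fs hF hF
  have hω1 : ω ≠ 1 := by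
    rintro rfl
    exact one_ne_zero (by linear_combination hω - h2 : (1 : K) = 0)
  have h1F : (1 : K) ∈ Fs K m := by simp [mem_Fs]
  obtain ⟨k, hk⟩ := heven
  have hg := gK_omega hK hm hk hω hcω
  have hu : ∀ u ∈ Fs K m, ∑ r ∈ Fs K m, psi m (r * (1 + u) + r⁻¹ * (ω + ω ^ 2 * u⁻¹)) =
      gK m (1 + (u * ω + (u * ω)⁻¹)) -
        ((if u = 1 then 2 ^ m else 0) + (if u = ω then 2 ^ m else 0)) := by
    intro u hu
    obtain ⟨hcu, hu0⟩ := mem_Fs.1 hu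
    have hA : cj m (1 + u) = 1 + u := by rw [map_add, map_one, hcu]
    have hB : cj m (ω + ω ^ 2 * u⁻¹) = ω + ω ^ 2 * u⁻¹ := by
      rw [map_add, map_mul, map_pow, map_inv₀, hcu, hcω]
    have hA0 : 1 + u = 0 ↔ u = 1 := by rw [CharTwo.add_eq_zero, eq_comm]
    have hB0 : ω + ω ^ 2 * u⁻¹ = 0 ↔ u = ω := by
      rw [CharTwo.add_eq_zero]
      constructor
      · intro h
        field_simp at h
        exact h
      · rintro rfl; field_simp
    rw [sum_kl hm hK hA hB (by rw [hA0, hB0]; rintro ⟨rfl, h⟩; exact hω1 h.symm)]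
    congr 1
    · congr 1
      field_simp
      linear_combination (u * ω + ω - 1) * hω - u * ω * h2
    · rw [mul_eq_zero, hA0, hB0]
      by_cases h1 : u = 1
      · subst h1; simp [hω1.symm]
      · simp [h1]
  have hprod : tseq k ^ 2 = ∑ u ∈ Fs K m, gK m (1 + (u + u⁻¹)) - 2 * 2 ^ m := by
    calc tseq k ^ 2 = gK m ω * gK m (ω ^ 2) := by rw [gK_sq hF, hg]; ring
      _ = ∑ x ∈ Fs K m, psi m (x + x⁻¹ * ω) * ∑ y ∈ Fs K m, psi m (y * x + (y * x)⁻¹ * ω ^ 2) := by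
        rw [← sum_kl_one hF, ← sum_kl_one hF2, Finset.sum_mul]
        refine Finset.sum_congr rfl fun x hx => ?_
        rw [sum_Fs_mul hx (fun y => psi m (y + y⁻¹ * ω ^ 2))]
      _ = ∑ u ∈ Fs K m, ∑ r ∈ Fs K m, psi m (r * (1 + u) + r⁻¹ * (ω + ω ^ 2 * u⁻¹)) := by
        rw [Finset.sum_comm]
        refine Finset.sum_congr rfl fun x hx => ?_
        rw [Finset.mul_sum]
        refine Finset.sum_congr rfl fun y hy => ?_
        have hx1 := (mem_Fs.1 hx).1
        have hy1 := (mem_Fs.1 hy).1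
        rw [← psi_add (by rw [map_add, map_mul, map_inv₀, hx1, hcω])
          (by rw [map_add, map_mul, map_mul, map_inv₀, map_mul, map_pow, hx1, hy1, hcω]), mul_inv]
        congr 1
        ring
      _ = _ := by
        rw [Finset.sum_congr rfl hu, Finset.sum_sub_distrib, Finset.sum_add_distrib,
          Finset.sum_ite_eq_of_mem' _ _ _ h1F, Finset.sum_ite_eq_of_mem' _ _ _ hF,
          sum_Fs_mul hF (fun u => gK m (1 + (u + u⁻¹)))]
        ring
  have h3 := Tsum_eq hm hK
  have h4 := sum_trace hm hK (fun c => gK m (1 + c))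
  rw [sum_gK hm hK] at h4
  have h5 := (tseq_double k).1
  have h6 : (2 : ℤ) ^ m = 4 ^ k := by
    rw [hk, ← two_mul, pow_mul]; norm_num
  rw [show 2 * k = m by omega] at h5
  linarith

end KloostermanSums

/-! ### Quadruples on the unit circle -/

section UnitCircle
open scoped Classical

variable {K : Type*} [Field K] [Fintype K] [CharP K 2] {m : ℕ}

/-- The parity of `m`. -/
def eps (m : ℕ) : ℤ := if Even m then 0 else 1

theorem psi_one_eps : psi m (1 : K) = 1 - 2 * eps m := by
  rw [psi_one, eps]; split_ifs <;> norm_num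

theorem Tsum_eps (hm : 0 < m) (hK : Fintype.card K = (2 ^ m) ^ 2) :
    Tsum K m = 4 * eps m * 2 ^ m - 2 * 2 ^ m - 1 - tseq m := by
  by_cases h : Even m
  · rw [Tsum_even hm hK h, eps, if_pos h]; ring
  · rw [Tsum_odd hm hK h, eps, if_neg h]; ring

/-- The indicator function of the unit circle. -/
noncomputable def ind (m : ℕ) (s : K) : ℤ := if s ∈ Uc K m then 1 else 0

theorem sum_Uc (f : K → ℤ) : ∑ u ∈ Uc K m, f u = ∑ u : K, ind m u * f u := by
  simp only [ind, ite_mul, one_mul, zero_mul]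
  rw [Finset.sum_ite_mem, Finset.univ_inter]

/-- The number of representations of `s` as a sum of two elements of the unit circle. -/
noncomputable def rU (m : ℕ) (s : K) : ℤ := ∑ u ∈ Uc K m, ind m (s + u)

theorem rU_zero (hm : 0 < m) (hK : Fintype.card K = (2 ^ m) ^ 2) : rU m (0 : K) = 2 ^ m + 1 := by
  rw [rU, ← (card_Fs_Uc hm hK).2, Finset.card_eq_sum_ones]
  push_cast
  refine Finset.sum_congr rfl fun u hu => ?_
  rw [zero_add, ind, if_pos hu]

/-- With `u = s * w`, both `u` and `s + u` have norm one iff `w ^ 2 + w = 1 / N(s)` and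
`w` has conjugate `w + 1`. -/
theorem rU_of_ne (hm : 0 < m) (hK : Fintype.card K = (2 ^ m) ^ 2) {s : K} (hs : s ≠ 0) :
    rU m s = 1 - psi m (s * cj m s)⁻¹ := by
  have h2 : (2 : K) = 0 := CharTwo.two_eq_zero
  have hs' : cj m s ≠ 0 := (map_ne_zero _).2 hs
  rw [← card_artin_schreier_conj hm hK (by rw [map_inv₀, map_mul, cj_cj hK, mul_comm]), rU, sum_Uc,
    ← Equiv.sum_comp (Equiv.mulLeft₀ s hs)]
  refine Finset.sum_congr rfl fun w _ => ?_
  rw [show Equiv.mulLeft₀ s hs w = s * w from rfl]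
  have : (s * w ∈ Uc K m ∧ s + s * w ∈ Uc K m) ↔ (w ^ 2 + w = (s * cj m s)⁻¹ ∧ cj m w = w + 1) := by
    rw [mem_Uc, mem_Uc, map_add, map_mul]
    constructor
    · rintro ⟨h3, h4⟩
      have h5 : cj m w = w + 1 := by
        have h6 : s * cj m s * (cj m w - (w + 1)) = 0 := by
          linear_combination h4 - h3 - (s * cj m s * (w + 1)) * h2
        rcases mul_eq_zero.1 h6 with h | h
        · exact absurd h (mul_ne_zero hs hs')
        · exact sub_eq_zero.1 h
      refine ⟨?_, h5⟩
      rw [h5] at h3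
      field_simp
      linear_combination h3
    · rintro ⟨h3, h4⟩
      rw [h4]
      field_simp at h3
      constructor
      · linear_combination h3
      · linear_combination h3 + s * cj m s * (1 + w) * h2
  simp only [ind, ite_mul, one_mul, zero_mul, ← ite_and, this]

theorem rU_of_mem (hm : 0 < m) (hK : Fintype.card K = (2 ^ m) ^ 2) {s : K} (hs : s ∈ Uc K m) :
    rU m s = 2 * eps m := by
  rw [rU_of_ne hm hK (ne_zero_of_mem_Uc hs), mem_Uc.1 hs, inv_one, psi_one_eps]; ring

theorem sum_Uc_add (f : K → ℤ) :
    ∑ u ∈ Uc K m, ∑ v ∈ Uc K m, f (u + v) = ∑ s : K, rU m s * f s := by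
  have h1 : ∀ u : K, ∑ v ∈ Uc K m, f (u + v) = ∑ s : K, ind m (s + u) * f s := by
    intro u
    rw [sum_Uc, ← Equiv.sum_comp (Equiv.addLeft u) (fun s => ind m (s + u) * f s)]
    refine Finset.sum_congr rfl fun v _ => ?_
    rw [show Equiv.addLeft u v = u + v from rfl, add_right_comm, CharTwo.add_self_eq_zero, zero_add]
  simp only [h1, rU, Finset.sum_mul]
  rw [Finset.sum_comm]

theorem ind_mul {u : K} (hu : u ∈ Uc K m) (s : K) : ind m (u * s) = ind m s := by
  have : u * s ∈ Uc K m ↔ s ∈ Uc K m := by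
    refine ⟨fun h => ?_, fun h => mul_mem_Uc hu h⟩
    have := mul_mem_Uc (inv_mem_Uc hu) h
    rwa [inv_mul_cancel_left₀ (ne_zero_of_mem_Uc hu)] at this
  simp only [ind, this]

theorem sum_Uc_mul {u : K} (hu : u ∈ Uc K m) (f : K → ℤ) :
    ∑ v ∈ Uc K m, f (u * v) = ∑ v ∈ Uc K m, f v := by
  have hu0 := ne_zero_of_mem_Uc hu
  refine Finset.sum_nbij' (fun r => u * r) (fun r => u⁻¹ * r) (fun r hr => mul_mem_Uc hu hr)
    (fun r hr => mul_mem_Uc (inv_mem_Uc hu) hr) ?_ ?_ (fun _ _ => rfl)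
  · intro r _; field_simp
  · intro r _; field_simp

/-- The number of triples on the unit circle for which `1` plus their sum is again on the unit
circle. -/
noncomputable def Bsum (K : Type*) [Field K] [Fintype K] [CharP K 2] (m : ℕ) : ℤ :=
  ∑ s : K, rU m s * rU m (s + 1)

theorem Bsum_eq (hm : 0 < m) (hK : Fintype.card K = (2 ^ m) ^ 2) :
    Bsum K m = (2 ^ m) ^ 2 + 1 + 8 * eps m * 2 ^ m - tseq m := by
  have hS := sum_psi_inv (K := K) hm hK
  set h : K → ℤ := fun s => psi m (s * cj m s)⁻¹ with hh
  have hh1 : h 1 = 1 - 2 * eps m := by simp [hh, psi_one_eps]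
  have h0mem : (0 : K) ∈ Finset.univ := Finset.mem_univ _
  have h1mem : (1 : K) ∈ Finset.univ.erase (0 : K) := by simp
  have hset : ((Finset.univ.erase (0 : K)).erase 1) = ({s : K | s ≠ 0 ∧ s ≠ 1} : Finset K) := by
    ext s; simp [and_comm]
  have hset' : (Finset.univ.erase (0 : K)) = ({s : K | s ≠ 0} : Finset K) := by
    ext s; simp
  have hr1 : rU m (1 : K) = 2 * eps m := rU_of_mem hm hK one_mem_Uc
  have hshift : ∀ s : K, s ≠ 0 ∧ s ≠ 1 → s + 1 ≠ 0 ∧ s + 1 ≠ 1 := by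
    rintro s ⟨h0, h1⟩
    exact ⟨fun h => h1 (CharTwo.add_eq_zero.1 h), by simpa using h0⟩
  have hs1 : ∑ s : K with s ≠ 0 ∧ s ≠ 1, h s = -(2 ^ m + 1) - (1 - 2 * eps m) := by
    rw [← hset, Finset.sum_erase_eq_sub h1mem, hset', hS, hh1]
  have hs2 : ∑ s : K with s ≠ 0 ∧ s ≠ 1, h (s + 1) = ∑ s : K with s ≠ 0 ∧ s ≠ 1, h s := by
    refine Finset.sum_nbij' (fun s => s + 1) (fun s => s + 1) ?_ ?_ ?_ ?_ (fun _ _ => rfl)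
    · intro s hs; simpa using hshift s (by simpa using hs)
    · intro s hs; simpa using hshift s (by simpa using hs)
    · intro s _; exact CharTwo.add_cancel_right s 1
    · intro s _; exact CharTwo.add_cancel_right s 1
  have hcard : (({s : K | s ≠ 0 ∧ s ≠ 1} : Finset K).card : ℤ) = (2 ^ m) ^ 2 - 2 := by
    have e := Finset.sum_erase_eq_sub (f := fun _ : K => (1 : ℤ)) h1mem
    rw [Finset.sum_erase_eq_sub h0mem, hset] at e
    simp only [Finset.sum_const, Finset.card_univ, hK] at e
    simp only [nsmul_eq_mul, mul_one] at e
    push_cast at e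
    linarith
  have hmain : ∀ s ∈ ({s : K | s ≠ 0 ∧ s ≠ 1} : Finset K), rU m s * rU m (s + 1) =
      1 - h s - h (s + 1) + psi m ((s * cj m s)⁻¹ + ((s + 1) * cj m (s + 1))⁻¹) := by
    intro s hs
    have hs' : s ≠ 0 ∧ s ≠ 1 := by simpa using hs
    rw [rU_of_ne hm hK hs'.1, rU_of_ne hm hK (hshift s hs').1,
      psi_add (by rw [map_inv₀, map_mul, cj_cj hK, mul_comm])
        (by rw [map_inv₀, map_mul, cj_cj hK, mul_comm])]
    ring
  have hT : ∑ s : K with s ≠ 0 ∧ s ≠ 1, psi m ((s * cj m s)⁻¹ + ((s + 1) * cj m (s + 1))⁻¹) =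
    Tsum K m := rfl
  rw [Bsum, ← Finset.add_sum_erase _ _ h0mem, ← Finset.add_sum_erase _ _ h1mem, hset,
    Finset.sum_congr rfl hmain, Finset.sum_add_distrib, Finset.sum_sub_distrib,
    Finset.sum_sub_distrib, hs2, hs1, hT, Tsum_eps hm hK, zero_add, CharTwo.add_self_eq_zero, hr1,
    rU_zero hm hK, Finset.sum_const, nsmul_eq_mul, mul_one, hcard]
  ring

/-- The number of quadruples on the unit circle whose sum is again on the unit circle. Dividing by the
first entry reduces it to `Bsum`. -/
theorem sum_four_Uc (hm : 0 < m) (hK : Fintype.card K = (2 ^ m) ^ 2) :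
    ∑ u₁ ∈ Uc K m, ∑ u₂ ∈ Uc K m, ∑ u₃ ∈ Uc K m, rU m (u₁ + u₂ + u₃) =
      (2 ^ m + 1) * Bsum K m := by
  have h1 : ∀ u₁ ∈ Uc K m, ∑ u₂ ∈ Uc K m, ∑ u₃ ∈ Uc K m, rU m (u₁ + u₂ + u₃) = Bsum K m := by
    intro u₁ hu
    rw [← sum_Uc_mul hu, Bsum, ← sum_Uc_add]
    refine Finset.sum_congr rfl fun u₂ _ => ?_
    rw [← sum_Uc_mul hu]
    refine Finset.sum_congr rfl fun u₃ _ => ?_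
    rw [rU, ← sum_Uc_mul hu, rU]
    refine Finset.sum_congr rfl fun u₄ _ => ?_
    rw [← ind_mul hu (u₂ + u₃ + 1 + u₄)]
    congr 1
    ring
  rw [Finset.sum_congr rfl h1, Finset.sum_const, nsmul_eq_mul, (card_Fs_Uc hm hK).2]

/-- The sum of `f` over quadruples of pairwise distinct elements of `U`. -/
noncomputable def distinctSum (U : Finset K) (f : K → K → K → K → ℤ) : ℤ :=
  ∑ a ∈ U, ∑ b ∈ U.erase a, ∑ c ∈ (U.erase a).erase b, ∑ d ∈ ((U.erase a).erase b).erase c,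
    f a b c d

theorem sum_erase₃ {U : Finset K} {a b c : K} (ha : a ∈ U) (hb : b ∈ U.erase a)
    (hc : c ∈ (U.erase a).erase b) (f : K → ℤ) :
    ∑ d ∈ ((U.erase a).erase b).erase c, f d = ∑ d ∈ U, f d - f a - f b - f c := by
  rw [Finset.sum_erase_eq_sub hc, Finset.sum_erase_eq_sub hb, Finset.sum_erase_eq_sub ha]

/-- For an indicator function `ρ` with `n = ∑ ρ`, there are `n * (n - 1) * (n - 2) * (n - 3)` quadruples
of distinct elements of its support. -/
theorem distinctSum_prod (U : Finset K) (ρ : K → ℤ) (hρ : ∀ x, ρ x * ρ x = ρ x) :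
    distinctSum U (fun a b c d => ρ a * ρ b * ρ c * ρ d) =
      (∑ x ∈ U, ρ x) * ((∑ x ∈ U, ρ x) - 1) * ((∑ x ∈ U, ρ x) - 2) * ((∑ x ∈ U, ρ x) - 3) := by
  set n := ∑ x ∈ U, ρ x with hn
  unfold distinctSum
  have h4 : ∀ a ∈ U, ∀ b ∈ U.erase a, ∀ c ∈ (U.erase a).erase b,
      ∑ d ∈ ((U.erase a).erase b).erase c, ρ a * ρ b * ρ c * ρ d =
        ρ a * ρ b * (n - 3) * ρ c := by
    intro a ha b hb c hc
    rw [← Finset.mul_sum, sum_erase₃ ha hb hc, ← hn]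
    linear_combination -ρ b * ρ c * hρ a - ρ a * ρ c * hρ b - ρ a * ρ b * hρ c
  have h3 : ∀ a ∈ U, ∀ b ∈ U.erase a, ∑ c ∈ (U.erase a).erase b,
      ∑ d ∈ ((U.erase a).erase b).erase c, ρ a * ρ b * ρ c * ρ d =
        ρ a * (n - 3) * (n - 2) * ρ b := by
    intro a ha b hb
    rw [Finset.sum_congr rfl (h4 a ha b hb), ← Finset.mul_sum, Finset.sum_erase_eq_sub hb,
      Finset.sum_erase_eq_sub ha, ← hn]
    linear_combination (n - 3) * (- ρ b * hρ a - ρ a * hρ b)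
  have h2 : ∀ a ∈ U, ∑ b ∈ U.erase a, ∑ c ∈ (U.erase a).erase b,
      ∑ d ∈ ((U.erase a).erase b).erase c, ρ a * ρ b * ρ c * ρ d =
        (n - 3) * (n - 2) * (n - 1) * ρ a := by
    intro a ha
    rw [Finset.sum_congr rfl (h3 a ha), ← Finset.mul_sum, Finset.sum_erase_eq_sub ha, ← hn]
    linear_combination - (n - 3) * (n - 2) * hρ a
  rw [Finset.sum_congr rfl h2, ← Finset.mul_sum, ← hn]
  ring

theorem sum_ind_pair (hm : 0 < m) (hK : Fintype.card K = (2 ^ m) ^ 2) :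
    ∑ a ∈ Uc K m, ∑ b ∈ (Uc K m).erase a, ind m (a + b) = (2 ^ m + 1) * (2 * eps m) := by
  have h : ∀ a ∈ Uc K m, ∑ b ∈ (Uc K m).erase a, ind m (a + b) = 2 * eps m := by
    intro a ha
    rw [Finset.sum_erase_eq_sub ha, CharTwo.add_self_eq_zero, ← rU_of_mem hm hK ha]
    simp [ind, mem_Uc, rU]
  rw [Finset.sum_congr rfl h, Finset.sum_const, nsmul_eq_mul, (card_Fs_Uc hm hK).2]

/-- Inclusion and exclusion: in characteristic two a repeated entry cancels, so degenerate quadruples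
are counted by sums of two elements of the unit circle. -/
theorem distinctSum_ind (hm : 0 < m) (hK : Fintype.card K = (2 ^ m) ^ 2) :
    distinctSum (Uc K m) (fun a b c d => ind m (a + b + c + d)) =
      (2 ^ m + 1) * (Bsum K m - 2 * eps m * (6 * 2 ^ m - 2)) := by
  have h2 : (2 : K) = 0 := CharTwo.two_eq_zero
  set U := Uc K m with hU
  have hc : (U.card : ℤ) = 2 ^ m + 1 := (card_Fs_Uc hm hK).2
  have hc1 : ∀ a ∈ U, ((U.erase a).card : ℤ) = 2 ^ m := by
    intro a ha
    rw [Finset.cast_card_erase_of_mem ha, hc]; ring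
  have hc2 : ∀ a ∈ U, ∀ b ∈ U.erase a, (((U.erase a).erase b).card : ℤ) = 2 ^ m - 1 := by
    intro a ha b hb
    rw [Finset.cast_card_erase_of_mem hb, hc1 a ha]
  have hP := sum_ind_pair (K := K) hm hK
  rw [← hU] at hP
  have h4 : ∀ a ∈ U, ∀ b ∈ U.erase a, ∀ c ∈ (U.erase a).erase b,
      ∑ d ∈ ((U.erase a).erase b).erase c, ind m (a + b + c + d) =
        rU m (a + b + c) - ind m (a + b) - (ind m (a + c) + ind m (b + c)) := by
    intro a ha b hb c hc
    rw [sum_erase₃ ha hb hc, rU, show a + b + c + a = b + c by linear_combination a * h2,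
      show a + b + c + b = a + c by linear_combination b * h2,
      show a + b + c + c = a + b by linear_combination c * h2]
    ring
  have hz : ∀ a : K, ind m (a + a) = 0 := by
    intro a; simp [CharTwo.add_self_eq_zero, ind, mem_Uc]
  have h3 : ∀ a ∈ U, ∀ b ∈ U.erase a, ∑ c ∈ (U.erase a).erase b,
      ∑ d ∈ ((U.erase a).erase b).erase c, ind m (a + b + c + d) =
        ∑ c ∈ U, rU m (a + b + c) - (2 ^ m - 3) * ind m (a + b) - 8 * eps m := by
    intro a ha b hb
    have hbU := Finset.mem_of_mem_erase hb
    rw [Finset.sum_congr rfl (h4 a ha b hb), Finset.sum_sub_distrib, Finset.sum_sub_distrib,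
      Finset.sum_const, nsmul_eq_mul, hc2 a ha b hb, Finset.sum_add_distrib]
    simp only [Finset.sum_erase_eq_sub hb, Finset.sum_erase_eq_sub ha]
    rw [show a + b + a = b by linear_combination a * h2,
      show a + b + b = a by linear_combination b * h2, hz, hz,
      rU_of_mem hm hK ha, rU_of_mem hm hK hbU, add_comm b a]
    have e1 : ∑ x ∈ U, ind m (a + x) = 2 * eps m := rU_of_mem hm hK ha
    have e2 : ∑ x ∈ U, ind m (b + x) = 2 * eps m := rU_of_mem hm hK hbU
    rw [e1, e2]
    ring
  have h2' : ∀ a ∈ U, ∑ b ∈ U.erase a, ∑ c ∈ (U.erase a).erase b,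
      ∑ d ∈ ((U.erase a).erase b).erase c, ind m (a + b + c + d) =
        ∑ b ∈ U, ∑ c ∈ U, rU m (a + b + c) - (2 ^ m + 1) * (2 * eps m)
          - (2 ^ m - 3) * ∑ b ∈ U.erase a, ind m (a + b) - 2 ^ m * (8 * eps m) := by
    intro a ha
    rw [Finset.sum_congr rfl (h3 a ha), Finset.sum_sub_distrib, Finset.sum_sub_distrib,
      Finset.sum_const, nsmul_eq_mul, hc1 a ha, Finset.sum_erase_eq_sub ha, ← Finset.mul_sum]
    have e : ∀ c ∈ U, rU m (a + a + c) = 2 * eps m := by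
      intro c hc
      rw [CharTwo.add_self_eq_zero, zero_add, rU_of_mem hm hK hc]
    rw [Finset.sum_congr rfl e, Finset.sum_const, nsmul_eq_mul, hc]
  unfold distinctSum
  rw [Finset.sum_congr rfl h2', Finset.sum_sub_distrib, Finset.sum_sub_distrib,
    Finset.sum_sub_distrib, Finset.sum_const, Finset.sum_const, nsmul_eq_mul, nsmul_eq_mul, hc,
    ← Finset.mul_sum, hP, sum_four_Uc hm hK]
  ring

end UnitCircle

/-! ### Moments of the Weil sums -/

section Moments
open scoped Classical

variable {K : Type*} [Field K] [Fintype K] [CharP K 2] {m : ℕ}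

/-- The power map `x ↦ x ^ (3 * q - 2)`; for `x ≠ 0` it is the cube of the conjugate divided by
`x ^ 2`. -/
def pd (m : ℕ) (x : K) : K := x ^ (3 * 2 ^ m - 2)

theorem pd_mul (x y : K) : pd m (x * y) = pd m x * pd m y := mul_pow _ _ _

theorem pd_zero : pd m (0 : K) = 0 := by
  have : 1 ≤ 2 ^ m := Nat.one_le_two_pow
  exact zero_pow (by omega)

theorem pd_one : pd m (1 : K) = 1 := one_pow _

theorem pd_mul_sq (x : K) : pd m x * x ^ 2 = cj m x ^ 3 := by
  have : 1 ≤ 2 ^ m := Nat.one_le_two_pow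
  rw [pd, ← pow_add, cj_def, ← pow_mul]
  congr 1
  omega

theorem pd_eq {x : K} (hx : x ≠ 0) : pd m x = cj m x ^ 3 / x ^ 2 := by
  rw [← pd_mul_sq]; field_simp

/-- The indicator of `v` being a root of the self-reciprocal quintic
`b' * X ^ 5 + a * X ^ 3 + a' * X ^ 2 + b`, primes denoting conjugates. -/
noncomputable def rho (m : ℕ) (a b v : K) : ℤ :=
  if cj m b * v ^ 5 + a * v ^ 3 + cj m a * v ^ 2 + b = 0 then 1 else 0

theorem rho_mul_self (a b v : K) : rho m a b v * rho m a b v = rho m a b v := by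
  unfold rho; split_ifs <;> norm_num

/-- The number of roots of the quintic of `rho` on the unit circle. -/
noncomputable def Nroots (m : ℕ) (a b : K) : ℤ := ∑ v ∈ Uc K m, rho m a b v

/-- The Weil sum `∑ χ (a * x + b * x ^ d)`, i.e. the Walsh transform of the power map. -/
noncomputable def Wsum (m : ℕ) (a b : K) : ℤ := ∑ x : K, chi m (a * x + b * pd m x)

theorem sum_Uc_sq (f : K → ℤ) : ∑ r ∈ Uc K m, f (r ^ 2) = ∑ r ∈ Uc K m, f r := by
  have hmaps : Set.MapsTo (fun r : K => r ^ 2) (Uc K m) (Uc K m) := by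
    intro r hr
    have := mul_mem_Uc (Finset.mem_coe.1 hr) (Finset.mem_coe.1 hr)
    simpa [sq] using this
  have hinj : Set.InjOn (fun r : K => r ^ 2) (Uc K m) := CharTwo.sq_injective.injOn
  exact Finset.sum_nbij (fun r => r ^ 2) hmaps hinj
    (Finset.surjOn_of_injOn_of_card_le _ hmaps hinj le_rfl) (fun _ _ => rfl)

/-- In polar coordinates `x = r * u` the argument is linear in `r`, so the sum over `r` detects the
roots `u ^ 2` of the quintic. -/
theorem Wsum_eq (hm : 0 < m) (hK : Fintype.card K = (2 ^ m) ^ 2) (a b : K) :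
    Wsum m a b = 2 ^ m * (Nroots m a b - 1) := by
  rw [Wsum, polar_sum hm hK, pd_zero, mul_zero, mul_zero, add_zero, chi_zero, Finset.sum_comm,
    Nroots, ← sum_Uc_sq (rho m a b)]
  have h : ∀ u ∈ Uc K m, ∑ r ∈ Fs K m, chi m (a * (r * u) + b * pd m (r * u)) =
      2 ^ m * rho m a b (u ^ 2) - 1 := by
    intro u hu
    have hu0 := ne_zero_of_mem_Uc hu
    have hcu := cj_of_mem_Uc hu
    set s := (a * u + b * u⁻¹ ^ 5) + cj m (a * u + b * u⁻¹ ^ 5) with hs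
    have h1 : ∀ r ∈ Fs K m, chi m (a * (r * u) + b * pd m (r * u)) = psi m (r * s) := by
      intro r hr
      obtain ⟨hr1, hr0⟩ := mem_Fs.1 hr
      have e : a * (r * u) + b * pd m (r * u) = r * (a * u + b * u⁻¹ ^ 5) := by
        rw [pd_eq (mul_ne_zero hr0 hu0), map_mul, hr1, hcu]
        field_simp
      rw [e, chi, map_mul, hr1, ← mul_add]
    have hsf : cj m s = s := fix_trace hK _
    rw [Finset.sum_congr rfl h1, sum_psi hm hK hsf, rho]
    have h2 : s = 0 ↔
        cj m b * (u ^ 2) ^ 5 + a * (u ^ 2) ^ 3 + cj m a * (u ^ 2) ^ 2 + b = 0 := by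
      have e : u ^ 5 * s =
          cj m b * (u ^ 2) ^ 5 + a * (u ^ 2) ^ 3 + cj m a * (u ^ 2) ^ 2 + b := by
        simp only [hs, map_add, map_mul, map_pow, map_inv₀, hcu, inv_inv]
        field_simp
        ring
      rw [← e, mul_eq_zero, or_iff_right (pow_ne_zero 5 hu0)]
    by_cases hs0 : s = 0
    · rw [if_pos hs0, if_pos (h2.1 hs0)]; ring
    · rw [if_neg hs0, if_neg (fun h => hs0 (h2.2 h))]; ring
  rw [Finset.sum_congr rfl h, Finset.sum_sub_distrib, ← Finset.mul_sum, Finset.sum_const,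
    nsmul_eq_mul, (card_Fs_Uc hm hK).2]
  ring

/-- Orthogonality of characters in two variables. -/
theorem orth (hm : 0 < m) (hK : Fintype.card K = (2 ^ m) ^ 2) {X : Type*} [Fintype X]
    (α β : X → K) : ∑ a : K, ∑ b : K, ∑ x : X, chi m (a * α x + b * β x) =
      (2 ^ m) ^ 4 * ∑ x : X, (if α x = 0 ∧ β x = 0 then 1 else 0 : ℤ) := by
  calc ∑ a : K, ∑ b : K, ∑ x : X, chi m (a * α x + b * β x)
      = ∑ x : X, (∑ a : K, chi m (a * α x)) * ∑ b : K, chi m (b * β x) := by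
        simp only [Finset.sum_mul_sum, ← chi_add hK]
        rw [← Fintype.sum_prod_type', Finset.sum_comm]
        exact Finset.sum_congr rfl fun x _ => Fintype.sum_prod_type _
    _ = _ := by
        rw [Finset.mul_sum]
        refine Finset.sum_congr rfl fun x _ => ?_
        rw [sum_chi hm hK, sum_chi hm hK]
        by_cases h1 : α x = 0 <;> by_cases h2 : β x = 0 <;> (simp [h1, h2]; try ring)

theorem Wsum_mul (hK : Fintype.card K = (2 ^ m) ^ 2) {Y : Type*} [Fintype Y] (a b : K)
    (α β : Y → K) : Wsum m a b * ∑ y : Y, chi m (a * α y + b * β y) =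
      ∑ p : K × Y, chi m (a * (p.1 + α p.2) + b * (pd m p.1 + β p.2)) := by
  rw [Wsum, Finset.sum_mul_sum, Fintype.sum_prod_type]
  refine Finset.sum_congr rfl fun x _ => Finset.sum_congr rfl fun y _ => ?_
  rw [← chi_add hK]
  congr 1
  ring

/-- The power moments of the Weil sums count solutions of the system in one to four variables. -/
theorem moments (hm : 0 < m) (hK : Fintype.card K = (2 ^ m) ^ 2) :
    (∑ a : K, ∑ b : K, Wsum m a b = (2 ^ m) ^ 4 * ∑ x : K, (if x = 0 ∧ pd m x = 0 then 1 else 0 : ℤ)) ∧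
    (∑ a : K, ∑ b : K, Wsum m a b ^ 2 = (2 ^ m) ^ 4 * ∑ p : K × K,
      (if p.1 + p.2 = 0 ∧ pd m p.1 + pd m p.2 = 0 then 1 else 0 : ℤ)) ∧
    (∑ a : K, ∑ b : K, Wsum m a b ^ 3 = (2 ^ m) ^ 4 * ∑ p : K × K × K,
      (if p.1 + (p.2.1 + p.2.2) = 0 ∧ pd m p.1 + (pd m p.2.1 + pd m p.2.2) = 0
        then 1 else 0 : ℤ)) ∧
    (∑ a : K, ∑ b : K, Wsum m a b ^ 4 = (2 ^ m) ^ 4 * ∑ p : K × K × K × K,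
      (if p.1 + (p.2.1 + (p.2.2.1 + p.2.2.2)) = 0 ∧
        pd m p.1 + (pd m p.2.1 + (pd m p.2.2.1 + pd m p.2.2.2)) = 0 then 1 else 0 : ℤ)) := by
  have h1 : ∀ a b : K, Wsum m a b = ∑ x : K, chi m (a * x + b * pd m x) := fun _ _ => rfl
  have h2 : ∀ a b : K, Wsum m a b ^ 2 =
      ∑ p : K × K, chi m (a * (p.1 + p.2) + b * (pd m p.1 + pd m p.2)) := by
    intro a b
    rw [← Wsum_mul hK a b (fun x => x) (fun x => pd m x), sq, ← h1]
  have h3 : ∀ a b : K, Wsum m a b ^ 3 = ∑ p : K × K × K,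
      chi m (a * (p.1 + (p.2.1 + p.2.2)) + b * (pd m p.1 + (pd m p.2.1 + pd m p.2.2))) := by
    intro a b
    rw [← Wsum_mul hK a b (fun p : K × K => p.1 + p.2) (fun p => pd m p.1 + pd m p.2), ← h2]
    ring
  have h4 : ∀ a b : K, Wsum m a b ^ 4 = ∑ p : K × K × K × K,
      chi m (a * (p.1 + (p.2.1 + (p.2.2.1 + p.2.2.2))) +
        b * (pd m p.1 + (pd m p.2.1 + (pd m p.2.2.1 + pd m p.2.2.2)))) := by
    intro a b
    rw [← Wsum_mul hK a b (fun p : K × K × K => p.1 + (p.2.1 + p.2.2))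
      (fun p => pd m p.1 + (pd m p.2.1 + pd m p.2.2)), ← h3]
    ring
  simp only [h4, h3, h2]
  refine ⟨?_, ?_, ?_, ?_⟩
  · exact orth hm hK _ _
  · exact orth hm hK _ _
  · exact orth hm hK _ _
  · exact orth hm hK _ _

theorem card_one : ∑ x : K, (if x = 0 ∧ pd m x = 0 then 1 else 0 : ℤ) = 1 := by
  have : ∀ x : K, (x = 0 ∧ pd m x = 0) ↔ x = 0 :=
    fun x => ⟨fun h => h.1, fun h => ⟨h, by rw [h, pd_zero]⟩⟩
  simp [this]

theorem card_two (hK : Fintype.card K = (2 ^ m) ^ 2) : ∑ p : K × K,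
    (if p.1 + p.2 = 0 ∧ pd m p.1 + pd m p.2 = 0 then 1 else 0 : ℤ) = (2 ^ m) ^ 2 := by
  rw [Fintype.sum_prod_type]
  have : ∀ x y : K, (x + y = 0 ∧ pd m x + pd m y = 0) ↔ x = y := by
    intro x y
    rw [CharTwo.add_eq_zero, CharTwo.add_eq_zero]
    exact ⟨fun h => h.1, fun h => ⟨h, by rw [h]⟩⟩
  simp only [this]
  simp [hK]

/-- After clearing denominators, `1 + w ^ d + (1 + w) ^ d` factors as
`(w + w') ^ 2 * (w ^ 2 + w')`, with `w'` the conjugate of `w`. -/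
theorem three_iff (hK : Fintype.card K = (2 ^ m) ^ 2) (w : K) :
    1 + pd m w + pd m (1 + w) = 0 ↔ cj m w = w ∨ (w ^ 2 + w = 1 ∧ cj m w = w + 1) := by
  have h2 : (2 : K) = 0 := CharTwo.two_eq_zero
  by_cases hw0 : w = 0
  · subst hw0; simp [pd_zero, pd_one, CharTwo.add_self_eq_zero]
  by_cases hw1 : w = 1
  · subst hw1; simp [pd_zero, pd_one, CharTwo.add_self_eq_zero]
  have hw2 : 1 + w ≠ 0 := fun h => hw1 (CharTwo.add_eq_zero.1 h).symm
  have e : w ^ 2 * (1 + w) ^ 2 * (1 + pd m w + pd m (1 + w)) =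
      (w + cj m w) ^ 2 * (w ^ 2 + cj m w) := by
    have e1 := pd_mul_sq (m := m) w
    have e2 := pd_mul_sq (m := m) (1 + w)
    rw [map_add, map_one] at e2
    linear_combination (1 + w) ^ 2 * e1 + w ^ 2 * e2 + (w ^ 2 + w ^ 3 + w * cj m w ^ 3
      + w ^ 2 * cj m w + w ^ 2 * cj m w ^ 2 + w ^ 2 * cj m w ^ 3
      - w ^ 3 * cj m w - w * cj m w ^ 2) * h2
  have e' : 1 + pd m w + pd m (1 + w) = 0 ↔ (w + cj m w) ^ 2 * (w ^ 2 + cj m w) = 0 := by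
    rw [← e, mul_eq_zero, or_iff_right (mul_ne_zero (pow_ne_zero 2 hw0) (pow_ne_zero 2 hw2))]
  rw [e', mul_eq_zero, sq_eq_zero_iff, CharTwo.add_eq_zero, CharTwo.add_eq_zero, eq_comm (a := w)]
  constructor
  · rintro (h | h)
    · exact Or.inl h
    · have h3 : w = w ^ 4 := by
        have := congrArg (cj m) h
        rw [map_pow, cj_cj hK, ← h] at this
        linear_combination -this
      have h4 : w * (1 + w) * (w ^ 2 + w + 1) = 0 := by
        linear_combination -h3 + (w + w ^ 2 + w ^ 3) * h2
      have h5 := (mul_eq_zero.1 h4).resolve_left (mul_ne_zero hw0 hw2)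
      right
      constructor
      · linear_combination h5 - h2
      · rw [← h]; linear_combination h5 - (w + 1) * h2
  · rintro (h | ⟨h, h'⟩)
    · exact Or.inl h
    · right; rw [h']; linear_combination h - w * h2

theorem card_fixed (hm : 0 < m) (hK : Fintype.card K = (2 ^ m) ^ 2) :
    ∑ w : K, (if cj m w = w then 1 else 0 : ℤ) = 2 ^ m := by
  simp only [← mem_insert_Fs]
  rw [Finset.sum_ite_mem, Finset.univ_inter, Finset.sum_insert (by simp [mem_Fs]),
    Finset.sum_const, nsmul_eq_mul, (card_Fs_Uc hm hK).1]
  ring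

theorem card_three (hm : 0 < m) (hK : Fintype.card K = (2 ^ m) ^ 2) : ∑ p : K × K × K,
    (if p.1 + (p.2.1 + p.2.2) = 0 ∧ pd m p.1 + (pd m p.2.1 + pd m p.2.2) = 0 then 1 else 0 : ℤ) =
      (2 ^ m) ^ 2 + ((2 ^ m) ^ 2 - 1) * (2 ^ m + 2 * eps m) := by
  have h2 : (2 : K) = 0 := CharTwo.two_eq_zero
  have hG : ∑ w : K, (if 1 + pd m w + pd m (1 + w) = 0 then 1 else 0 : ℤ) =
      2 ^ m + 2 * eps m := by
    have h3 := card_artin_schreier_conj hm hK (map_one (cj m : K →+* K))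
    rw [psi_one_eps] at h3
    rw [show (2 : ℤ) ^ m + 2 * eps m = 2 ^ m + (1 - (1 - 2 * eps m)) by ring, ← h3,
      ← card_fixed hm hK, ← Finset.sum_add_distrib]
    refine Finset.sum_congr rfl fun w _ => ?_
    simp only [three_iff hK]
    by_cases h : cj m w = w
    · have : cj m w ≠ w + 1 := by rw [h]; simp
      simp [h]
    · simp [h]
  rw [Fintype.sum_prod_type]
  have h1 : ∀ x : K, ∑ p : K × K, (if x + (p.1 + p.2) = 0 ∧
      pd m x + (pd m p.1 + pd m p.2) = 0 then 1 else 0 : ℤ) =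
      ∑ y : K, (if pd m x + pd m y + pd m (x + y) = 0 then 1 else 0 : ℤ) := by
    intro x
    rw [Fintype.sum_prod_type]
    refine Finset.sum_congr rfl fun y _ => ?_
    have : ∀ z : K, (x + (y + z) = 0 ∧ pd m x + (pd m y + pd m z) = 0) ↔
        (z = x + y ∧ pd m x + pd m y + pd m (x + y) = 0) := by
      intro z
      rw [← add_assoc, ← add_assoc, CharTwo.add_eq_zero, eq_comm (a := x + y)]
      constructor
      · rintro ⟨rfl, h⟩; exact ⟨rfl, h⟩
      · rintro ⟨rfl, h⟩; exact ⟨rfl, h⟩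
    simp only [this, ite_and]
    rw [Finset.sum_ite_eq' Finset.univ, if_pos (Finset.mem_univ _)]
  simp only [h1]
  rw [← Finset.add_sum_erase _ _ (Finset.mem_univ (0 : K))]
  have h0 : ∑ y : K, (if pd m 0 + pd m y + pd m (0 + y) = 0 then 1 else 0 : ℤ) = (2 ^ m) ^ 2 := by
    simp [pd_zero, CharTwo.add_self_eq_zero, hK]
  have hx : ∀ x ∈ Finset.univ.erase (0 : K),
      ∑ y : K, (if pd m x + pd m y + pd m (x + y) = 0 then 1 else 0 : ℤ) = 2 ^ m + 2 * eps m := by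
    intro x hx
    have hx0 := Finset.ne_of_mem_erase hx
    rw [← hG, ← Equiv.sum_comp (Equiv.mulLeft₀ x hx0)]
    refine Finset.sum_congr rfl fun w _ => ?_
    rw [show Equiv.mulLeft₀ x hx0 w = x * w from rfl]
    have e : pd m x + pd m (x * w) + pd m (x + x * w) =
        pd m x * (1 + pd m w + pd m (1 + w)) := by
      rw [show x + x * w = x * (1 + w) by ring, pd_mul, pd_mul]; ring
    have hpx : pd m x ≠ 0 := pow_ne_zero _ hx0
    simp only [e, mul_eq_zero, hpx, false_or]
  rw [h0, Finset.sum_congr rfl hx, Finset.sum_const, nsmul_eq_mul,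
    Finset.cast_card_erase_of_mem (Finset.mem_univ _), Finset.card_univ, hK]
  push_cast
  ring

/-- A polynomial of degree at most three with four distinct roots vanishes. -/
theorem cubic_zero {c₀ c₁ c₂ c₃ x y z w : K} (hxy : x ≠ y) (hxz : x ≠ z) (hxw : x ≠ w) (hyz : y ≠ z)
    (hyw : y ≠ w) (hzw : z ≠ w) (hx : c₃ * x ^ 3 + c₂ * x ^ 2 + c₁ * x + c₀ = 0)
    (hy : c₃ * y ^ 3 + c₂ * y ^ 2 + c₁ * y + c₀ = 0)
    (hz : c₃ * z ^ 3 + c₂ * z ^ 2 + c₁ * z + c₀ = 0)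
    (hw : c₃ * w ^ 3 + c₂ * w ^ 2 + c₁ * w + c₀ = 0) :
    c₃ = 0 ∧ c₂ = 0 ∧ c₁ = 0 ∧ c₀ = 0 := by
  have d : ∀ t : K, x ≠ t → c₃ * t ^ 3 + c₂ * t ^ 2 + c₁ * t + c₀ = 0 →
      c₃ * (x ^ 2 + x * t + t ^ 2) + c₂ * (x + t) + c₁ = 0 := by
    intro t ht h
    refine mul_left_cancel₀ (sub_ne_zero.2 ht) ?_
    linear_combination hx - h
  have d1 := d y hxy hy
  have d2 : ∀ t : K, y ≠ t → c₃ * (x ^ 2 + x * t + t ^ 2) + c₂ * (x + t) + c₁ = 0 →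
      c₃ * (x + y + t) + c₂ = 0 := by
    intro t ht h
    refine mul_left_cancel₀ (sub_ne_zero.2 ht) ?_
    linear_combination d1 - h
  have d3 := d2 z hyz (d z hxz hz)
  have d4 := d2 w hyw (d w hxw hw)
  have h3 : c₃ = 0 := by
    refine mul_left_cancel₀ (sub_ne_zero.2 hzw) ?_
    linear_combination d3 - d4
  subst h3
  have h2 : c₂ = 0 := by linear_combination d3
  subst h2
  have h1 : c₁ = 0 := by linear_combination d1
  subst h1
  exact ⟨rfl, rfl, rfl, by linear_combination hx⟩

/-- Four distinct points of the unit circle are all roots of the quintic of `(a, b)` iff the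
remainder of the quintic modulo the product of the four linear factors vanishes. Apart from
`a = b = 0` this forces the sum of the four points to lie on the unit circle. -/
theorem roots_iff {x y z w : K} (hxU : x ∈ Uc K m) (hyU : y ∈ Uc K m) (hzU : z ∈ Uc K m)
    (hwU : w ∈ Uc K m) (hK : Fintype.card K = (2 ^ m) ^ 2)
    (hxy : x ≠ y) (hxz : x ≠ z) (hxw : x ≠ w) (hyz : y ≠ z)
    (hyw : y ≠ w) (hzw : z ≠ w) (a b : K) :
    ((cj m b * x ^ 5 + a * x ^ 3 + cj m a * x ^ 2 + b = 0) ∧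
      (cj m b * y ^ 5 + a * y ^ 3 + cj m a * y ^ 2 + b = 0) ∧
      (cj m b * z ^ 5 + a * z ^ 3 + cj m a * z ^ 2 + b = 0) ∧
      (cj m b * w ^ 5 + a * w ^ 3 + cj m a * w ^ 2 + b = 0)) ↔
    ((b = 0 ∧ a = 0) ∨ (x + y + z + w ∈ Uc K m ∧
      b = (x + y + z + w) * (x * y * z * w) * cj m b ∧
      a = cj m b * ((x * y + x * z + x * w + y * z + y * w + z * w) + (x + y + z + w) ^ 2))) := by
  have h2 : (2 : K) = 0 := CharTwo.two_eq_zero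
  have hx0 := ne_zero_of_mem_Uc hxU
  have hy0 := ne_zero_of_mem_Uc hyU
  have hz0 := ne_zero_of_mem_Uc hzU
  have hw0 := ne_zero_of_mem_Uc hwU
  have hcx := cj_of_mem_Uc hxU
  have hcy := cj_of_mem_Uc hyU
  have hcz := cj_of_mem_Uc hzU
  have hcw := cj_of_mem_Uc hwU
  set e1 := x + y + z + w with he1
  set e2 := x * y + x * z + x * w + y * z + y * w + z * w with he2
  set e3 := x * y * z + x * y * w + x * z * w + y * z * w with he3
  set e4 := x * y * z * w with he4
  have he40 : e4 ≠ 0 := by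
    rw [he4]; exact mul_ne_zero (mul_ne_zero (mul_ne_zero hx0 hy0) hz0) hw0
  have c1 : e4 * cj m e1 = e3 := by
    rw [he1, he3, he4, map_add, map_add, map_add, hcx, hcy, hcz, hcw]
    field_simp
    ring
  have c2 : e4 * cj m e2 = e2 := by
    rw [he2, he4]
    simp only [map_add, map_mul, hcx, hcy, hcz, hcw]
    field_simp
    ring
  have c4 : e4 * cj m e4 = 1 := by
    rw [he4]
    simp only [map_mul, hcx, hcy, hcz, hcw]
    field_simp
  set β := cj m b with hβ
  -- Reduction of the quintic modulo `(X - x) (X - y) (X - z) (X - w)`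
  have hrem : ∀ t : K, t ^ 4 - e1 * t ^ 3 + e2 * t ^ 2 - e3 * t + e4 = 0 →
      β * t ^ 5 + a * t ^ 3 + cj m a * t ^ 2 + b =
      (a + β * (e2 + e1 ^ 2)) * t ^ 3 + (cj m a + β * (e3 + e1 * e2)) * t ^ 2 +
        β * (e4 + e1 * e3) * t + (b + β * (e1 * e4)) := by
    intro t ht
    linear_combination β * (t + e1) * ht +
      β * (- e2 * t ^ 3 - e4 * t - e1 * e2 * t ^ 2 - e1 * e4) * h2
  have hq : ∀ t : K, t ^ 4 - e1 * t ^ 3 + e2 * t ^ 2 - e3 * t + e4 =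
      (t - x) * (t - y) * (t - z) * (t - w) := by
    intro t
    rw [he1, he2, he3, he4]; ring
  rw [hrem x (by rw [hq]; ring), hrem y (by rw [hq]; ring), hrem z (by rw [hq]; ring),
    hrem w (by rw [hq]; ring)]
  constructor
  · rintro ⟨h1, h3, h4, h5⟩
    obtain ⟨k3, -, k1, k0⟩ := cubic_zero hxy hxz hxw hyz hyw hzw h1 h3 h4 h5
    rcases mul_eq_zero.1 k1 with k | k
    · left
      rw [k] at k0 k3
      exact ⟨by linear_combination k0, by linear_combination k3⟩
    · right
      refine ⟨?_, ?_, ?_⟩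
      · rw [mem_Uc]
        refine mul_left_cancel₀ he40 ?_
        linear_combination e1 * c1 + k - e4 * h2
      · exact by linear_combination k0 - β * (e1 * e4) * h2
      · exact by linear_combination k3 - β * (e2 + e1 ^ 2) * h2
  · intro h
    have key : a + β * (e2 + e1 ^ 2) = 0 ∧ cj m a + β * (e3 + e1 * e2) = 0 ∧
        β * (e4 + e1 * e3) = 0 ∧ b + β * (e1 * e4) = 0 := by
      rcases h with ⟨hb, ha⟩ | ⟨hU, hb, ha⟩
      · have : β = 0 := by rw [hβ, hb, map_zero]
        simp [this, ha, hb]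
      · rw [mem_Uc] at hU
        have k : e1 * e3 = e4 := by linear_combination -e1 * c1 + e4 * hU
        have hca : cj m a = b * (cj m e2 + cj m e1 ^ 2) := by
          rw [ha, map_mul, map_add, map_pow, hβ, cj_cj hK]
        refine ⟨?_, ?_, ?_, ?_⟩
        · linear_combination ha + β * (e2 + e1 ^ 2) * h2
        · rw [hca]
          linear_combination (cj m e2 + cj m e1 ^ 2) * hb + β * e1 * c2 + β * e1 * cj m e1 * c1
            + β * e3 * hU + β * (e3 + e1 * e2) * h2
        · rw [k]; linear_combination β * e4 * h2
        · linear_combination hb + β * (e1 * e4) * h2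
    obtain ⟨k3, k2, k1, k0⟩ := key
    rw [k3, k2, k1, k0]
    simp

/-- By Hilbert 90, `b = κ * b'` becomes `w' = w` after writing `κ = l ^ 2` and `b = l * w`. -/
theorem card_semilinear (hm : 0 < m) (hK : Fintype.card K = (2 ^ m) ^ 2) {κ : K}
    (hκ : κ ∈ Uc K m) : ∑ b : K, (if b = κ * cj m b then 1 else 0 : ℤ) = 2 ^ m := by
  have hmaps : Set.MapsTo (fun r : K => r ^ 2) (Uc K m) (Uc K m) := by
    intro r hr
    have := mul_mem_Uc (Finset.mem_coe.1 hr) (Finset.mem_coe.1 hr)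
    simpa [sq] using this
  have hinj : Set.InjOn (fun r : K => r ^ 2) (Uc K m) := CharTwo.sq_injective.injOn
  obtain ⟨l, hl, hlκ⟩ := Finset.surjOn_of_injOn_of_card_le _ hmaps hinj le_rfl hκ
  have hl0 := ne_zero_of_mem_Uc hl
  dsimp only at hlκ
  rw [← card_fixed hm hK, ← Equiv.sum_comp (Equiv.mulLeft₀ l hl0)]
  refine Finset.sum_congr rfl fun w _ => ?_
  rw [show Equiv.mulLeft₀ l hl0 w = l * w from rfl]
  have : l * w = κ * cj m (l * w) ↔ cj m w = w := by
    rw [map_mul, cj_of_mem_Uc hl, ← hlκ, show l ^ 2 * (l⁻¹ * cj m w) = l * cj m w by field_simp]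
    rw [mul_right_inj' hl0, eq_comm]
  simp only [this]

/-- Four distinct points of the unit circle are common roots of the quintics of `q` pairs `(a, b)` or
of only one, according to whether their sum lies on the unit circle. -/
theorem sum_rho (hm : 0 < m) (hK : Fintype.card K = (2 ^ m) ^ 2)
    {x y z w : K} (hxU : x ∈ Uc K m) (hyU : y ∈ Uc K m) (hzU : z ∈ Uc K m)
    (hwU : w ∈ Uc K m) (hxy : x ≠ y) (hxz : x ≠ z) (hxw : x ≠ w) (hyz : y ≠ z)
    (hyw : y ≠ w) (hzw : z ≠ w) :
    ∑ a : K, ∑ b : K, rho m a b x * rho m a b y * rho m a b z * rho m a b w =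
      1 + (2 ^ m - 1) * ind m (x + y + z + w) := by
  have h1 : ∀ a b : K, rho m a b x * rho m a b y * rho m a b z * rho m a b w =
      if ((b = 0 ∧ a = 0) ∨ (x + y + z + w ∈ Uc K m ∧
        b = (x + y + z + w) * (x * y * z * w) * cj m b ∧
        a = cj m b * ((x * y + x * z + x * w + y * z + y * w + z * w) + (x + y + z + w) ^ 2)))
      then 1 else 0 := by
    intro a b
    simp only [← roots_iff hxU hyU hzU hwU hK hxy hxz hxw hyz hyw hzw a b]
    simp only [rho, mul_ite, mul_one, mul_zero]
    split_ifs <;> tauto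
  simp only [h1]
  rw [Finset.sum_comm]
  by_cases hU : x + y + z + w ∈ Uc K m
  · have h2 : ∀ a b : K, ((b = 0 ∧ a = 0) ∨ (x + y + z + w ∈ Uc K m ∧
        b = (x + y + z + w) * (x * y * z * w) * cj m b ∧
        a = cj m b * ((x * y + x * z + x * w + y * z + y * w + z * w) + (x + y + z + w) ^ 2))) ↔
        (a = cj m b * ((x * y + x * z + x * w + y * z + y * w + z * w) + (x + y + z + w) ^ 2) ∧
        b = (x + y + z + w) * (x * y * z * w) * cj m b) := by
      intro a b
      constructor
      · rintro (⟨rfl, rfl⟩ | ⟨-, h, h'⟩)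
        · simp
        · exact ⟨h', h⟩
      · rintro ⟨h, h'⟩; exact Or.inr ⟨hU, h', h⟩
    simp only [h2, ite_and]
    simp only [Finset.sum_ite_eq', Finset.mem_univ, if_true]
    rw [card_semilinear hm hK
      (mul_mem_Uc hU (mul_mem_Uc (mul_mem_Uc (mul_mem_Uc hxU hyU) hzU) hwU)), ind, if_pos hU]
    ring
  · simp only [hU, false_and, or_false, ind, if_false, ite_and]
    simp

/-- The fourth falling moment of the number of roots. -/
theorem sum_falling (hm : 0 < m) (hK : Fintype.card K = (2 ^ m) ^ 2) :
    ∑ a : K, ∑ b : K, Nroots m a b * (Nroots m a b - 1) * (Nroots m a b - 2) *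
      (Nroots m a b - 3) = (2 ^ m + 1) * 2 ^ m * (2 ^ m - 1) * (2 ^ m - 2) +
      (2 ^ m - 1) * distinctSum (Uc K m) (fun a b c d => ind m (a + b + c + d)) := by
  have h1 : ∀ a b : K, Nroots m a b * (Nroots m a b - 1) * (Nroots m a b - 2) *
      (Nroots m a b - 3) =
      distinctSum (Uc K m) (fun x y z w => rho m a b x * rho m a b y * rho m a b z * rho m a b w) :=
    fun a b => (distinctSum_prod _ _ (rho_mul_self a b)).symm
  have h2 := distinctSum_prod (Uc K m) (fun _ => (1 : ℤ)) (fun _ => rfl)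
  simp only [Finset.sum_const, nsmul_eq_mul, mul_one, (card_Fs_Uc hm hK).2] at h2
  have h3 : ∑ a : K, ∑ b : K, distinctSum (Uc K m)
      (fun x y z w => rho m a b x * rho m a b y * rho m a b z * rho m a b w) =
      distinctSum (Uc K m) (fun x y z w => 1 + (2 ^ m - 1) * ind m (x + y + z + w)) := by
    rw [← Fintype.sum_prod_type']
    unfold distinctSum
    rw [Finset.sum_comm]
    refine Finset.sum_congr rfl fun x hx => ?_
    rw [Finset.sum_comm]
    refine Finset.sum_congr rfl fun y hy => ?_
    rw [Finset.sum_comm]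
    refine Finset.sum_congr rfl fun z hz => ?_
    rw [Finset.sum_comm]
    refine Finset.sum_congr rfl fun w hw => ?_
    rw [Fintype.sum_prod_type]
    simp only [Finset.mem_erase] at hy hz hw
    exact sum_rho hm hK hx hy.2 hz.2.2 hw.2.2.2 (Ne.symm hy.1) (Ne.symm hz.2.1) (Ne.symm hw.2.2.1)
      (Ne.symm hz.1) (Ne.symm hw.2.1) (Ne.symm hw.1)
  simp only [h1]
  rw [h3]
  have h4 : distinctSum (Uc K m) (fun x y z w => 1 + (2 ^ m - 1) * ind m (x + y + z + w)) =
      distinctSum (Uc K m) (fun _ _ _ _ => (1 : ℤ)) +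
      (2 ^ m - 1) * distinctSum (Uc K m) (fun a b c d => ind m (a + b + c + d)) := by
    simp only [distinctSum, Finset.sum_add_distrib, Finset.mul_sum]
  rw [h4, h2]
  ring

/-- The fourth power moment is determined by the first three and the falling moment. -/
theorem card_four (hm : 0 < m) (hK : Fintype.card K = (2 ^ m) ^ 2) : ∑ p : K × K × K × K,
    (if p.1 + (p.2.1 + (p.2.2.1 + p.2.2.2)) = 0 ∧
      pd m p.1 + (pd m p.2.1 + (pd m p.2.2.1 + pd m p.2.2.2)) = 0 then 1 else 0 : ℤ) =
    1 + (5 * (2 ^ m) ^ 2 - 2 * 2 ^ m + 2 + 4 * eps m - tseq m) * ((2 ^ m) ^ 2 - 1) := by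
  obtain ⟨m1, m2, m3, m4⟩ := moments (K := K) hm hK
  rw [card_one] at m1
  rw [card_two hK] at m2
  rw [card_three hm hK] at m3
  have hf := sum_falling (K := K) hm hK
  rw [distinctSum_ind hm hK, Bsum_eq hm hK] at hf
  set N4 := ∑ p : K × K × K × K, (if p.1 + (p.2.1 + (p.2.2.1 + p.2.2.2)) = 0 ∧
      pd m p.1 + (pd m p.2.1 + (pd m p.2.2.1 + pd m p.2.2.2)) = 0 then 1 else 0 : ℤ)
  set q : ℤ := 2 ^ m with hq
  have hq0 : q ≠ 0 := by rw [hq]; positivity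
  have h1 : ∀ a b : K, q ^ 4 * (Nroots m a b * (Nroots m a b - 1) * (Nroots m a b - 2) *
      (Nroots m a b - 3)) =
      Wsum m a b ^ 4 - 2 * q * Wsum m a b ^ 3 - q ^ 2 * Wsum m a b ^ 2 + 2 * q ^ 3 * Wsum m a b := by
    intro a b
    rw [Wsum_eq hm hK, ← hq]; ring
  have h2 : q ^ 4 * ∑ a : K, ∑ b : K, (Nroots m a b * (Nroots m a b - 1) * (Nroots m a b - 2) *
      (Nroots m a b - 3)) = q ^ 4 * N4 - 2 * q * (q ^ 4 * (q ^ 2 + (q ^ 2 - 1) * (q + 2 * eps m)))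
      - q ^ 2 * (q ^ 4 * q ^ 2) + 2 * q ^ 3 * (q ^ 4 * 1) := by
    rw [← m1, ← m2, ← m3, ← m4]
    simp only [Finset.mul_sum, h1, Finset.sum_add_distrib, Finset.sum_sub_distrib]
  rw [hf] at h2
  refine mul_left_cancel₀ (pow_ne_zero 4 hq0) ?_
  linear_combination -h2

theorem tau_eq (τ : ℕ → ℚ) (hτ1 : τ 1 = 1 / 2) (hτ2 : τ 2 = -7 / 4)
    (hτr : ∀ k, 3 ≤ k → τ k = τ (k - 1) / 2 - τ (k - 2)) (n : ℕ) :
    (tseq (n + 1) : ℚ) = τ (n + 1) * 2 ^ (n + 1) ∧ (tseq (n + 2) : ℚ) = τ (n + 2) * 2 ^ (n + 2) := by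
  induction n with
  | zero => simp only [tseq, zero_add, hτ1, hτ2]; norm_num
  | succ n ih =>
    refine ⟨ih.2, ?_⟩
    have e : tseq (n + 1 + 2) = tseq (n + 2) - 4 * tseq (n + 1) := rfl
    have h := hτr (n + 1 + 2) (by omega)
    rw [show n + 1 + 2 - 1 = n + 2 by omega, show n + 1 + 2 - 2 = n + 1 by omega] at h
    rw [e, h]
    push_cast
    rw [ih.1, ih.2]
    ring

end Moments

/-- Counting quadruples in (F_{q^2})^4 with x₁+x₂+x₃+x₄ = 0 and
x₁^d + x₂^d + x₃^d + x₄^d = 0, where d = 3q - 2, in terms of the sequence τ. -/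
theorem stmt_8 (m : ℕ) (hm : 0 < m) (q : ℕ) (hq : q = 2 ^ m)
    (K : Type*) [Field K] [Fintype K] [CharP K 2] (hK : Fintype.card K = q ^ 2)
    (τ : ℕ → ℚ) (hτ1 : τ 1 = 1 / 2) (hτ2 : τ 2 = -7 / 4)
    (hτr : ∀ k, 3 ≤ k → τ k = τ (k - 1) / 2 - τ (k - 2)) :
    ({p : K × K × K × K |
        p.1 + p.2.1 + p.2.2.1 + p.2.2.2 = 0 ∧
        p.1 ^ (3 * q - 2) + p.2.1 ^ (3 * q - 2) + p.2.2.1 ^ (3 * q - 2)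
          + p.2.2.2 ^ (3 * q - 2) = 0}.ncard : ℚ) =
      if Even m then
        1 + (5 * (q : ℚ) ^ 2 - (τ m + 2) * (q : ℚ) + 2) * ((q : ℚ) ^ 2 - 1)
      else
        1 + (5 * (q : ℚ) ^ 2 - (τ m + 2) * (q : ℚ) + 6) * ((q : ℚ) ^ 2 - 1) := by
  classical
  subst hq
  have h4 := card_four (K := K) hm hK
  have ht : (tseq m : ℚ) = τ m * 2 ^ m := by
    have := (tau_eq τ hτ1 hτ2 hτr (m - 1)).1
    rwa [Nat.sub_add_cancel hm] at this
  have hcard : (({p : K × K × K × K |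
        p.1 + p.2.1 + p.2.2.1 + p.2.2.2 = 0 ∧
        p.1 ^ (3 * 2 ^ m - 2) + p.2.1 ^ (3 * 2 ^ m - 2) + p.2.2.1 ^ (3 * 2 ^ m - 2)
          + p.2.2.2 ^ (3 * 2 ^ m - 2) = 0}.ncard : ℤ)) =
      1 + (5 * (2 ^ m) ^ 2 - 2 * 2 ^ m + 2 + 4 * eps m - tseq m) * ((2 ^ m) ^ 2 - 1) := by
    rw [← h4, Finset.sum_boole, Set.ncard_eq_toFinset_card']
    congr 2
    ext p
    rw [Set.mem_toFinset, Finset.mem_filter]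
    simp [pd, add_assoc]
  have hcardQ := congrArg (Int.cast : ℤ → ℚ) hcard
  push_cast at hcardQ
  rw [hcardQ, ht]
  push_cast
  unfold eps
  split_ifs
  · push_cast; ring
  · push_cast; ring
end

section
/- Let τ_m be the rational sequence defined by τ_1 = 1/2, τ_2 = -7/4, and τ_m = (1/2)τ_{m-1} - τ_{m-2} for m ≥ 3. Then for every positive integer m, τ_m = (1/2^{2m-1}) · Σ_{i=0}^{⌊m/2⌋} C(m, 2i) · (-15)^i, where C(m, 2i) denotes the binomial coefficient. -/
/-!
The sum `S m = ∑ C(m, 2i) (-15)^i` is the rational part of `(1 + √-15)^m`. Writing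
`(1 + √-15)^m = A m + B m √-15`, Pascal's rule gives `A (m+1) = A m - 15 B m` and
`B (m+1) = A m + B m`, so `A (m+2) = 2 A (m+1) - 16 A m`. After division by `2^(2m-1)`
this is the recurrence of `τ`, and the first two values agree.

To avoid index bookkeeping, the sums are taken over `range N` with `N` large; the
terms beyond `m / 2` vanish.
-/

/-- Rational part of `(1 + √-15)^m`, truncated to `N` terms. -/
def ratPart (N m : ℕ) : ℚ := ∑ i ∈ Finset.range N, (m.choose (2 * i) : ℚ) * (-15) ^ i

/-- Coefficient of `√-15` in `(1 + √-15)^m`, truncated to `N` terms. -/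
def irrPart (N m : ℕ) : ℚ := ∑ i ∈ Finset.range N, (m.choose (2 * i + 1) : ℚ) * (-15) ^ i

lemma ratPart_eq {N m : ℕ} (h : m < 2 * N) : ratPart N m = ratPart (m / 2 + 1) m := by
  symm
  apply Finset.sum_subset
  · intro i hi
    simp only [Finset.mem_range] at *
    omega
  · intro i _ hi
    simp only [Finset.mem_range] at hi
    rw [Nat.choose_eq_zero_of_lt (by omega)]
    simp

lemma irrPart_succ (N m : ℕ) : irrPart N (m + 1) = ratPart N m + irrPart N m := by
  simp only [irrPart, ratPart, ← Finset.sum_add_distrib]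
  refine Finset.sum_congr rfl fun i _ => ?_
  rw [Nat.choose_succ_succ]
  push_cast
  ring

lemma ratPart_succ (N m : ℕ) :
    ratPart (N + 1) (m + 1) = ratPart (N + 1) m - 15 * irrPart N m := by
  simp only [irrPart, ratPart, Finset.sum_range_succ', Finset.mul_sum]
  have h : ∀ i, (((m + 1).choose (2 * (i + 1)) : ℕ) : ℚ) * (-15) ^ (i + 1)
      = (m.choose (2 * (i + 1)) : ℚ) * (-15) ^ (i + 1)
        - 15 * ((m.choose (2 * i + 1) : ℚ) * (-15) ^ i) := by
    intro i
    rw [show 2 * (i + 1) = (2 * i + 1) + 1 by ring, Nat.choose_succ_succ]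
    push_cast
    ring
  simp only [h, Finset.sum_sub_distrib]
  simp
  ring

lemma ratPart_rec (m : ℕ) :
    ratPart ((m + 2) / 2 + 1) (m + 2)
      = 2 * ratPart ((m + 1) / 2 + 1) (m + 1) - 16 * ratPart (m / 2 + 1) m := by
  have h1 := ratPart_succ (m + 2) m
  have h2 := ratPart_succ (m + 2) (m + 1)
  have h3 := irrPart_succ (m + 2) m
  rw [ratPart_eq (by omega), ratPart_eq (N := m + 2 + 1) (m := m) (by omega)] at h1
  rw [ratPart_eq (by omega), ratPart_eq (N := m + 2 + 1) (m := m + 1) (by omega)] at h2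
  rw [ratPart_eq (N := m + 2) (m := m) (by omega)] at h3
  linarith

/-- Closed form for the sequence τ:
τ_m = (1/2^{2m-1}) Σ_{i=0}^{⌊m/2⌋} C(m, 2i) (-15)^i. -/
theorem stmt_9 (τ : ℕ → ℚ) (hτ1 : τ 1 = 1 / 2) (hτ2 : τ 2 = -7 / 4)
    (hτr : ∀ k, 3 ≤ k → τ k = τ (k - 1) / 2 - τ (k - 2)) :
    ∀ m : ℕ, 0 < m →
      τ m = (1 / 2 ^ (2 * m - 1)) *
        ∑ i ∈ Finset.range (m / 2 + 1), (m.choose (2 * i) : ℚ) * (-15) ^ i := by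
  -- Two consecutive values are carried through the induction; the shift `m = n + 1`
  -- removes the truncated subtraction in the exponent.
  have key : ∀ n : ℕ,
      τ (n + 1) = (1 / 2 ^ (2 * n + 1)) * ratPart ((n + 1) / 2 + 1) (n + 1) ∧
      τ (n + 2) = (1 / 2 ^ (2 * n + 3)) * ratPart ((n + 2) / 2 + 1) (n + 2) := by
    intro n
    induction n with
    | zero =>
      constructor
      · simp [hτ1, ratPart]
      · norm_num [hτ2, ratPart, Finset.sum_range_succ]
    | succ n ih =>
      refine ⟨ih.2, ?_⟩
      have h := hτr (n + 3) (by omega)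
      rw [show n + 3 - 1 = n + 2 by omega, show n + 3 - 2 = n + 1 by omega, ih.1, ih.2] at h
      have hr := ratPart_rec (n + 1)
      rw [show n + 1 + 2 = n + 3 by ring, show n + 1 + 1 = n + 2 by ring] at hr
      rw [show n + 1 + 2 = n + 3 by ring, h, hr]
      field_simp
      ring
  intro m hm
  obtain ⟨n, rfl⟩ : ∃ n, m = n + 1 := ⟨m - 1, by omega⟩
  exact (key n).1
end

section
/- Let q = 2^m where m is a positive even integer, and let d = 3q - 2. Then the number of x ∈ F_{q^2} satisfying (x + 1)^d + x^d = 1 is exactly q. -/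
/-!
Write `y = x ^ q`, so that `x ^ 2 * x ^ (3 * q - 2) = y ^ 3`, and the Frobenius identity gives
`(x + 1) ^ q = y + 1`. Multiplying `(x + 1) ^ d + x ^ d = 1` by `x ^ 2 * (x + 1) ^ 2` turns it, in
characteristic two, into `(x + y) ^ 2 * (x ^ 2 + y) = 0`. If `y = x ^ 2` then
`x = x ^ (q ^ 2) = x ^ 4`, so `x ^ 3 = 1` (for `x ≠ 0`); since `m` is even, `q ≡ 1 [MOD 3]` and
again `x ^ q = x`. Thus all solutions satisfy `x ^ q = x`, and conversely such `x` satisfy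
`x ^ d = x` and hence solve the equation (`solution_iff`). The fixed points of `x ↦ x ^ q` are the
roots of the separable polynomial `X ^ q - X`, which splits over `K` as a divisor of
`X ^ (q ^ 2) - X`, so there are exactly `q` of them (`ncard_fixed`).
-/

open Polynomial in
lemma ncard_fixed (m : ℕ) (hm : 0 < m) (q : ℕ) (hq : q = 2 ^ m)
    (K : Type*) [Field K] [Fintype K] [CharP K 2] (hK : Fintype.card K = q ^ 2) :
    {x : K | x ^ q = x}.ncard = q := by
  have hq1 : 1 < q := hq ▸ Nat.one_lt_two_pow hm.ne'
  have hne : (X ^ q - X : K[X]) ≠ 0 := FiniteField.X_pow_card_sub_X_ne_zero K hq1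
  have hsep : (X ^ q - X : K[X]).Separable :=
    galois_poly_separable 2 q (hq ▸ dvd_pow_self 2 hm.ne')
  have hdvd : (X ^ q - X : K[X]) ∣ X ^ Fintype.card K - X := by
    rw [hK]
    simpa using dvd_pow_pow_sub_self_of_dvd (r := (X : K[X])) (p := q) (one_dvd 2)
  have hbig : (X ^ Fintype.card K - X : K[X]).Splits := by
    rw [splits_iff_card_roots, FiniteField.roots_X_pow_card_sub_X,
      FiniteField.X_pow_card_sub_X_natDegree_eq K Fintype.one_lt_card]
    rfl
  have hsplit : (X ^ q - X : K[X]).Splits :=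
    hbig.of_dvd (FiniteField.X_pow_card_sub_X_ne_zero K Fintype.one_lt_card) hdvd
  have hcard := card_rootSet_eq_natDegree (K := K) hsep (by simpa using hsplit)
  rw [FiniteField.X_pow_card_sub_X_natDegree_eq K hq1, ← Nat.card_eq_fintype_card,
    Nat.card_coe_set_eq] at hcard
  have hset : {x : K | x ^ q = x} = (X ^ q - X : K[X]).rootSet K := by
    ext x
    rw [mem_rootSet]
    simp [hne, sub_eq_zero]
  rw [hset, hcard]

lemma solution_iff (m : ℕ) (hm : 0 < m) (hme : Even m) (q : ℕ) (hq : q = 2 ^ m)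
    (K : Type*) [Field K] [Fintype K] [CharP K 2] (hK : Fintype.card K = q ^ 2) (x : K) :
    (x + 1) ^ (3 * q - 2) + x ^ (3 * q - 2) = 1 ↔ x ^ q = x := by
  have hq1 : 1 < q := hq ▸ Nat.one_lt_two_pow hm.ne'
  have h2 : (2 : K) = 0 := CharTwo.two_eq_zero
  have hadd : (x + 1) ^ q = x ^ q + 1 := by
    rw [hq, add_pow_char_pow, one_pow]
  have hd (z : K) : z ^ 2 * z ^ (3 * q - 2) = (z ^ q) ^ 3 := by
    rw [← pow_add, ← pow_mul]
    congr 1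
    omega
  constructor
  · intro h
    by_cases hx : x = 0
    · rw [hx, zero_pow (by omega)]
    have hpoly : (x + x ^ q) ^ 2 * (x ^ 2 + x ^ q) = 0 := by
      have e1 := hd x
      have e2 := hd (x + 1)
      rw [hadd] at e2
      linear_combination (-(x ^ 2 * (x + 1) ^ 2)) * h + x ^ 2 * e2 + (x + 1) ^ 2 * e1
        + h2 * (x * (x ^ q) ^ 2 + x * (x ^ q) ^ 3 + 2 * x ^ 2 * x ^ q + 2 * x ^ 2 * (x ^ q) ^ 2
          + x ^ 2 * (x ^ q) ^ 3 - x ^ 3 + x ^ 3 * x ^ q + (x ^ q) ^ 3)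
    rcases mul_eq_zero.mp hpoly with h0 | h0
    · exact (CharTwo.add_eq_zero.mp (pow_eq_zero_iff two_ne_zero |>.mp h0)).symm
    · have hy : x ^ q = x ^ 2 := (CharTwo.add_eq_zero.mp h0).symm
      have h4 : x ^ 4 = x := by
        have hc := FiniteField.pow_card x
        rw [hK, sq q, pow_mul, hy, ← pow_mul, mul_comm, pow_mul, hy] at hc
        rwa [← pow_mul] at hc
      have h3 : x ^ 3 = 1 := mul_right_cancel₀ hx (by rw [one_mul, ← pow_succ, h4])
      obtain ⟨k, hk⟩ := hme
      -- `q = 4 ^ k ≡ 1 [MOD 3]`, as `m = 2 * k`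
      have hmod : q % 3 = 1 := by
        rw [hq, hk, ← two_mul, pow_mul, Nat.pow_mod]
        simp
      rw [← Nat.div_add_mod q 3, hmod, pow_succ, pow_mul, h3, one_pow, one_mul]
  · intro h
    have hfix (z : K) (hz : z ^ q = z) : z ^ (3 * q - 2) = z := by
      by_cases h0 : z = 0
      · rw [h0, zero_pow (by omega)]
      · have e := hd z
        rw [hz] at e
        exact mul_left_cancel₀ (pow_ne_zero 2 h0) (by rw [e, pow_succ])
    rw [hfix x h, hfix (x + 1) (by rw [hadd, h])]
    linear_combination x * h2

/-- For q = 2^m with m a positive even integer and d = 3q - 2,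
the equation (x+1)^d + x^d = 1 has exactly q solutions in F_{q^2}. -/
theorem stmt_11 (m : ℕ) (hm : 0 < m) (hme : Even m) (q : ℕ) (hq : q = 2 ^ m)
    (K : Type*) [Field K] [Fintype K] [CharP K 2] (hK : Fintype.card K = q ^ 2) :
    {x : K | (x + 1) ^ (3 * q - 2) + x ^ (3 * q - 2) = 1}.ncard = q := by
  simp_rw [solution_iff m hm hme q hq K hK]
  exact ncard_fixed m hm q hq K hK
end

section
/- Let q = 2^m where m is a positive even integer, and let d = 3q - 2. Then the set of x ∈ F_{q^2} satisfying (x + 1)^d + x^d = 1 is exactly the subfield F_q of F_{q^2}. -/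
/-!
Write `y = x ^ q`. The values `x = 0, 1` lie on both sides. For all other `x`, multiplying
`(x + 1) ^ d + x ^ d = 1` by `x ^ 2 * (x + 1) ^ 2` turns it into
`(y + 1) ^ 3 * x ^ 2 + y ^ 3 * (x + 1) ^ 2 = x ^ 2 * (x + 1) ^ 2`, which in characteristic `2` is
`(y + x ^ 2) * (y + x) ^ 2 = 0`. If `y = x ^ 2`, then `x = x ^ (q ^ 2) = x ^ 4`, so `x` lies in
`F_4`; as `m` is even, `q` is a power of `4` and `F_4` is contained in `F_q`, so `y = x` here too.
-/

theorem pow_four_pow_eq_self {K : Type*} [Monoid K] {x : K} (h : x ^ 4 = x) (k : ℕ) :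
    x ^ (4 ^ k) = x := by
  induction k with
  | zero => simp
  | succ k ih => rw [pow_succ, pow_mul, ih, h]

/-- The equation with denominators cleared factors in characteristic `2`. -/
theorem cleared_equation_iff {K : Type*} [Field K] [CharP K 2] (x y : K) :
    (y + 1) ^ 3 * x ^ 2 + y ^ 3 * (x + 1) ^ 2 = x ^ 2 * (x + 1) ^ 2 ↔ y = x ^ 2 ∨ y = x := by
  have h2 : (2 : K) = 0 := CharTwo.two_eq_zero
  have key : (y + 1) ^ 3 * x ^ 2 + y ^ 3 * (x + 1) ^ 2 - x ^ 2 * (x + 1) ^ 2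
      = (y - x ^ 2) * (y - x) ^ 2 := by
    linear_combination (y ^ 3 * x ^ 2 + y ^ 3 * x + 2 * x ^ 2 * y ^ 2 + x ^ 2 * y - x ^ 3
      + x * y ^ 2 - x ^ 3 * y) * h2
  rw [← sub_eq_zero, key, mul_eq_zero, sub_eq_zero, pow_eq_zero_iff two_ne_zero, sub_eq_zero]

/-- For q = 2^m with m a positive even integer and d = 3q - 2,
the solution set of (x+1)^d + x^d = 1 in F_{q^2} is exactly the subfield F_q,
i.e. the set of fixed points of x ↦ x^q. -/
theorem stmt_12 (m : ℕ) (hm : 0 < m) (hme : Even m) (q : ℕ) (hq : q = 2 ^ m)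
    (K : Type*) [Field K] [Fintype K] [CharP K 2] (hK : Fintype.card K = q ^ 2) :
    {x : K | (x + 1) ^ (3 * q - 2) + x ^ (3 * q - 2) = 1} = {x : K | x ^ q = x} := by
  have hq1 : 1 ≤ q := hq ▸ Nat.one_le_two_pow
  have hd : 3 * q - 2 ≠ 0 := by omega
  have hd2 : 3 * q - 2 + 2 = q * 3 := by omega
  ext x
  simp only [Set.mem_ofPred_eq]
  by_cases hx : x = 0
  · subst hx
    simp [hd, show q ≠ 0 by omega]
  by_cases hx1 : x + 1 = 0
  · have : x = 1 := by rw [← CharTwo.neg_eq (1 : K)]; exact eq_neg_of_add_eq_zero_left hx1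
    rw [hx1, this]
    simp [hd]
  have hfrob : (x + 1) ^ q = x ^ q + 1 := by
    rw [hq, add_pow_char_pow, one_pow]
  have e1 : x ^ (3 * q - 2) * x ^ 2 = (x ^ q) ^ 3 := by rw [← pow_add, hd2, pow_mul]
  have e2 : (x + 1) ^ (3 * q - 2) * (x + 1) ^ 2 = (x ^ q + 1) ^ 3 := by
    rw [← pow_add, hd2, pow_mul, hfrob]
  have hne : x ^ 2 * (x + 1) ^ 2 ≠ 0 := mul_ne_zero (pow_ne_zero _ hx) (pow_ne_zero _ hx1)
  have hclear : (x + 1) ^ (3 * q - 2) + x ^ (3 * q - 2) = 1 ↔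
      (x ^ q + 1) ^ 3 * x ^ 2 + (x ^ q) ^ 3 * (x + 1) ^ 2 = x ^ 2 * (x + 1) ^ 2 := by
    rw [← e1, ← e2, ← mul_left_inj' hne, one_mul]
    refine Eq.congr ?_ rfl
    ring
  rw [hclear, cleared_equation_iff]
  refine ⟨fun h => h.elim (fun h => ?_) id, Or.inr⟩
  have h4 : x ^ 4 = x := by
    calc x ^ 4 = (x ^ 2) ^ 2 := by ring
      _ = (x ^ q) ^ q := by rw [h, pow_right_comm x 2 q, h]
      _ = x := by rw [← pow_mul, ← sq, ← hK, FiniteField.pow_card]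
  obtain ⟨k, rfl⟩ := hme
  rw [hq, ← two_mul, pow_mul]
  exact pow_four_pow_eq_self h4 k
end

section
/- Let q = 2^m where m is a positive even integer, and let d = 3q - 2. Then for every b ∈ F_{q^2} with b ≠ 1, the number of x ∈ F_{q^2} satisfying (x + 1)^d + x^d = b is at most 4. -/
/-!
Write `x̄ = x ^ q` and `c = b + 1 ≠ 0`. Neither `0` nor `1` is a solution, so the equation reads
`(x̄ + 1)³ / (x + 1)² + x̄³ / x² = b`. With `t = x + x̄` and `u = x² + x` it becomes
`c u² = t² (u + t)`, so `t` and `u` are nonzero. For `z = t / u` this says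
`t (z² + z) = c`, while `u + ū = t² + t` says `t z z̄ = z + z̄ + z z̄` (`Param`). Since `z`
determines `t`, hence `u`, hence `x` up to adding `1`, it suffices that at most two `z` occur
(`Param.two_of_three`).

* If `c̄ = c`, then `z² + z` is fixed by conjugation, so `z̄ = z`, which forces `z² + z = c`, or
  `z̄ = z + 1`, which forces `z² + z = c + 1`. Both kinds cannot occur together: their sum `s`
  would satisfy `s² + s = 1`, so `s ∈ F₄ ⊆ F_q` (as `m` is even), whereas `s̄ = s + 1`.
* If `c̄ ≠ c`, put `T = c + c̄` and `C = c c̄`. Then `a = z + z̄` determines `z` and is a root of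
  the affine polynomial `C (a² + a)² + T² a + T³ + C T²`. Three distinct roots in `F_q` would give
  three roots `A`, `B`, `A + B` in `F_q` of `δ³ + δ + T² / C`. The Lagrange resolvent `A + ω B`,
  with `ω` a primitive cube root of unity in `F_q`, then yields a root in `F_q` of
  `ρ² + ρ = C / T²`. But the roots of that quadratic are `c / T` and `c / T + 1`, which are not
  in `F_q`.
-/

/-- The relations satisfied by `z = t / u` and `t = x + σ x`, where `u = x² + x` and `x` is a
solution of the original equation with `b = c + 1`. -/
structure Param {K : Type*} [Field K] (σ : K →+* K) (c t z : K) : Prop where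
  fixed : σ t = t
  z_ne : z ≠ 0
  eq_c : t * (z ^ 2 + z) = c
  norm_eq : t * (z * σ z) = z + σ z + z * σ z

section
variable {K : Type*} [Field K] [CharP K 2]

lemma eq_or_eq_add_one_of_artinSchreier {x y : K} (h : x ^ 2 + x = y ^ 2 + y) :
    x = y ∨ x = y + 1 := by
  have h2 : (2 : K) = 0 := CharTwo.two_eq_zero
  have : (x - y) * (x - (y + 1)) = 0 := by grind
  rcases mul_eq_zero.mp this with h | h
  · left; exact sub_eq_zero.mp h
  · right; exact sub_eq_zero.mp h

/-- The quartic relation for the trace `a = z + σ z`, together with the relations from which `z`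
is recovered out of `a`. Here `s = t⁻¹`. -/
lemma Param.trace_relations {σ : K →+* K} {c t z : K}
    (hc : c ≠ 0) (h : Param σ c t z) :
    ∃ s : K, s ≠ 0 ∧ s * c = z ^ 2 + z ∧ s * (c + σ c) = (z + σ z) ^ 2 + (z + σ z) ∧
      (z * σ z) * (1 + s) = (z + σ z) * s ∧
      (z + σ z) + (c + σ c) = c * σ c * (1 + s) ^ 2 := by
  have h2 : (2 : K) = 0 := CharTwo.two_eq_zero
  obtain ⟨ht, hz, h1, h3⟩ := h
  have ht0 : t ≠ 0 := by rintro rfl; simp at h1; exact hc h1.symm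
  have hs0 : t⁻¹ ≠ 0 := inv_ne_zero ht0
  have e1 : t⁻¹ * c = z ^ 2 + z := by rw [← h1]; field_simp
  have e1' : t⁻¹ * σ c = σ z ^ 2 + σ z := by
    have := congrArg σ e1
    simpa [ht] using this
  have e3 : z * σ z = t⁻¹ * (z + σ z + z * σ z) := by rw [← h3]; field_simp
  generalize t⁻¹ = s at *
  generalize σ c = c' at *
  generalize σ z = z' at *
  have e4 : s * (c + c') = (z + z') ^ 2 + (z + z') := by
    linear_combination e1 + e1' - z * z' * h2
  have e5 : (z * z') * (1 + s) = (z + z') * s := by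
    linear_combination e3 + s * z * z' * h2
  refine ⟨s, hs0, e1, e4, e5, ?_⟩
  -- the norm of `s c = z² + z`
  have e6 : s ^ 2 * (c * c') = (z * z') ^ 2 + (z + z' + 1) * (z * z') := by
    linear_combination s * c' * e1 + (z ^ 2 + z) * e1'
  generalize z * z' = n at *
  generalize z + z' = a at *
  generalize c * c' = C at *
  generalize c + c' = T at *
  have e7 : s ^ 2 * (a ^ 2 + T * (1 + s)) = s ^ 2 * (C * (1 + s) ^ 2) := by
    linear_combination (-(n * (1 + s)) - a * s - (a + 1) * (1 + s)) * e5
      - (1 + s) ^ 2 * e6 + s * (1 + s) * e4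
  have e8 := mul_left_cancel₀ (pow_ne_zero 2 hs0) e7
  linear_combination e8 - e4 - a ^ 2 * h2

/-- The case `c ∈ F_q`. -/
lemma Param.two_of_three_of_fixed {σ : K →+* K} {c : K}
    {ω : K} (hω : ω ^ 2 + ω + 1 = 0) (hσω : σ ω = ω) (hcσ : σ c = c) (hc : c ≠ 0)
    {t₁ t₂ t₃ z₁ z₂ z₃ : K}
    (h₁ : Param σ c t₁ z₁) (h₂ : Param σ c t₂ z₂) (h₃ : Param σ c t₃ z₃) :
    z₁ = z₂ ∨ z₁ = z₃ ∨ z₂ = z₃ := by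
  have two : (2 : K) = 0 := CharTwo.two_eq_zero
  have key : ∀ t z, Param σ c t z →
      (σ z = z ∧ z ^ 2 + z = c) ∨ (σ z = z + 1 ∧ z ^ 2 + z = c + 1) := by
    rintro t z ⟨ht, hz, h1, h3⟩
    have ht0 : t ≠ 0 := by rintro rfl; simp at h1; exact hc h1.symm
    have h1' : t * (σ z ^ 2 + σ z) = c := by
      have := congrArg σ h1
      simpa [ht, hcσ] using this
    have : σ z ^ 2 + σ z = z ^ 2 + z := mul_left_cancel₀ ht0 (h1'.trans h1.symm)
    rcases eq_or_eq_add_one_of_artinSchreier this with h | h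
    · left
      refine ⟨h, ?_⟩
      rw [h] at h3
      have : t = 1 := by
        have : t * (z * z) = 1 * (z * z) := by linear_combination h3 + z * two
        exact mul_right_cancel₀ (mul_ne_zero hz hz) this
      rw [← h1, this, one_mul]
    · right
      refine ⟨h, ?_⟩
      rw [h] at h3
      linear_combination h1 - h3 - (z + 1) * two
  have mixed : ∀ z w : K, σ z = z → z ^ 2 + z = c → σ w = w + 1 → w ^ 2 + w = c + 1 → False := by
    intro z w hz hzc hw hwc
    have : (z + w) ^ 2 + (z + w) = ω ^ 2 + ω := by
      linear_combination hzc + hwc - hω + (c + 1 + z * w) * two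
    have h : σ (z + w) = z + w := by
      rcases eq_or_eq_add_one_of_artinSchreier this with h | h <;> simp [h, hσω]
    rw [map_add, hz, hw] at h
    exact one_ne_zero (α := K) (by linear_combination h)
  have same : ∀ x y z e : K, x ^ 2 + x = e → y ^ 2 + y = e → z ^ 2 + z = e →
      x = y ∨ x = z ∨ y = z := by
    intro x y z e hx hy hz
    rcases eq_or_eq_add_one_of_artinSchreier (hx.trans hy.symm) with h | h
    · exact Or.inl h
    rcases eq_or_eq_add_one_of_artinSchreier (hx.trans hz.symm) with h' | h'
    · exact Or.inr (Or.inl h')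
    exact Or.inr (Or.inr (by linear_combination h' - h))
  rcases key _ _ h₁ with ⟨a1, b1⟩ | ⟨a1, b1⟩ <;> rcases key _ _ h₂ with ⟨a2, b2⟩ | ⟨a2, b2⟩ <;>
    rcases key _ _ h₃ with ⟨a3, b3⟩ | ⟨a3, b3⟩ <;>
    first
    | exact same _ _ _ _ b1 b2 b3
    | exact (mixed _ _ a1 b1 a2 b2).elim
    | exact (mixed _ _ a2 b2 a1 b1).elim
    | exact (mixed _ _ a1 b1 a3 b3).elim
    | exact (mixed _ _ a3 b3 a1 b1).elim

/-- When `c ∉ F_q`, the trace `z + σ z` determines `z`. -/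
lemma Param.eq_of_trace_eq {σ : K →+* K} {c : K}
    (hc : c ≠ 0) (hcσ : c + σ c ≠ 0) {t t' z w : K}
    (h : Param σ c t z) (h' : Param σ c t' w) (htr : z + σ z = w + σ w) : z = w := by
  have two : (2 : K) = 0 := CharTwo.two_eq_zero
  obtain ⟨s, hs, e1, e2, e3, -⟩ := h.trace_relations hc
  obtain ⟨r, -, f1, f2, f3, -⟩ := h'.trace_relations hc
  rw [← htr] at f2 f3
  have hsr : r = s := mul_right_cancel₀ hcσ (f2.trans e2.symm)
  subst hsr
  have hs1 : 1 + r ≠ 0 := by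
    intro h0
    rw [h0, mul_zero] at e3
    have ha : z + σ z = 0 := by
      rcases mul_eq_zero.mp e3.symm with h | h
      · exact h
      · exact absurd h hs
    rw [ha] at e2
    simp [hs, hcσ] at e2
  have hn : z * σ z = w * σ w := mul_right_cancel₀ hs1 (e3.trans f3.symm)
  have ha1 : z + σ z + 1 ≠ 0 := by
    intro h0
    have : r * (c + σ c) = 0 := by rw [e2]; linear_combination (z + σ z) * h0
    exact (mul_ne_zero hs hcσ) this
  refine mul_left_cancel₀ ha1 ?_
  -- `z² + z = (a + 1) z + n` for `a` the trace and `n` the norm of `z`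
  linear_combination f1 - e1 + hn + w * htr + (w ^ 2 + w * σ w - z * w - w * σ z) * two

/-- The case `c ∉ F_q`. -/
lemma Param.two_of_three_of_not_fixed {σ : K →+* K} (hσ : ∀ x, σ (σ x) = x) {c : K}
    {ω : K} (hω : ω ^ 2 + ω + 1 = 0) (hσω : σ ω = ω) (hc : c ≠ 0) (hcσ : c + σ c ≠ 0)
    {t₁ t₂ t₃ z₁ z₂ z₃ : K}
    (h₁ : Param σ c t₁ z₁) (h₂ : Param σ c t₂ z₂) (h₃ : Param σ c t₃ z₃) :
    z₁ = z₂ ∨ z₁ = z₃ ∨ z₂ = z₃ := by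
  have two : (2 : K) = 0 := CharTwo.two_eq_zero
  by_contra! hne
  obtain ⟨n12, n13, n23⟩ := hne
  have m12 := mt (h₁.eq_of_trace_eq hc hcσ h₂) n12
  have m13 := mt (h₁.eq_of_trace_eq hc hcσ h₃) n13
  have m23 := mt (h₂.eq_of_trace_eq hc hcσ h₃) n23
  have quartic : ∀ t z, Param σ c t z → (c + σ c) ^ 2 * ((z + σ z) + (c + σ c)) =
      c * σ c * ((c + σ c) ^ 2 + ((z + σ z) ^ 2 + (z + σ z)) ^ 2) := by
    intro t z h
    obtain ⟨s, -, -, e2, -, e4⟩ := h.trace_relations hc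
    rw [e4, ← e2]
    linear_combination (c * σ c * (c + σ c) ^ 2 * s) * two
  have q1 := quartic _ _ h₁
  have q2 := quartic _ _ h₂
  have q3 := quartic _ _ h₃
  have fix : ∀ z, σ (z + σ z) = z + σ z := fun z => by rw [map_add, hσ, add_comm]
  have g1 := fix z₁
  have g2 := fix z₂
  have g3 := fix z₃
  have gT := fix c
  have hC : c * σ c ≠ 0 := mul_ne_zero hc (by simpa using hc)
  have hκ : (c / (c + σ c)) ^ 2 + c / (c + σ c) = c * σ c / (c + σ c) ^ 2 := by
    field_simp
    linear_combination c * two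
  have gC : σ (c * σ c) = c * σ c := by rw [map_mul, hσ, mul_comm]
  have gκ : σ (c / (c + σ c)) ≠ c / (c + σ c) := by
    rw [map_div₀, gT]
    intro h
    have : σ c = c := by field_simp at h; exact h
    rw [this] at hcσ
    exact hcσ (by linear_combination c * two)
  generalize c * σ c = C at *
  generalize c + σ c = T at *
  generalize c / T = κ at *
  generalize z₁ + σ z₁ = a₁ at *
  generalize z₂ + σ z₂ = a₂ at *
  generalize z₃ + σ z₃ = a₃ at *
  -- differences of roots of the affine quartic are roots of `δ³ + δ + T² / C`
  have cubic : ∀ a a' : K, a ≠ a' → T ^ 2 * (a + T) = C * (T ^ 2 + (a ^ 2 + a) ^ 2) →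
      T ^ 2 * (a' + T) = C * (T ^ 2 + (a' ^ 2 + a') ^ 2) →
      C * ((a + a') ^ 3 + (a + a')) = T ^ 2 := by
    intro a a' hn h h'
    have h0 : a + a' ≠ 0 := by
      intro h; exact hn (by linear_combination h - a' * two)
    refine mul_left_cancel₀ h0 ?_
    grind
  have hA := cubic _ _ m12 q1 q2
  have hB := cubic _ _ m13 q1 q3
  have gA : σ (a₁ + a₂) = a₁ + a₂ := by rw [map_add, g1, g2]
  have gB : σ (a₁ + a₃) = a₁ + a₃ := by rw [map_add, g1, g3]
  have hAB : (a₁ + a₂) + (a₁ + a₃) ≠ 0 := by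
    intro h; exact m23 (by linear_combination h - a₁ * two - a₃ * two)
  generalize a₁ + a₂ = A at *
  generalize a₁ + a₃ = B at *
  have conic : A ^ 2 + A * B + B ^ 2 = 1 := by
    refine mul_left_cancel₀ (mul_ne_zero hC hAB) ?_
    grind
  have hk : C * (A * B * (A + B)) = T ^ 2 := by
    rw [← hA]
    linear_combination C * A * conic - C * A ^ 3 * two
  -- `ρ = (p³ + 1) C / T²` for the Lagrange resolvent `p = A + ω B`
  have hρ : (((A + ω * B) ^ 3 + 1) * C / T ^ 2) ^ 2 + ((A + ω * B) ^ 3 + 1) * C / T ^ 2 =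
      κ ^ 2 + κ := by
    have hp : (A + ω * B) * (A + (ω + 1) * B) = 1 := by grind
    have hp3 : (A + ω * B) ^ 3 + (A + (ω + 1) * B) ^ 3 = A * B * (A + B) := by
      linear_combination B ^ 3 * hω + (A ^ 3 + A ^ 2 * B * (3 * ω + 1)
        + A * B ^ 2 * (3 * ω ^ 2 + 3 * ω + 1) + B ^ 3 * (ω ^ 3 + ω ^ 2 + ω)) * two
    have hpow : (A + ω * B) ^ 3 * (A + (ω + 1) * B) ^ 3 = 1 := by rw [← mul_pow, hp, one_pow]
    rw [hκ]
    generalize (A + ω * B) ^ 3 = P at *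
    generalize (A + (ω + 1) * B) ^ 3 = Q at *
    clear * - two hp3 hpow hk hcσ
    field_simp
    grind
  have gρ : σ (((A + ω * B) ^ 3 + 1) * C / T ^ 2) = ((A + ω * B) ^ 3 + 1) * C / T ^ 2 := by
    simp [gA, gB, gC, gT, hσω]
  apply gκ
  rcases eq_or_eq_add_one_of_artinSchreier hρ.symm with h | h
  · rw [h, gρ]
  · rw [h, map_add, gρ, map_one]

lemma Param.two_of_three {σ : K →+* K} (hσ : ∀ x, σ (σ x) = x) {c : K}
    {ω : K} (hω : ω ^ 2 + ω + 1 = 0) (hσω : σ ω = ω) (hc : c ≠ 0)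
    {t₁ t₂ t₃ z₁ z₂ z₃ : K}
    (h₁ : Param σ c t₁ z₁) (h₂ : Param σ c t₂ z₂) (h₃ : Param σ c t₃ z₃) :
    z₁ = z₂ ∨ z₁ = z₃ ∨ z₂ = z₃ := by
  by_cases hcσ : c + σ c = 0
  · exact two_of_three_of_fixed hω hσω (CharTwo.add_eq_zero.mp hcσ).symm hc h₁ h₂ h₃
  · exact two_of_three_of_not_fixed hσ hω hσω hc hcσ h₁ h₂ h₃

/-- Passage from the equation with denominators cleared to the parameters `t` and `z`. -/
lemma param_of_solution {σ : K →+* K} (hσ : ∀ x, σ (σ x) = x) {b x : K} (hb : b ≠ 1)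
    (hx : x ^ 2 + x ≠ 0)
    (h : x ^ 2 * (σ x + 1) ^ 3 + (x + 1) ^ 2 * σ x ^ 3 = b * (x ^ 2 + x) ^ 2) :
    x + σ x ≠ 0 ∧ Param σ (b + 1) (x + σ x) ((x + σ x) / (x ^ 2 + x)) := by
  have two : (2 : K) = 0 := CharTwo.two_eq_zero
  have hc : b + 1 ≠ 0 := fun h => hb (CharTwo.add_eq_zero.mp h)
  have main : (b + 1) * (x ^ 2 + x) ^ 2 = (x + σ x) ^ 2 * ((x ^ 2 + x) + (x + σ x)) := by
    grind
  have ht : x + σ x ≠ 0 := by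
    intro h0
    rw [h0] at main
    simp [hc, hx] at main
  have hx' : σ x ^ 2 + σ x ≠ 0 := by
    have : σ (x ^ 2 + x) ≠ 0 := by simpa only [ne_eq, map_eq_zero] using hx
    simpa using this
  have gt : σ (x + σ x) = x + σ x := by rw [map_add, hσ, add_comm]
  refine ⟨ht, gt, div_ne_zero ht hx, ?_, ?_⟩
  · rw [div_pow, div_add_div _ _ (pow_ne_zero 2 hx) hx, mul_div_assoc',
      div_eq_iff (mul_ne_zero (pow_ne_zero 2 hx) hx)]
    linear_combination -(x ^ 2 + x) * main
  · rw [map_div₀, gt, map_add, map_pow]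
    generalize σ x = y at *
    rw [div_mul_div_comm, div_add_div _ _ hx hx', ← add_div, mul_div_assoc']
    congr 1
    grind

/-- Solutions with equal parameter `z` agree up to adding `1`. -/
lemma eq_or_eq_add_one_of_param {σ : K →+* K} {c x y : K} (hc : c ≠ 0)
    (hx : x ^ 2 + x ≠ 0) (hy : y ^ 2 + y ≠ 0) (htx : x + σ x ≠ 0)
    (h : Param σ c (x + σ x) ((x + σ x) / (x ^ 2 + x)))
    (h' : Param σ c (y + σ y) ((y + σ y) / (y ^ 2 + y)))
    (hz : (x + σ x) / (x ^ 2 + x) = (y + σ y) / (y ^ 2 + y)) : y = x ∨ y = x + 1 := by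
  have e := h.eq_c
  have e' := h'.eq_c
  rw [← hz] at e'
  have hne : ((x + σ x) / (x ^ 2 + x)) ^ 2 + (x + σ x) / (x ^ 2 + x) ≠ 0 := by
    intro h0; rw [h0, mul_zero] at e; exact hc e.symm
  have ht : x + σ x = y + σ y := mul_right_cancel₀ hne (e.trans e'.symm)
  rw [← ht, div_eq_div_iff hx hy] at hz
  exact eq_or_eq_add_one_of_artinSchreier (mul_left_cancel₀ htx hz)

end

/-- For q = 2^m with m a positive even integer and d = 3q - 2,
for every b ≠ 1 the equation (x+1)^d + x^d = b has at most 4 solutions in F_{q^2}. -/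
theorem stmt_13 (m : ℕ) (hm : 0 < m) (hme : Even m) (q : ℕ) (hq : q = 2 ^ m)
    (K : Type*) [Field K] [Fintype K] [CharP K 2] (hK : Fintype.card K = q ^ 2) :
    ∀ b : K, b ≠ 1 →
      {x : K | (x + 1) ^ (3 * q - 2) + x ^ (3 * q - 2) = b}.ncard ≤ 4 := by
  intro b hb
  have two : (2 : K) = 0 := CharTwo.two_eq_zero
  have hq1 : 1 ≤ q := hq ▸ Nat.one_le_two_pow
  have hc : b + 1 ≠ 0 := fun h => hb (CharTwo.add_eq_zero.mp h)
  obtain ⟨σ, hσdef⟩ : ∃ σ : K →+* K, ∀ x, σ x = x ^ q :=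
    ⟨iterateFrobenius K 2 m, fun x => by rw [iterateFrobenius_def, hq]⟩
  have hσ : ∀ x, σ (σ x) = x := fun x => by
    rw [hσdef, hσdef, ← pow_mul, ← sq, ← hK, FiniteField.pow_card]
  obtain ⟨k, hk⟩ := hme
  have hq4 : q = 4 ^ k := by rw [hq, hk, ← two_mul, pow_mul]; norm_num
  obtain ⟨ω, hω, hσω⟩ : ∃ ω : K, ω ^ 2 + ω + 1 = 0 ∧ σ ω = ω := by
    have hdvd : 3 ∣ Nat.card Kˣ := by
      rw [Nat.card_units, Nat.card_eq_fintype_card, hK, hq4, ← pow_mul]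
      exact Nat.sub_one_dvd_pow_sub_one 4 (k * 2)
    have : Fact (Nat.Prime 3) := ⟨Nat.prime_three⟩
    obtain ⟨g, hg⟩ := exists_prime_orderOf_dvd_card' (G := Kˣ) 3 hdvd
    have hg3 : (g : K) ^ 3 = 1 := by
      rw [← Units.val_pow_eq_pow_val, ← hg, pow_orderOf_eq_one, Units.val_one]
    have hg1 : (g : K) - 1 ≠ 0 := by
      intro h
      have : g = 1 := Units.ext (by simpa using sub_eq_zero.mp h)
      rw [this, orderOf_one] at hg
      omega
    refine ⟨g, ?_, ?_⟩
    · refine mul_left_cancel₀ hg1 ?_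
      linear_combination hg3
    · rw [hσdef, hq4]
      clear hdvd hq4 hk
      induction k with
      | zero => simp
      | succ k ih =>
        rw [pow_succ, pow_mul, ih]
        linear_combination (g : K) * hg3
  have hpow : ∀ x : K, x ^ (3 * q - 2) * x ^ 2 = σ x ^ 3 := fun x => by
    rw [hσdef, ← pow_add, ← pow_mul]; congr 1; omega
  have hd : 3 * q - 2 ≠ 0 := by omega
  set S := {x : K | (x + 1) ^ (3 * q - 2) + x ^ (3 * q - 2) = b} with hS
  have hne : ∀ x ∈ S, x ^ 2 + x ≠ 0 := by
    intro x hx h0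
    have hx : (x + 1) ^ (3 * q - 2) + x ^ (3 * q - 2) = b := hx
    have : x * (x + 1) = 0 := by linear_combination h0
    rcases mul_eq_zero.mp this with h | h
    · rw [h] at hx; simp [hd] at hx; exact hb hx.symm
    · rw [h, CharTwo.add_eq_zero.mp h] at hx; simp [hd] at hx; exact hb hx.symm
  have hpar : ∀ x ∈ S, x + σ x ≠ 0 ∧ Param σ (b + 1) (x + σ x) ((x + σ x) / (x ^ 2 + x)) := by
    intro x hx
    refine param_of_solution hσ hb (hne x hx) ?_
    have hx : (x + 1) ^ (3 * q - 2) + x ^ (3 * q - 2) = b := hx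
    have h1 := hpow (x + 1)
    rw [map_add, map_one] at h1
    rw [← h1, ← hpow x, ← hx]
    ring
  have rel : ∀ x ∈ S, ∀ y ∈ S, (x + σ x) / (x ^ 2 + x) = (y + σ y) / (y ^ 2 + y) →
      y = x ∨ y = x + 1 := fun x hx y hy h =>
    eq_or_eq_add_one_of_param hc (hne x hx) (hne y hy) (hpar x hx).1 (hpar x hx).2 (hpar y hy).2 h
  obtain ⟨x₁, x₂, hsub⟩ : ∃ x₁ x₂ : K, S ⊆ {x₁, x₁ + 1, x₂, x₂ + 1} := by
    by_cases h1 : ∃ x₁, x₁ ∈ S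
    swap
    · exact ⟨0, 0, fun y hy => (h1 ⟨y, hy⟩).elim⟩
    obtain ⟨x₁, hx₁⟩ := h1
    by_cases h2 : ∃ x₂ ∈ S, ¬ (x₂ = x₁ ∨ x₂ = x₁ + 1)
    · obtain ⟨x₂, hx₂, hn⟩ := h2
      refine ⟨x₁, x₂, fun y hy => ?_⟩
      simp only [Set.mem_insert_iff, Set.mem_singleton_iff]
      rcases Param.two_of_three hσ hω hσω hc (hpar x₁ hx₁).2 (hpar x₂ hx₂).2 (hpar y hy).2
        with h | h | h
      · exact (hn (rel _ hx₁ _ hx₂ h)).elim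
      · have := rel _ hx₁ _ hy h
        tauto
      · have := rel _ hx₂ _ hy h
        tauto
    · push Not at h2
      refine ⟨x₁, x₁, fun y hy => ?_⟩
      have := h2 y hy
      simp only [Set.mem_insert_iff, Set.mem_singleton_iff]
      tauto
  refine (Set.ncard_le_ncard hsub (Set.toFinite _)).trans ?_
  classical
  have : ({x₁, x₁ + 1, x₂, x₂ + 1} : Set K) = (({x₁, x₁ + 1, x₂, x₂ + 1} : Finset K) : Set K) := by
    simp
  rw [this, Set.ncard_coe_finset]
  exact Finset.card_le_four
end
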